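/- Stability of the standard lens (main theorem). Let m > 0 and R > 0. There exists a constant κ > 0, depending only on m and R, such that for every 3-partition E = (E(1),E(2),E(3)) of ℝ² satisfying vol(E(1)) = m and vol((E(i) Δ 𝓛_m(i)) ∖ B_R) = 0 for i = 1,2,3 (where B_R is the open ball of radius R centered at the origin), one has (1/2)·Σ_{i=1}^{3} ℋ¹(∂E(i) ∩ B_{R+1}) ≥ (1/2)·Σ_{i=1}^{3} ℋ¹(∂𝓛_m(i) ∩ B_{R+1}) + κ·α(E)², where ∂ denotes topological boundary and ℋ¹ is 1-dimensional Hausdorff measure. -/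

import Mathlib

/-!
The proof is a quantitative calibration argument along vertical lines.

Each set of the competitor is replaced by its measure-theoretic interior (`essInt`). This changes
nothing up to null sets, does not enlarge the frontiers, and outside `B_R` it produces the frontiers
of the lens partition; hence the three open sets form a `Config`, and lengths may be compared in a
larger ball, where the two partitions consist of half-planes near the boundary.

For a configuration `U` let `h x` be half the length of the section of `U 0` over `x`, let `b x` be
the mean height of the interface between `U 1` and `U 2`, and let `k` (`kf`) be the profile of the
lens of radius `r`. The frontier of a set over a short interval `[x, x + δ]` is bounded below by
projecting it onto a unit direction `(γ, α)`, which yields `γ δ` plus `α` times the increment of the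
length of the section. The monotone map `τ` that transports `h dx` to `k dt` (`Transport`) supplies
the direction: `α = -τ x / r` is the slope that the upper arc of the lens has at `τ x`. Since
`k (τ x) τ' x = h x`, summing over short intervals gives the isoperimetric inequality for the lens,
with the remainder `(2 / r) ∫ (k ∘ τ - h)² / (k ∘ τ)`. The directions may moreover be tilted by `ε`
on an interval `[p, q)`, and by `ε'` for the interface; this adds terms that are linear in
`ε` and `ε'` at a cost of order `ε² + ε'²`. The result is `Config.master`.

Let `D ≤ d²` be the deficit of length. The choices `ε = ± d`, `ε' = ± d` in `Config.master` give
(`Config.near`) `∫ |k ∘ τ - h| ≤ K d`, `|b| ≤ K d` almost everywhere, a set of disordered sections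
of measure at most `4 d²`, and `h q - h p = ∫ k' ∘ τ + O(d)` for almost all `p ≤ q`. The last
relation keeps `h` away from zero in terms of the distance to the end of the profile, which converts
the bound on `∫ |k ∘ τ - h|` into `∫ |h x - k (x - c)| dx ≤ K' d`, where `τ c = 0`
(`Near.close`). Slicing by vertical lines, this bounds the asymmetry by a multiple of `d`
(`Config.asym_le`). As `d` may be any small number with `D ≤ d²` and the asymmetry is bounded a
priori, the square of the asymmetry is at most a multiple of `D` (`quadratic_of_linear`).
-/

open MeasureTheory
open scoped symmDiff

noncomputable section

/-- The Euclidean plane. -/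
abbrev Plane := EuclideanSpace ℝ (Fin 2)

/-- The radius `r_m = √m · (2π/3 − √3/2)^{−1/2}` of the standard lens of area `m`. -/
def lensRadius (m : ℝ) : ℝ :=
  Real.sqrt m * (2 * Real.pi / 3 - Real.sqrt 3 / 2) ^ (-(1 / 2) : ℝ)

/-- The standard lens `L_m` of area `m`:
`{(x,y) : |x| < (√3/2)·r_m, |y| < √(r_m² − x²) − r_m/2}`. -/
def stdLens (m : ℝ) : Set Plane :=
  {p | |p 0| < Real.sqrt 3 / 2 * lensRadius m ∧
       |p 1| < Real.sqrt (lensRadius m ^ 2 - (p 0) ^ 2) - lensRadius m / 2}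

/-- The standard lens partition `𝓛_m = (L_m, H⁺ ∖ L_m, H⁻ ∖ L_m)`. -/
def lensPartition (m : ℝ) : Fin 3 → Set Plane :=
  ![stdLens m, {p : Plane | 0 < p 1} \ stdLens m, {p : Plane | p 1 < 0} \ stdLens m]

/-- The asymmetry of a 3-partition `E` of the plane from the standard lens
partition `𝓛_m`: the infimum over isometries `T` of
`(1/2)·Σᵢ vol(T(E(i)) Δ 𝓛_m(i))`. -/
def lensAsymmetry (m : ℝ) (E : Fin 3 → Set Plane) : ENNReal :=
  ⨅ T : Plane ≃ᵢ Plane,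
    (1 / 2 : ENNReal) * ∑ i : Fin 3, volume ((T '' E i) ∆ lensPartition m i)

/-! ### Length of a frontier inside a box -/

section

/-- The point of the plane with coordinates `x`, `y`. -/
def pt (x y : ℝ) : Plane := !₂[x, y]

@[simp] lemma pt_zero (x y : ℝ) : pt x y 0 = x := rfl
@[simp] lemma pt_one (x y : ℝ) : pt x y 1 = y := rfl
lemma pt_eta (p : Plane) : pt (p 0) (p 1) = p := by
  ext i; fin_cases i <;> rfl

lemma continuous_pt {X : Type*} [TopologicalSpace X] {f g : X → ℝ} (hf : Continuous f)
    (hg : Continuous g) : Continuous fun t => pt (f t) (g t) := by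
  unfold pt
  refine (PiLp.continuous_toLp 2 _).comp (continuous_pi fun i => ?_)
  fin_cases i <;> simpa

/-- The length of the part of the vertical section of `V` above `x` with heights in `(y1, y2)`. -/
def sec (V : Set Plane) (y1 y2 x : ℝ) : ℝ :=
  (volume {y | y ∈ Set.Ioo y1 y2 ∧ pt x y ∈ V}).toReal

lemma sec_vol_le (V : Set Plane) (y1 y2 x : ℝ) :
    volume {y | y ∈ Set.Ioo y1 y2 ∧ pt x y ∈ V} ≤ ENNReal.ofReal (y2 - y1) := by
  rw [← Real.volume_Ioo]
  exact measure_mono fun y hy => hy.1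

lemma ofReal_sec (V : Set Plane) (y1 y2 x : ℝ) :
    ENNReal.ofReal (sec V y1 y2 x) = volume {y | y ∈ Set.Ioo y1 y2 ∧ pt x y ∈ V} :=
  ENNReal.ofReal_toReal ((sec_vol_le V y1 y2 x).trans_lt ENNReal.ofReal_lt_top).ne

lemma sec_nonneg (V : Set Plane) (y1 y2 x : ℝ) : 0 ≤ sec V y1 y2 x := ENNReal.toReal_nonneg

lemma sec_le (V : Set Plane) {y1 y2 : ℝ} (h : y1 ≤ y2) (x : ℝ) : sec V y1 y2 x ≤ y2 - y1 := by
  rw [← ENNReal.toReal_ofReal (sub_nonneg.2 h)]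
  exact ENNReal.toReal_mono ENNReal.ofReal_ne_top (sec_vol_le V y1 y2 x)

/-- A linear functional of norm at most one does not increase one-dimensional measure. -/
lemma proj_le {g α : ℝ} (h : g ^ 2 + α ^ 2 ≤ 1) (S : Set Plane) :
    volume ((fun p : Plane => g * p 0 + α * p 1) '' S) ≤ μH[1] S := by
  have hL : LipschitzWith 1 (fun p : Plane => g * p 0 + α * p 1) := by
    refine LipschitzWith.of_dist_le_mul fun p q => ?_
    rw [EuclideanSpace.dist_eq, Real.dist_eq]
    simp only [Fin.sum_univ_two, NNReal.coe_one, one_mul, Real.dist_eq, sq_abs]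
    refine Real.abs_le_sqrt ?_
    nlinarith [sq_nonneg (g * (p 1 - q 1) - α * (p 0 - q 0)), sq_nonneg (p 0 - q 0),
      sq_nonneg (p 1 - q 1)]
  have := hL.hausdorffMeasure_image_le (d := 1) zero_le_one S
  rw [hausdorffMeasure_real] at this
  simpa using this

/-- A path that starts in `V` and ends outside `V` meets the frontier of `V`. -/
lemma exists_frontier_mem {V : Set Plane} {p : ℝ → Plane} (hp : Continuous p) {a b : ℝ}
    (ha : p a ∈ V) (hb : p b ∉ V) : ∃ s ∈ Set.uIcc a b, p s ∈ frontier V := by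
  by_contra! H
  have hpre : IsPreconnected (p '' Set.uIcc a b) :=
    isPreconnected_uIcc.image _ hp.continuousOn
  have hsub : p '' Set.uIcc a b ⊆ interior V ∪ interior Vᶜ := by
    rintro _ ⟨s, hs, rfl⟩
    by_contra hc
    rw [Set.mem_union, not_or] at hc
    refine H s hs ?_
    rw [frontier_eq_closure_inter_closure]
    refine ⟨?_, ?_⟩
    · have := hc.2
      rw [interior_compl] at this
      simpa using this
    · rw [closure_compl]; exact hc.1
  have hd : Disjoint (interior V) (interior Vᶜ) :=
    Set.disjoint_of_subset interior_subset interior_subset disjoint_compl_right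
  rcases hpre.subset_or_subset isOpen_interior isOpen_interior hd hsub with h | h
  · exact hb (interior_subset (h ⟨b, Set.right_mem_uIcc, rfl⟩))
  · exact interior_subset (h ⟨a, Set.left_mem_uIcc, rfl⟩) ha

/-- The parameters `s ≤ t` for which the point of height `(s - g x) / α` over `x`, clamped to
`[y1, y2]`, lies in `V`. Up to an explicit constant, their measure is `α` times the length of the
section of `V`, because `s = g x + α y` along the vertical line. -/
lemma clamp_sec_vol {V : Set Plane} {x y1 y2 g α t : ℝ} (hα : 0 < α) (hy : y1 < y2)
    (hbot : pt x y1 ∉ V) (htop : pt x y2 ∈ V) (ht : g * x + α * y2 ≤ t) :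
    volume {s | s ≤ t ∧ pt x (max y1 (min y2 ((s - g * x) / α))) ∈ V}
      = ENNReal.ofReal (α * sec V y1 y2 x + (t - (g * x + α * y2))) := by
  have hset : {s | s ≤ t ∧ pt x (max y1 (min y2 ((s - g * x) / α))) ∈ V}
      = (fun s => (s - g * x) / α) ⁻¹' {y | y ∈ Set.Ioo y1 y2 ∧ pt x y ∈ V}
        ∪ Set.Icc (g * x + α * y2) t := by
    ext s
    simp only [Set.mem_ofPred_eq, Set.mem_union, Set.mem_preimage, Set.mem_Ioo, Set.mem_Icc]
    rcases le_or_gt ((s - g * x) / α) y1 with h | h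
    · rw [min_eq_right (h.trans hy.le), max_eq_left h]
      have : ¬ (g * x + α * y2 ≤ s) := by
        rw [div_le_iff₀ hα] at h; nlinarith
      simp [hbot, h.not_gt, this]
    · rcases lt_or_ge ((s - g * x) / α) y2 with h' | h'
      · rw [min_eq_right h'.le, max_eq_right h.le]
        have : (s - g * x) < y2 * α := (div_lt_iff₀ hα).1 h'
        have h2 : s ≤ t := by nlinarith
        have h3 : ¬ (g * x + α * y2 ≤ s) := by nlinarith
        simp [h, h', h2, h3]
      · rw [min_eq_left h', max_eq_right hy.le]
        have : y2 * α ≤ (s - g * x) := (le_div_iff₀ hα).1 h'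
        have h3 : (g * x + α * y2 ≤ s) := by nlinarith
        simp [h'.not_gt, htop, h3]
  have hdis : Disjoint ((fun s => (s - g * x) / α) ⁻¹' {y | y ∈ Set.Ioo y1 y2 ∧ pt x y ∈ V})
      (Set.Icc (g * x + α * y2) t) := by
    rw [Set.disjoint_left]
    rintro s ⟨⟨_, h'⟩, _⟩ ⟨h3, _⟩
    have : (s - g * x) < y2 * α := (div_lt_iff₀ hα).1 h'
    nlinarith
  have hpre : (fun s => (s - g * x) / α) ⁻¹' {y | y ∈ Set.Ioo y1 y2 ∧ pt x y ∈ V}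
      = (fun s => s + (-(g * x))) ⁻¹' ((fun s => s * α⁻¹) ⁻¹'
        {y | y ∈ Set.Ioo y1 y2 ∧ pt x y ∈ V}) := by
    ext s; simp [div_eq_mul_inv, sub_eq_add_neg]
  rw [hset, measure_union hdis measurableSet_Icc, hpre, measure_preimage_add_right,
    Real.volume_preimage_mul_right (inv_ne_zero hα.ne'), Real.volume_Icc, inv_inv,
    abs_of_pos hα, ← ofReal_sec, ← ENNReal.ofReal_mul hα.le, ← ENNReal.ofReal_add]
  · exact mul_nonneg hα.le (sec_nonneg _ _ _ _)
  · linarith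

/-- The frontier of `V` in a box whose bottom is outside `V` and whose top is inside `V`, projected to
a unit direction `(g, α)`. Where the clamped segments of the same parameter over the two ends of the
box lie on different sides of `V`, the line `g x + α y = s` between them meets the frontier, so that
the projection is at least as long as the difference of the measures in `clamp_sec_vol`. -/
lemma box_flux_pos {V : Set Plane} {xa xb y1 y2 g α : ℝ} (hα : 0 < α) (hgα : g ^ 2 + α ^ 2 ≤ 1)
    (hy : y1 < y2) (hbot : ∀ x ∈ Set.uIcc xa xb, pt x y1 ∈ interior Vᶜ)
    (htop : ∀ x ∈ Set.uIcc xa xb, pt x y2 ∈ interior V) :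
    ENNReal.ofReal (g * (xb - xa) - α * (sec V y1 y2 xb - sec V y1 y2 xa))
      ≤ μH[1] (frontier V ∩ {p | p 0 ∈ Set.uIcc xa xb ∧ p 1 ∈ Set.Ioo y1 y2}) := by
  refine le_trans ?_ (proj_le hgα _)
  set cl : ℝ → ℝ := fun s => max y1 (min y2 s) with hcl
  set N : ℝ → ℝ → Set ℝ := fun t x => {s | s ≤ t ∧ pt x (cl ((s - g * x) / α)) ∈ V} with hN
  set t := max (g * xa + α * y2) (g * xb + α * y2)
  have hbot' : ∀ x ∈ Set.uIcc xa xb, pt x y1 ∉ V := fun x hx => interior_subset (hbot x hx)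
  have htop' : ∀ x ∈ Set.uIcc xa xb, pt x y2 ∈ V := fun x hx => interior_subset (htop x hx)
  have hva := clamp_sec_vol (V := V) (g := g) (t := t) hα hy (hbot' xa Set.left_mem_uIcc)
    (htop' xa Set.left_mem_uIcc) (le_max_left _ _)
  have hvb := clamp_sec_vol (V := V) (g := g) (t := t) hα hy (hbot' xb Set.right_mem_uIcc)
    (htop' xb Set.right_mem_uIcc) (le_max_right _ _)
  have hdiff : volume (N t xa) - volume (N t xb) ≤ volume (N t xa \ N t xb) := le_measure_sdiff
  have hsub : N t xa \ N t xb ⊆ (fun p : Plane => g * p 0 + α * p 1) ''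
      (frontier V ∩ {p | p 0 ∈ Set.uIcc xa xb ∧ p 1 ∈ Set.Ioo y1 y2}) := by
    rintro s ⟨⟨hst, hsa⟩, hsb⟩
    have hsb' : pt xb (cl ((s - g * xb) / α)) ∉ V := fun h => hsb ⟨hst, h⟩
    have hc : Continuous fun x => pt x (cl ((s - g * x) / α)) := by
      refine continuous_pt continuous_id ?_
      simp only [hcl]
      fun_prop
    obtain ⟨x, hx, hxf⟩ := exists_frontier_mem (V := V) hc hsa hsb'
    have hlt1 : y1 < (s - g * x) / α := by
      by_contra! h
      have : cl ((s - g * x) / α) = y1 := by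
        simp only [hcl]; rw [min_eq_right (h.trans hy.le), max_eq_left h]
      rw [this] at hxf
      have h1 := hbot x hx
      rw [interior_compl] at h1
      exact h1 hxf.1
    have hlt2 : (s - g * x) / α < y2 := by
      by_contra! h
      have : cl ((s - g * x) / α) = y2 := by
        simp only [hcl]; rw [min_eq_left h, max_eq_right hy.le]
      rw [this] at hxf
      exact hxf.2 (htop x hx)
    have : cl ((s - g * x) / α) = (s - g * x) / α := by
      simp only [hcl]; rw [min_eq_right hlt2.le, max_eq_right hlt1.le]
    rw [this] at hxf
    refine ⟨_, ⟨hxf, hx, hlt1, hlt2⟩, ?_⟩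
    simp only [pt_zero, pt_one]
    field_simp
    ring
  refine le_trans ?_ (hdiff.trans (measure_mono hsub))
  rw [show volume (N t xa) = _ from hva, show volume (N t xb) = _ from hvb,
    ← ENNReal.ofReal_sub]
  · exact ENNReal.ofReal_le_ofReal (by linarith)
  · have := mul_nonneg hα.le (sec_nonneg V y1 y2 xb)
    have := le_max_right (g * xa + α * y2) (g * xb + α * y2)
    linarith

/-- Flux of the constant field `(α, g)` through the frontier of a set which, over an interval,
lies above the bottom edge and contains the top edge of a box. -/
lemma box_flux {V : Set Plane} {x0 x1 y1 y2 g α : ℝ} (hgα : g ^ 2 + α ^ 2 ≤ 1)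
    (hx : x0 ≤ x1)
    (hy : y1 < y2) (hbot : ∀ x ∈ Set.Icc x0 x1, pt x y1 ∈ interior Vᶜ)
    (htop : ∀ x ∈ Set.Icc x0 x1, pt x y2 ∈ interior V) :
    ENNReal.ofReal (g * (x1 - x0) - α * (sec V y1 y2 x1 - sec V y1 y2 x0))
      ≤ μH[1] (frontier V ∩ {p | p 0 ∈ Set.Icc x0 x1 ∧ p 1 ∈ Set.Ioo y1 y2}) := by
  have key : ∀ g α : ℝ, g ^ 2 + α ^ 2 ≤ 1 → α ≠ 0 →
      ENNReal.ofReal (g * (x1 - x0) - α * (sec V y1 y2 x1 - sec V y1 y2 x0))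
      ≤ μH[1] (frontier V ∩ {p | p 0 ∈ Set.Icc x0 x1 ∧ p 1 ∈ Set.Ioo y1 y2}) := by
    intro g α hg hα
    rcases lt_or_gt_of_ne hα with h | h
    · have := box_flux_pos (V := V) (xa := x1) (xb := x0) (g := -g) (α := -α) (by linarith)
        (by nlinarith) hy
        (by rwa [Set.uIcc_comm, Set.uIcc_of_le hx]) (by rwa [Set.uIcc_comm, Set.uIcc_of_le hx])
      rw [Set.uIcc_comm, Set.uIcc_of_le hx] at this
      convert this using 2
      ring
    · have := box_flux_pos (V := V) (xa := x0) (xb := x1) h hg hy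
        (by rwa [Set.uIcc_of_le hx]) (by rwa [Set.uIcc_of_le hx])
      rwa [Set.uIcc_of_le hx] at this
  by_cases hα : α = 0
  · subst hα
    have hlim : Filter.Tendsto (fun t : ℝ => ENNReal.ofReal (((1 - t) * g) * (x1 - x0) -
        t * (sec V y1 y2 x1 - sec V y1 y2 x0))) (nhdsWithin 0 (Set.Ioo 0 1))
        (nhds (ENNReal.ofReal (((1 - 0) * g) * (x1 - x0) -
        0 * (sec V y1 y2 x1 - sec V y1 y2 x0)))) := by
      refine ENNReal.tendsto_ofReal ?_
      refine Filter.Tendsto.mono_left ?_ nhdsWithin_le_nhds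
      refine Continuous.tendsto' ?_ _ _ rfl
      fun_prop
    have : (nhdsWithin (0:ℝ) (Set.Ioo 0 1)).NeBot := by
      rw [nhdsWithin_Ioo_eq_nhdsGT (by norm_num)]; infer_instance
    have h2 := le_of_tendsto hlim (b := μH[1] (frontier V ∩
        {p | p 0 ∈ Set.Icc x0 x1 ∧ p 1 ∈ Set.Ioo y1 y2})) ?_
    · simpa using h2
    · filter_upwards [self_mem_nhdsWithin] with t ht
      refine key _ _ ?_ ht.1.ne'
      have h1 : (1 - t) ^ 2 * g ^ 2 ≤ (1 - t) ^ 2 * 1 :=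
        mul_le_mul_of_nonneg_left (by nlinarith) (sq_nonneg _)
      nlinarith [ht.1, ht.2]
  · exact key g α hgα hα

/-- The bound for a box with bottom in `V` and top outside `V`, by passing to the complement. -/
lemma frontier_compl_box {V : Set Plane} {x0 x1 y1 y2 g α : ℝ} (hgα : g ^ 2 + α ^ 2 ≤ 1)
    (hx : x0 ≤ x1)
    (hy : y1 < y2) (hbot : ∀ x ∈ Set.Icc x0 x1, pt x y1 ∈ interior V)
    (htop : ∀ x ∈ Set.Icc x0 x1, pt x y2 ∈ interior Vᶜ) (hV : MeasurableSet V) :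
    ENNReal.ofReal (g * (x1 - x0) - α * (sec V y1 y2 x1 - sec V y1 y2 x0))
      ≤ μH[1] (frontier V ∩ {p | p 0 ∈ Set.Icc x0 x1 ∧ p 1 ∈ Set.Ioo y1 y2}) := by
  have hc : ∀ x, sec Vᶜ y1 y2 x = (y2 - y1) - sec V y1 y2 x := by
    intro x
    have hm : MeasurableSet {y | y ∈ Set.Ioo y1 y2 ∧ pt x y ∈ V} :=
      measurableSet_Ioo.inter ((continuous_pt continuous_const continuous_id).measurable hV)
    have : {y | y ∈ Set.Ioo y1 y2 ∧ pt x y ∈ Vᶜ}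
        = Set.Ioo y1 y2 \ {y | y ∈ Set.Ioo y1 y2 ∧ pt x y ∈ V} := by
      ext y; simp only [Set.mem_ofPred_eq, Set.mem_compl_iff, Set.mem_sdiff]; tauto
    unfold sec
    rw [this, measure_sdiff (fun y hy => hy.1) hm.nullMeasurableSet, ENNReal.toReal_sub_of_le,
      Real.volume_Ioo, ENNReal.toReal_ofReal (by linarith)]
    · exact measure_mono fun y hy => hy.1
    · simp
    · exact ((sec_vol_le V y1 y2 x).trans_lt ENNReal.ofReal_lt_top).ne
  have := box_flux (V := Vᶜ) (α := -α) (g := g) (by simpa using hgα) hx hy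
    (by simpa using hbot) htop
  rw [frontier_compl, hc, hc] at this
  convert this using 2
  ring

/-- Horizontal flux: the measure of the change of vertical sections is at most the length of the
frontier in between. -/
lemma sec_sub_le {V : Set Plane} {xa xb y1 y2 : ℝ} :
    ENNReal.ofReal (sec V y1 y2 xa - sec V y1 y2 xb)
      ≤ μH[1] (frontier V ∩ {p | p 0 ∈ Set.uIcc xa xb ∧ p 1 ∈ Set.Ioo y1 y2}) := by
  refine le_trans ?_ (proj_le (g := 0) (α := 1) (by norm_num) _)
  rw [ENNReal.ofReal_sub _ (sec_nonneg _ _ _ _), ofReal_sec, ofReal_sec]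
  refine le_measure_sdiff.trans (measure_mono ?_)
  rintro y ⟨⟨hy, hya⟩, hyb⟩
  obtain ⟨x, hx, hxf⟩ := exists_frontier_mem (V := V) (p := fun x => pt x y)
    (continuous_pt continuous_id continuous_const) hya (fun h => hyb ⟨hy, h⟩)
  exact ⟨_, ⟨hxf, hx, hy⟩, by simp⟩

/-! ### Local length estimates for an open partition -/

section

/-- An open 3-partition of the plane (up to a null set) that agrees with the half-planes outside
the square of half-side `R`, with locally finite frontier length. -/
structure Config (R : ℝ) (U : Fin 3 → Set Plane) : Prop where
  pos : 0 < R
  op : ∀ i, IsOpen (U i)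
  disj : ∀ i j, i ≠ j → Disjoint (U i) (U j)
  null : volume (⋃ i, U i)ᶜ = 0
  up : ∀ p : Plane, (R < |p 0| ∨ R < |p 1|) → 0 < p 1 → p ∈ U 1
  dn : ∀ p : Plane, (R < |p 0| ∨ R < |p 1|) → p 1 < 0 → p ∈ U 2
  fin : ∀ i, μH[1] (frontier (U i) ∩ {p : Plane | |p 0| < R + 1}) ≠ ⊤

/-- The length of the vertical section of `U i` inside the strip `|y| < R + 1`. -/
def esec (R : ℝ) (U : Fin 3 → Set Plane) (i : Fin 3) (x : ℝ) : ℝ := sec (U i) (-(R + 1)) (R + 1) x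

/-- The distribution along the `x`-axis of the length of the frontier of `U i`
in the strip `|x| < R + 1`. -/
def rho (R : ℝ) (U : Fin 3 → Set Plane) (i : Fin 3) : Measure ℝ :=
  (μH[1].restrict (frontier (U i) ∩ {p : Plane | |p 0| < R + 1})).map (fun p => p 0)

lemma continuous_coord (i : Fin 2) : Continuous fun p : Plane => p i := by fun_prop

lemma rho_apply (R : ℝ) (U : Fin 3 → Set Plane) (i : Fin 3) {S : Set ℝ} (hS : MeasurableSet S) :
    rho R U i S = μH[1] (frontier (U i) ∩ {p : Plane | |p 0| < R + 1 ∧ p 0 ∈ S}) := by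
  unfold rho
  rw [Measure.map_apply (continuous_coord 0).measurable hS,
    Measure.restrict_apply ((continuous_coord 0).measurable hS)]
  congr 1
  ext p
  simp only [Set.mem_inter_iff, Set.mem_preimage, Set.mem_ofPred_eq]
  tauto

lemma rho_univ (R : ℝ) (U : Fin 3 → Set Plane) (i : Fin 3) :
    rho R U i Set.univ = μH[1] (frontier (U i) ∩ {p : Plane | |p 0| < R + 1}) := by
  rw [rho_apply _ _ _ MeasurableSet.univ]; simp

namespace Config

variable {R : ℝ} {U : Fin 3 → Set Plane}

lemma finite_rho (C : Config R U) (i : Fin 3) : IsFiniteMeasure (rho R U i) :=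
  ⟨by rw [rho_univ]; exact (C.fin i).lt_top⟩

lemma rho_ge (i : Fin 3) {a b y1 y2 : ℝ} (ha : -(R + 1) < a) (hb : b < R + 1) :
    μH[1] (frontier (U i) ∩ {p : Plane | p 0 ∈ Set.Icc a b ∧ p 1 ∈ Set.Ioo y1 y2})
      ≤ rho R U i (Set.Icc a b) := by
  rw [rho_apply _ _ _ measurableSet_Icc]
  refine measure_mono ?_
  rintro p ⟨hp, h1, h2⟩
  exact ⟨hp, abs_lt.2 ⟨by linarith [h1.1], by linarith [h1.2]⟩, h1⟩

lemma not_mem (C : Config R U) {i j : Fin 3} (hij : i ≠ j) {p : Plane} (h : p ∈ U j) : p ∉ U i :=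
  fun hi => (Set.disjoint_left.1 (C.disj i j hij)) hi h

lemma mem_int_compl (C : Config R U) {i j : Fin 3} (hij : i ≠ j) {p : Plane} (h : p ∈ U j) :
    p ∈ interior (U i)ᶜ :=
  mem_interior.2 ⟨U j, fun _ hq => C.not_mem hij hq, C.op j, h⟩

lemma mem_int (C : Config R U) {i : Fin 3} {p : Plane} (h : p ∈ U i) : p ∈ interior (U i) := by
  rwa [(C.op i).interior_eq]

lemma top_mem (C : Config R U) (x : ℝ) {y : ℝ} (hy : R < y) : pt x y ∈ U 1 :=
  C.up _ (Or.inr (by rw [pt_one, abs_of_pos (C.pos.trans hy)]; exact hy))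
    (by simpa using C.pos.trans hy)

lemma bot_mem (C : Config R U) (x : ℝ) {y : ℝ} (hy : y < -R) : pt x y ∈ U 2 :=
  C.dn _ (Or.inr (by rw [pt_one, abs_of_neg (by linarith [C.pos])]; linarith))
    (by rw [pt_one]; linarith [C.pos])

lemma zero_out (C : Config R U) {p : Plane} (h : R < |p 0| ∨ R < |p 1|) : p ∉ U 0 := by
  intro hp
  have hoff : ∀ q : Plane, (R < |q 0| ∨ R < |q 1|) → q 1 ≠ 0 → q ∉ U 0 := by
    intro q hq hq1
    rcases lt_or_gt_of_ne hq1 with h1 | h1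
    · exact C.not_mem (by decide) (C.dn q hq h1)
    · exact C.not_mem (by decide) (C.up q hq h1)
  by_cases h1 : p 1 = 0
  · have hO : IsOpen ({t : ℝ | pt (p 0) t ∈ U 0}) :=
      (C.op 0).preimage (continuous_pt continuous_const continuous_id)
    have h0 : (0 : ℝ) ∈ {t : ℝ | pt (p 0) t ∈ U 0} := by
      have : pt (p 0) 0 = p := by rw [← h1]; exact pt_eta p
      show pt (p 0) 0 ∈ U 0
      rwa [this]
    obtain ⟨ε, hε, hb⟩ := Metric.isOpen_iff.1 hO 0 h0
    have hm : pt (p 0) (ε / 2) ∈ U 0 := hb (by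
      rw [Metric.mem_ball, Real.dist_eq, sub_zero, abs_of_pos (by linarith)]; linarith)
    refine hoff _ ?_ ?_ hm
    · left
      rcases h with h | h
      · simpa using h
      · rw [h1, abs_zero] at h; linarith [C.pos]
    · simp only [pt_one]; linarith
  · exact hoff p h h1 hp

lemma sec_split {V : Set Plane} (hV : MeasurableSet V) {a b c : ℝ} (hab : a < b) (hbc : b < c)
    (x : ℝ) : sec V a c x = sec V a b x + sec V b c x := by
  have hm : ∀ a b, MeasurableSet {y | y ∈ Set.Ioo a b ∧ pt x y ∈ V} := fun a b =>
    measurableSet_Ioo.inter ((continuous_pt continuous_const continuous_id).measurable hV)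
  have hfin : ∀ a b, volume {y | y ∈ Set.Ioo a b ∧ pt x y ∈ V} ≠ ⊤ := fun a b =>
    ((sec_vol_le V a b x).trans_lt ENNReal.ofReal_lt_top).ne
  unfold sec
  rw [← ENNReal.toReal_add (hfin _ _) (hfin _ _), ← measure_union ?_ (hm _ _)]
  · congr 1
    refine measure_congr ?_
    have h0 : ∀ᵐ y : ℝ, y ≠ b := by
      simp [ae_iff]
    filter_upwards [h0] with y hy
    apply propext
    change (y ∈ Set.Ioo a c ∧ pt x y ∈ V) ↔
      ((y ∈ Set.Ioo a b ∧ pt x y ∈ V) ∨ (y ∈ Set.Ioo b c ∧ pt x y ∈ V))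
    simp only [Set.mem_Ioo]
    constructor
    · rintro ⟨⟨h1, h2⟩, h3⟩
      rcases lt_or_gt_of_ne hy with h | h
      · exact Or.inl ⟨⟨h1, h⟩, h3⟩
      · exact Or.inr ⟨⟨h, h2⟩, h3⟩
    · rintro (⟨⟨h1, h2⟩, h3⟩ | ⟨⟨h1, h2⟩, h3⟩)
      · exact ⟨⟨h1, h2.trans hbc⟩, h3⟩
      · exact ⟨⟨hab.trans h1, h2⟩, h3⟩
  · rw [Set.disjoint_left]
    rintro y ⟨h1, _⟩ ⟨h2, _⟩
    exact absurd h1.2 (not_lt.2 h2.1.le)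

lemma box_add {F : Set Plane} (S : Set ℝ) (hS : MeasurableSet S) {a b c : ℝ} (hab : a < b)
    (hbc : b < c) :
    μH[1] (F ∩ {p : Plane | p 0 ∈ S ∧ p 1 ∈ Set.Ioo a b})
      + μH[1] (F ∩ {p : Plane | p 0 ∈ S ∧ p 1 ∈ Set.Ioo b c})
      ≤ μH[1] (F ∩ {p : Plane | p 0 ∈ S ∧ p 1 ∈ Set.Ioo a c}) := by
  have hm : MeasurableSet {p : Plane | p 1 < b} :=
    measurableSet_lt (continuous_coord 1).measurable measurable_const
  rw [← measure_inter_add_sdiff (F ∩ {p : Plane | p 0 ∈ S ∧ p 1 ∈ Set.Ioo a c}) hm]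
  refine add_le_add (measure_mono ?_) (measure_mono ?_)
  · rintro p ⟨hp, h1, h2⟩
    exact ⟨⟨hp, h1, h2.1, h2.2.trans hbc⟩, h2.2⟩
  · rintro p ⟨hp, h1, h2⟩
    exact ⟨⟨hp, h1, hab.trans h2.1, h2.2⟩, fun h => absurd h (not_lt.2 h2.1.le)⟩

/-- A point of an open set has short horizontal segments to its right inside the set. -/
lemma exists_seg {V : Set Plane} (hV : IsOpen V) {x y : ℝ} (h : pt x y ∈ V) :
    ∃ δ0 > 0, ∀ δ < δ0, ∀ z ∈ Set.Icc x (x + δ), pt z y ∈ V := by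
  have hO : IsOpen ({t : ℝ | pt t y ∈ V}) :=
    hV.preimage (continuous_pt continuous_id continuous_const)
  obtain ⟨ε, hε, hb⟩ := Metric.isOpen_iff.1 hO x h
  refine ⟨ε, hε, fun δ hδ z hz => hb ?_⟩
  rw [Metric.mem_ball, Real.dist_eq, abs_of_nonneg (by linarith [hz.1])]
  linarith [hz.2]

lemma toReal_ge (C : Config R U) {i : Fin 3} {S : Set ℝ} {c : ℝ}
    (h : ENNReal.ofReal c ≤ rho R U i S) : c ≤ (rho R U i).real S := by
  have := C.finite_rho i
  exact (ENNReal.ofReal_le_iff_le_toReal (measure_ne_top _ _)).1 h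

lemma esec_zero_out (C : Config R U) {x : ℝ} (hx : R < |x|) : esec R U 0 x = 0 := by
  unfold esec sec
  have : {y | y ∈ Set.Ioo (-(R + 1)) (R + 1) ∧ pt x y ∈ U 0} = ∅ := by
    ext y
    simp only [Set.mem_ofPred_eq, Set.mem_empty_iff_false, iff_false, not_and]
    exact fun _ => C.zero_out (Or.inl hx)
  rw [this]; simp

lemma esec_one_out (C : Config R U) {x : ℝ} (hx : R < |x|) : esec R U 1 x = R + 1 := by
  have hR := C.pos
  unfold esec sec
  rw [measure_congr (t := Set.Ioo 0 (R + 1)) ?_, Real.volume_Ioo, ENNReal.toReal_ofReal]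
  · ring
  · linarith
  · have h0 : ∀ᵐ y : ℝ, y ≠ 0 := by simp [ae_iff]
    filter_upwards [h0] with y hy
    apply propext
    change (y ∈ Set.Ioo (-(R + 1)) (R + 1) ∧ pt x y ∈ U 1) ↔ y ∈ Set.Ioo 0 (R + 1)
    constructor
    · rintro ⟨h1, h2⟩
      refine ⟨?_, h1.2⟩
      by_contra! h3
      exact C.not_mem (i := 1) (j := 2) (by decide)
        (C.dn (pt x y) (Or.inl hx) (lt_of_le_of_ne h3 hy)) h2
    · rintro ⟨h1, h2⟩
      exact ⟨⟨by linarith, h2⟩, C.up (pt x y) (Or.inl hx) h1⟩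

lemma esec_two_out (C : Config R U) {x : ℝ} (hx : R < |x|) : esec R U 2 x = R + 1 := by
  have hR := C.pos
  unfold esec sec
  rw [measure_congr (t := Set.Ioo (-(R + 1)) 0) ?_, Real.volume_Ioo, ENNReal.toReal_ofReal]
  · ring
  · linarith
  · have h0 : ∀ᵐ y : ℝ, y ≠ 0 := by simp [ae_iff]
    filter_upwards [h0] with y hy
    apply propext
    change (y ∈ Set.Ioo (-(R + 1)) (R + 1) ∧ pt x y ∈ U 2) ↔ y ∈ Set.Ioo (-(R + 1)) 0
    constructor
    · rintro ⟨h1, h2⟩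
      refine ⟨h1.1, ?_⟩
      by_contra! h3
      exact C.not_mem (i := 2) (j := 1) (by decide)
        (C.up (pt x y) (Or.inl hx) (lt_of_le_of_ne h3 hy.symm)) h2
    · rintro ⟨h1, h2⟩
      exact ⟨⟨h1, by linarith⟩, C.dn (pt x y) (Or.inl hx) h2⟩

lemma esec_const (C : Config R U) (i : Fin 3) {x z : ℝ} (hx : R < |x|) (hz : R < |z|) :
    esec R U i x = esec R U i z := by
  fin_cases i
  · exact (C.esec_zero_out hx).trans (C.esec_zero_out hz).symm
  · exact (C.esec_one_out hx).trans (C.esec_one_out hz).symm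
  · exact (C.esec_two_out hx).trans (C.esec_two_out hz).symm

/-- The variation of each section length is controlled by the frontier length. -/
lemma abs_esec_sub_le (C : Config R U) (i : Fin 3) {a b : ℝ} (hab : a ≤ b) :
    |esec R U i b - esec R U i a| ≤ (rho R U i).real (Set.Icc a b) := by
  have hR := C.pos
  have key : ∀ a b, a ≤ b → -(R + 1) < a → b < R + 1 →
      |esec R U i b - esec R U i a| ≤ (rho R U i).real (Set.Icc a b) := by
    intro a b hab ha hb
    refine abs_le'.2 ⟨C.toReal_ge ?_, C.toReal_ge ?_⟩
    · have h := sec_sub_le (V := U i) (xa := b) (xb := a) (y1 := -(R + 1)) (y2 := R + 1)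
      rw [Set.uIcc_comm, Set.uIcc_of_le hab] at h
      exact h.trans (rho_ge i ha hb)
    · have h := sec_sub_le (V := U i) (xa := a) (xb := b) (y1 := -(R + 1)) (y2 := R + 1)
      rw [Set.uIcc_of_le hab] at h
      rw [neg_sub]
      exact h.trans (rho_ge i ha hb)
  have := C.finite_rho i
  set cl : ℝ → ℝ := fun x => max (-(R + 1 / 2)) (min (R + 1 / 2) x) with hcl
  have hce : ∀ x, esec R U i (cl x) = esec R U i x := by
    intro x
    rcases le_or_gt (|x|) (R + 1 / 2) with h | h
    · have := abs_le.1 h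
      simp only [hcl]
      rw [min_eq_right this.2, max_eq_right this.1]
    · refine C.esec_const i ?_ (by linarith)
      simp only [hcl]
      rcases lt_abs.1 h with h1 | h1
      · rw [min_eq_left h1.le, max_eq_right (by linarith), abs_of_pos (by linarith)]; linarith
      · rw [min_eq_right (by linarith), max_eq_left (by linarith), abs_of_neg (by linarith)]
        linarith
  have hb1 : ∀ x, cl x ≤ R + 1 / 2 := fun x =>
    max_le (by linarith) (min_le_left _ _)
  have hb2 : ∀ x, -(R + 1 / 2) ≤ cl x := fun x => le_max_left _ _
  have hmono : cl a ≤ cl b := max_le_max le_rfl (min_le_min le_rfl hab)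
  rw [← hce a, ← hce b]
  by_cases hcase : a ≤ R + 1 / 2 ∧ -(R + 1 / 2) ≤ b
  · refine (key _ _ hmono (by linarith [hb2 a]) (by linarith [hb1 b])).trans ?_
    refine measureReal_mono (Set.Icc_subset_Icc ?_ ?_)
    · simp only [hcl]; rw [min_eq_right hcase.1]; exact le_max_right _ _
    · exact max_le hcase.2 (min_le_right _ _)
  · have : cl a = cl b := by
      rw [not_and_or, not_le, not_le] at hcase
      simp only [hcl]
      rcases hcase with h | h
      · rw [min_eq_left h.le, min_eq_left (h.le.trans hab)]
      · rw [min_eq_right (by linarith), min_eq_right (by linarith : b ≤ _), max_eq_left (by linarith),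
          max_eq_left h.le]
    rw [this, sub_self, abs_zero]
    exact measureReal_nonneg

/-- Length of the frontier of the upper set over `[x, x + δ]`, tested against the direction
`(g, -α)`. -/
lemma rho_one_ge (C : Config R U) {x δ g α : ℝ} (hgα : g ^ 2 + α ^ 2 ≤ 1) (hδ : 0 ≤ δ)
    (hx : -(R + 1) < x) (hxδ : x + δ < R + 1) :
    g * δ + α * (esec R U 1 (x + δ) - esec R U 1 x) ≤ (rho R U 1).real (Set.Icc x (x + δ)) := by
  have hR := C.pos
  refine C.toReal_ge ?_
  have := box_flux (V := U 1) (x0 := x) (x1 := x + δ) (y1 := -(R + 1)) (y2 := R + 1) (g := g)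
    (α := -α) (by simpa using hgα) (by linarith) (by linarith)
    (fun z _ => C.mem_int_compl (j := 2) (by decide) (C.bot_mem z (by linarith)))
    (fun z _ => C.mem_int (C.top_mem z (by linarith)))
  refine le_trans (le_of_eq ?_) (this.trans (rho_ge 1 hx hxδ))
  unfold esec
  congr 1; ring

lemma rho_two_ge (C : Config R U) {x δ g α : ℝ} (hgα : g ^ 2 + α ^ 2 ≤ 1) (hδ : 0 ≤ δ)
    (hx : -(R + 1) < x) (hxδ : x + δ < R + 1) :
    g * δ + α * (esec R U 2 (x + δ) - esec R U 2 x) ≤ (rho R U 2).real (Set.Icc x (x + δ)) := by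
  have hR := C.pos
  refine C.toReal_ge ?_
  have := frontier_compl_box (V := U 2) (x0 := x) (x1 := x + δ) (y1 := -(R + 1)) (y2 := R + 1)
    (g := g) (α := -α) (by simpa using hgα) (by linarith) (by linarith)
    (fun z _ => C.mem_int (C.bot_mem z (by linarith)))
    (fun z _ => C.mem_int_compl (j := 1) (by decide) (C.top_mem z (by linarith)))
    (C.op 2).measurableSet
  refine le_trans (le_of_eq ?_) (this.trans (rho_ge 2 hx hxδ))
  unfold esec
  congr 1; ring

/-- Length of the frontier of `U 0` over a short interval: a point of `U 0` over `x` gives a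
horizontal segment in `U 0`, and the parts of the frontier above and below it are estimated
separately. This is the reason for the factor `2`. -/
lemma rho_zero_ge (C : Config R U) {x y : ℝ} (hx : -(R + 1) < x) (hx2 : x < R + 1)
    (hy : pt x y ∈ U 0) : ∃ δ0 > 0, ∀ δ, 0 ≤ δ → δ < δ0 → ∀ g α : ℝ, g ^ 2 + α ^ 2 ≤ 1 →
    2 * g * δ + α * (esec R U 0 (x + δ) - esec R U 0 x)
      ≤ (rho R U 0).real (Set.Icc x (x + δ)) := by
  have hR := C.pos
  obtain ⟨δ0, h0, hseg⟩ := exists_seg (C.op 0) hy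
  have hyR : |y| ≤ R := by
    by_contra! h
    exact C.zero_out (p := pt x y) (Or.inr h) hy
  obtain ⟨hy1, hy2⟩ := abs_le.1 hyR
  refine ⟨min δ0 (R + 1 - x), lt_min h0 (by linarith), fun δ hδ hδ0 g α hgα => ?_⟩
  obtain ⟨hδ1, hδ2⟩ := lt_min_iff.1 hδ0
  refine C.toReal_ge ?_
  have hup := frontier_compl_box (V := U 0) (x0 := x) (x1 := x + δ) (y1 := y) (y2 := R + 1)
    (g := g) (α := -α) (by simpa using hgα) (by linarith) (by linarith)
    (fun z hz => C.mem_int (hseg δ hδ1 z hz))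
    (fun z _ => C.mem_int_compl (j := 1) (by decide) (C.top_mem z (by linarith)))
    (C.op 0).measurableSet
  have hdn := box_flux (V := U 0) (x0 := x) (x1 := x + δ) (y1 := -(R + 1)) (y2 := y)
    (g := g) (α := -α) (by simpa using hgα) (by linarith) (by linarith)
    (fun z _ => C.mem_int_compl (j := 2) (by decide) (C.bot_mem z (by linarith)))
    (fun z hz => C.mem_int (hseg δ hδ1 z hz))
  have hadd := box_add (F := frontier (U 0)) (Set.Icc x (x + δ)) measurableSet_Icc
    (a := -(R + 1)) (b := y) (c := R + 1) (by linarith) (by linarith)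
  refine le_trans ?_ ((add_le_add hdn hup).trans (hadd.trans (rho_ge 0 hx (by linarith))))
  refine le_trans (le_of_eq ?_) ENNReal.ofReal_add_le
  unfold esec
  have hm := (C.op 0).measurableSet
  rw [sec_split hm (b := y) (by linarith) (by linarith) x,
    sec_split hm (b := y) (by linarith) (by linarith) (x + δ)]
  congr 1; ring

end Config

section

/-- The vertical sections that leave `U 1` upwards. -/
def badUp (U : Fin 3 → Set Plane) : Set ℝ :=
  {x | ∃ y1 y2, y1 < y2 ∧ pt x y1 ∈ U 1 ∧ (pt x y2 ∈ U 0 ∨ pt x y2 ∈ U 2)}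

/-- The vertical sections that leave `U 2` downwards. -/
def badDn (U : Fin 3 → Set Plane) : Set ℝ :=
  {x | ∃ y1 y2, y1 < y2 ∧ (pt x y1 ∈ U 0 ∨ pt x y1 ∈ U 1) ∧ pt x y2 ∈ U 2}

/-- The projection of `U 0` to the `x`-axis. -/
def shadow (U : Fin 3 → Set Plane) : Set ℝ := {x | ∃ y, pt x y ∈ U 0}

lemma isOpen_slice {V : Set Plane} (hV : IsOpen V) (y : ℝ) : IsOpen {x | pt x y ∈ V} :=
  hV.preimage (continuous_pt continuous_id continuous_const)

/-- Area as the integral of the lengths of the vertical sections. -/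
lemma vol_eq_lintegral {S : Set Plane} (hS : MeasurableSet S) :
    volume S = ∫⁻ x, volume {y | pt x y ∈ S} := by
  have h1 : MeasurePreserving (fun z : ℝ × ℝ => pt z.1 z.2) := by
    have e1 := (volume_preserving_finTwoArrow ℝ).symm
    have e2 := (EuclideanSpace.volume_preserving_symm_measurableEquiv_toLp (Fin 2)).symm
    exact e2.comp e1
  rw [← h1.measure_preimage hS.nullMeasurableSet, Measure.volume_eq_prod,
    Measure.prod_apply (h1.measurable hS)]
  rfl

lemma measurable_sec {V : Set Plane} (hV : MeasurableSet V) (y1 y2 : ℝ) :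
    Measurable (sec V y1 y2) := by
  refine Measurable.ennreal_toReal ?_
  have hm : MeasurableSet {z : ℝ × ℝ | z.2 ∈ Set.Ioo y1 y2 ∧ pt z.1 z.2 ∈ V} :=
    (measurableSet_Ioo.preimage measurable_snd).inter
      ((continuous_pt continuous_fst continuous_snd).measurable hV)
  exact measurable_measure_prodMk_left hm

namespace Config

variable {R : ℝ} {U : Fin 3 → Set Plane}

lemma isOpen_badUp (C : Config R U) : IsOpen (badUp U) := by
  have : badUp U = ⋃ y1 : ℝ, ⋃ y2 : ℝ, ⋃ (_ : y1 < y2),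
      ({x | pt x y1 ∈ U 1} ∩ ({x | pt x y2 ∈ U 0} ∪ {x | pt x y2 ∈ U 2})) := by
    ext x
    simp only [badUp, Set.mem_ofPred_eq, Set.mem_iUnion, Set.mem_inter_iff, Set.mem_union,
      exists_prop]
  rw [this]
  exact isOpen_iUnion fun y1 => isOpen_iUnion fun y2 => isOpen_iUnion fun _ =>
    (isOpen_slice (C.op 1) y1).inter ((isOpen_slice (C.op 0) y2).union (isOpen_slice (C.op 2) y2))

lemma isOpen_badDn (C : Config R U) : IsOpen (badDn U) := by
  have : badDn U = ⋃ y1 : ℝ, ⋃ y2 : ℝ, ⋃ (_ : y1 < y2),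
      (({x | pt x y1 ∈ U 0} ∪ {x | pt x y1 ∈ U 1}) ∩ {x | pt x y2 ∈ U 2}) := by
    ext x
    simp only [badDn, Set.mem_ofPred_eq, Set.mem_iUnion, Set.mem_inter_iff, Set.mem_union,
      exists_prop]
  rw [this]
  exact isOpen_iUnion fun y1 => isOpen_iUnion fun y2 => isOpen_iUnion fun _ =>
    ((isOpen_slice (C.op 0) y1).union (isOpen_slice (C.op 1) y1)).inter (isOpen_slice (C.op 2) y2)

lemma isOpen_shadow (C : Config R U) : IsOpen (shadow U) := by
  have : shadow U = ⋃ y : ℝ, {x | pt x y ∈ U 0} := by ext x; simp [shadow]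
  rw [this]
  exact isOpen_iUnion fun y => isOpen_slice (C.op 0) y

lemma shadow_abs_le (C : Config R U) {x : ℝ} (hx : x ∈ shadow U) : |x| ≤ R := by
  obtain ⟨y, hy⟩ := hx
  by_contra! h
  exact C.zero_out (p := pt x y) (Or.inl h) hy

lemma badUp_abs_le (C : Config R U) {x : ℝ} (hx : x ∈ badUp U) : |x| ≤ R := by
  have hR := C.pos
  by_contra! h
  obtain ⟨y1, y2, hy, h1, h2⟩ := hx
  have h3 : 0 ≤ y1 := by
    by_contra! h3
    exact C.not_mem (i := 1) (j := 2) (by decide) (C.dn (pt x y1) (Or.inl h) h3) h1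
  have h4 : pt x y2 ∈ U 1 := C.up _ (Or.inl h) (by rw [pt_one]; linarith)
  rcases h2 with h2 | h2
  · exact C.not_mem (by decide) h4 h2
  · exact C.not_mem (by decide) h4 h2

lemma badDn_abs_le (C : Config R U) {x : ℝ} (hx : x ∈ badDn U) : |x| ≤ R := by
  have hR := C.pos
  by_contra! h
  obtain ⟨y1, y2, hy, h2, h1⟩ := hx
  have h3 : y2 ≤ 0 := by
    by_contra! h3
    exact C.not_mem (i := 2) (j := 1) (by decide) (C.up (pt x y2) (Or.inl h) h3) h1
  have h4 : pt x y1 ∈ U 2 := C.dn _ (Or.inl h) (by rw [pt_one]; linarith)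
  rcases h2 with h2 | h2
  · exact C.not_mem (by decide) h4 h2
  · exact C.not_mem (by decide) h4 h2

/-- Over a bad section the frontier of `U 1` is crossed at least three times. -/
lemma rho_one_bad (C : Config R U) {x : ℝ} (hx : x ∈ badUp U) :
    ∃ δ0 > 0, ∀ δ, 0 ≤ δ → δ < δ0 → ∀ g α : ℝ, g ^ 2 + α ^ 2 ≤ 1 →
    3 * g * δ + α * (esec R U 1 (x + δ) - esec R U 1 x)
      ≤ (rho R U 1).real (Set.Icc x (x + δ)) := by
  have hR := C.pos
  have hxR := abs_le.1 (C.badUp_abs_le hx)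
  obtain ⟨y1, y2, hy, h1, h2⟩ := hx
  obtain ⟨j, hj, h2⟩ : ∃ j, 1 ≠ j ∧ pt x y2 ∈ U j := by
    rcases h2 with h2 | h2
    · exact ⟨0, by decide, h2⟩
    · exact ⟨2, by decide, h2⟩
  obtain ⟨δ1, hδ1, hseg1⟩ := exists_seg (C.op 1) h1
  obtain ⟨δ2, hδ2, hseg2⟩ := exists_seg (C.op j) h2
  have hy1 : -R ≤ y1 := by
    by_contra! h
    exact C.not_mem (by decide) (C.bot_mem x h) h1
  have hy2 : y2 ≤ R := by
    by_contra! h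
    exact C.not_mem hj.symm (C.top_mem x h) h2
  refine ⟨min (min δ1 δ2) 1, by positivity, fun δ hδ hδ0 g α hgα => ?_⟩
  obtain ⟨hδ0, hδ3⟩ := lt_min_iff.1 hδ0
  obtain ⟨hδ1', hδ2'⟩ := lt_min_iff.1 hδ0
  refine C.toReal_ge ?_
  have b1 := box_flux (V := U 1) (x0 := x) (x1 := x + δ) (y1 := -(R + 1)) (y2 := y1) (g := g)
    (α := -α) (by simpa using hgα) (by linarith) (by linarith)
    (fun z _ => C.mem_int_compl (j := 2) (by decide) (C.bot_mem z (by linarith)))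
    (fun z hz => C.mem_int (hseg1 δ hδ1' z hz))
  have b2 := frontier_compl_box (V := U 1) (x0 := x) (x1 := x + δ) (y1 := y1) (y2 := y2) (g := g)
    (α := -α) (by simpa using hgα) (by linarith) (by linarith)
    (fun z hz => C.mem_int (hseg1 δ hδ1' z hz))
    (fun z hz => C.mem_int_compl hj (hseg2 δ hδ2' z hz)) (C.op 1).measurableSet
  have b3 := box_flux (V := U 1) (x0 := x) (x1 := x + δ) (y1 := y2) (y2 := R + 1) (g := g)
    (α := -α) (by simpa using hgα) (by linarith) (by linarith)
    (fun z hz => C.mem_int_compl hj (hseg2 δ hδ2' z hz))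
    (fun z _ => C.mem_int (C.top_mem z (by linarith)))
  have hadd1 := box_add (F := frontier (U 1)) (Set.Icc x (x + δ)) measurableSet_Icc
    (a := -(R + 1)) (b := y1) (c := y2) (by linarith) (by linarith)
  have hadd2 := box_add (F := frontier (U 1)) (Set.Icc x (x + δ)) measurableSet_Icc
    (a := -(R + 1)) (b := y2) (c := R + 1) (by linarith) (by linarith)
  refine le_trans ?_ ((add_le_add ((add_le_add b1 b2).trans hadd1) b3).trans
    (hadd2.trans (rho_ge 1 (by linarith) (by linarith))))
  have hm := (C.op 1).measurableSet
  refine le_trans (le_of_eq ?_) (ENNReal.ofReal_add_le.trans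
    (add_le_add_left ENNReal.ofReal_add_le _))
  unfold esec
  rw [sec_split hm (b := y2) (by linarith) (by linarith) x,
    sec_split hm (b := y2) (by linarith) (by linarith) (x + δ),
    sec_split hm (a := -(R + 1)) (b := y1) (c := y2) (by linarith) (by linarith) x,
    sec_split hm (a := -(R + 1)) (b := y1) (c := y2) (by linarith) (by linarith) (x + δ)]
  congr 1; ring

/-- Over a bad section the frontier of `U 2` is crossed at least three times. -/
lemma rho_two_bad (C : Config R U) {x : ℝ} (hx : x ∈ badDn U) :
    ∃ δ0 > 0, ∀ δ, 0 ≤ δ → δ < δ0 → ∀ g α : ℝ, g ^ 2 + α ^ 2 ≤ 1 →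
    3 * g * δ + α * (esec R U 2 (x + δ) - esec R U 2 x)
      ≤ (rho R U 2).real (Set.Icc x (x + δ)) := by
  have hR := C.pos
  have hxR := abs_le.1 (C.badDn_abs_le hx)
  obtain ⟨y1, y2, hy, h1, h2⟩ := hx
  obtain ⟨j, hj, h1⟩ : ∃ j, 2 ≠ j ∧ pt x y1 ∈ U j := by
    rcases h1 with h1 | h1
    · exact ⟨0, by decide, h1⟩
    · exact ⟨1, by decide, h1⟩
  obtain ⟨δ1, hδ1, hseg1⟩ := exists_seg (C.op j) h1
  obtain ⟨δ2, hδ2, hseg2⟩ := exists_seg (C.op 2) h2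
  have hy1 : -R ≤ y1 := by
    by_contra! h
    exact C.not_mem hj.symm (C.bot_mem x h) h1
  have hy2 : y2 ≤ R := by
    by_contra! h
    exact C.not_mem (by decide) (C.top_mem x h) h2
  refine ⟨min (min δ1 δ2) 1, by positivity, fun δ hδ hδ0 g α hgα => ?_⟩
  obtain ⟨hδ0, hδ3⟩ := lt_min_iff.1 hδ0
  obtain ⟨hδ1', hδ2'⟩ := lt_min_iff.1 hδ0
  refine C.toReal_ge ?_
  have b1 := frontier_compl_box (V := U 2) (x0 := x) (x1 := x + δ) (y1 := -(R + 1)) (y2 := y1)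
    (g := g) (α := -α) (by simpa using hgα) (by linarith) (by linarith)
    (fun z _ => C.mem_int (C.bot_mem z (by linarith)))
    (fun z hz => C.mem_int_compl hj (hseg1 δ hδ1' z hz)) (C.op 2).measurableSet
  have b2 := box_flux (V := U 2) (x0 := x) (x1 := x + δ) (y1 := y1) (y2 := y2) (g := g)
    (α := -α) (by simpa using hgα) (by linarith) (by linarith)
    (fun z hz => C.mem_int_compl hj (hseg1 δ hδ1' z hz))
    (fun z hz => C.mem_int (hseg2 δ hδ2' z hz))
  have b3 := frontier_compl_box (V := U 2) (x0 := x) (x1 := x + δ) (y1 := y2) (y2 := R + 1)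
    (g := g) (α := -α) (by simpa using hgα) (by linarith) (by linarith)
    (fun z hz => C.mem_int (hseg2 δ hδ2' z hz))
    (fun z _ => C.mem_int_compl (j := 1) (by decide) (C.top_mem z (by linarith)))
    (C.op 2).measurableSet
  have hadd1 := box_add (F := frontier (U 2)) (Set.Icc x (x + δ)) measurableSet_Icc
    (a := -(R + 1)) (b := y1) (c := y2) (by linarith) (by linarith)
  have hadd2 := box_add (F := frontier (U 2)) (Set.Icc x (x + δ)) measurableSet_Icc
    (a := -(R + 1)) (b := y2) (c := R + 1) (by linarith) (by linarith)
  refine le_trans ?_ ((add_le_add ((add_le_add b1 b2).trans hadd1) b3).trans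
    (hadd2.trans (rho_ge 2 (by linarith) (by linarith))))
  have hm := (C.op 2).measurableSet
  refine le_trans (le_of_eq ?_) (ENNReal.ofReal_add_le.trans
    (add_le_add_left ENNReal.ofReal_add_le _))
  unfold esec
  rw [sec_split hm (b := y2) (by linarith) (by linarith) x,
    sec_split hm (b := y2) (by linarith) (by linarith) (x + δ),
    sec_split hm (a := -(R + 1)) (b := y1) (c := y2) (by linarith) (by linarith) x,
    sec_split hm (a := -(R + 1)) (b := y1) (c := y2) (by linarith) (by linarith) (x + δ)]
  congr 1; ring

lemma measurable_esec (C : Config R U) (i : Fin 3) : Measurable (esec R U i) :=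
  measurable_sec (C.op i).measurableSet _ _

lemma esec_nonneg (i : Fin 3) (x : ℝ) : 0 ≤ esec R U i x := sec_nonneg _ _ _ _

lemma esec_le (C : Config R U) (i : Fin 3) (x : ℝ) : esec R U i x ≤ 2 * (R + 1) := by
  have := sec_le (U i) (y1 := -(R + 1)) (y2 := R + 1) (by linarith [C.pos]) x
  unfold esec
  linarith

/-- Almost every vertical section is covered up to a null set. -/
lemma ae_null (C : Config R U) : ∀ᵐ x : ℝ, volume {y | pt x y ∉ ⋃ i, U i} = 0 := by
  have hm : MeasurableSet (⋃ i, U i)ᶜ := (isOpen_iUnion C.op).measurableSet.compl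
  have h := C.null
  rw [vol_eq_lintegral hm, lintegral_eq_zero_iff] at h
  · exact h
  · have hm2 : MeasurableSet {z : ℝ × ℝ | pt z.1 z.2 ∈ (⋃ i, U i)ᶜ} :=
      (continuous_pt continuous_fst continuous_snd).measurable hm
    exact measurable_measure_prodMk_left hm2

lemma esec_sum (C : Config R U) {x : ℝ} (hx : volume {y | pt x y ∉ ⋃ i, U i} = 0) :
    esec R U 0 x + esec R U 1 x + esec R U 2 x = 2 * (R + 1) := by
  have hR := C.pos
  have hm : ∀ i, MeasurableSet {y | y ∈ Set.Ioo (-(R + 1)) (R + 1) ∧ pt x y ∈ U i} := fun i =>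
    measurableSet_Ioo.inter
      ((continuous_pt continuous_const continuous_id).measurable (C.op i).measurableSet)
  have hfin : ∀ i, volume {y | y ∈ Set.Ioo (-(R + 1)) (R + 1) ∧ pt x y ∈ U i} ≠ ⊤ := fun i =>
    ((sec_vol_le (U i) _ _ x).trans_lt ENNReal.ofReal_lt_top).ne
  have hd : ∀ i j, i ≠ j → Disjoint {y | y ∈ Set.Ioo (-(R + 1)) (R + 1) ∧ pt x y ∈ U i}
      {y | y ∈ Set.Ioo (-(R + 1)) (R + 1) ∧ pt x y ∈ U j} := by
    intro i j hij
    rw [Set.disjoint_left]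
    rintro y ⟨_, h1⟩ ⟨_, h2⟩
    exact C.not_mem hij h2 h1
  unfold esec sec
  rw [← ENNReal.toReal_add (hfin _) (hfin _), ← measure_union (hd 0 1 (by decide)) (hm 1),
    ← ENNReal.toReal_add _ (hfin _), ← measure_union _ (hm 2)]
  · rw [measure_congr (t := Set.Ioo (-(R + 1)) (R + 1)), Real.volume_Ioo,
      ENNReal.toReal_ofReal (by linarith)]
    · ring
    · have h0 : ∀ᵐ y : ℝ, pt x y ∈ ⋃ i, U i := hx
      filter_upwards [h0] with y hy
      apply propext
      change (((y ∈ Set.Ioo (-(R + 1)) (R + 1) ∧ pt x y ∈ U 0) ∨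
        (y ∈ Set.Ioo (-(R + 1)) (R + 1) ∧ pt x y ∈ U 1)) ∨
        (y ∈ Set.Ioo (-(R + 1)) (R + 1) ∧ pt x y ∈ U 2)) ↔ y ∈ Set.Ioo (-(R + 1)) (R + 1)
      simp only [Set.mem_iUnion, Fin.exists_fin_succ, Fin.exists_fin_zero] at hy
      simp only [Fin.succ_zero_eq_one, Fin.succ_one_eq_two] at hy
      tauto
  · exact Set.disjoint_union_left.2 ⟨hd 0 2 (by decide), hd 1 2 (by decide)⟩
  · rw [measure_union (hd 0 1 (by decide)) (hm 1)]
    exact ENNReal.add_ne_top.2 ⟨hfin _, hfin _⟩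

lemma esec_zero_pos (C : Config R U) {x : ℝ} : 0 < esec R U 0 x ↔ x ∈ shadow U := by
  constructor
  · intro h
    by_contra hx
    have : {y | y ∈ Set.Ioo (-(R + 1)) (R + 1) ∧ pt x y ∈ U 0} = ∅ := by
      ext y
      simp only [Set.mem_ofPred_eq, Set.mem_empty_iff_false, iff_false, not_and]
      exact fun _ hy => hx ⟨y, hy⟩
    unfold esec sec at h
    rw [this] at h
    simp at h
  · rintro ⟨y, hy⟩
    have hyR : |y| ≤ R := by
      by_contra! h
      exact C.zero_out (p := pt x y) (Or.inr h) hy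
    have hO : IsOpen {y | y ∈ Set.Ioo (-(R + 1)) (R + 1) ∧ pt x y ∈ U 0} :=
      isOpen_Ioo.inter ((C.op 0).preimage (continuous_pt continuous_const continuous_id))
    unfold esec sec
    refine ENNReal.toReal_pos (hO.measure_pos volume ⟨y, ?_, hy⟩).ne'
      ((sec_vol_le (U 0) _ _ x).trans_lt ENNReal.ofReal_lt_top).ne
    have := abs_le.1 hyR
    exact ⟨by linarith, by linarith⟩

lemma lintegral_esec_zero (C : Config R U) :
    ∫⁻ x, ENNReal.ofReal (esec R U 0 x) = volume (U 0) := by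
  rw [vol_eq_lintegral (C.op 0).measurableSet]
  refine lintegral_congr fun x => ?_
  unfold esec
  rw [ofReal_sec]
  congr 1
  ext y
  simp only [Set.mem_ofPred_eq, and_iff_right_iff_imp]
  intro hy
  have hyR : |y| ≤ R := by
    by_contra! h
    exact C.zero_out (p := pt x y) (Or.inr h) hy
  have := abs_le.1 hyR
  exact ⟨by linarith, by linarith⟩

/-- The section lengths of `U 0` are differentiable almost everywhere, being differences of
monotone functions. -/
lemma ae_differentiable_esec (C : Config R U) (i : Fin 3) :
    ∀ᵐ x : ℝ, DifferentiableAt ℝ (esec R U i) x := by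
  have := C.finite_rho i
  set F : ℝ → ℝ := fun x => (rho R U i).real (Set.Iio x) + (rho R U i).real (Set.Iic x) with hF
  have hFm : Monotone F := fun x y hxy =>
    add_le_add (measureReal_mono (Set.Iio_subset_Iio hxy))
      (measureReal_mono (Set.Iic_subset_Iic.2 hxy))
  have hinc : ∀ x y, x ≤ y → |esec R U i y - esec R U i x| ≤ F y - F x := by
    intro x y hxy
    rcases hxy.eq_or_lt with rfl | hxy'
    · simp
    refine (C.abs_esec_sub_le i hxy).trans ?_
    have h1 : (rho R U i).real (Set.Iio x) + (rho R U i).real (Set.Icc x y)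
        = (rho R U i).real (Set.Iic y) := by
      rw [← measureReal_union _ measurableSet_Icc]
      · congr 1
        exact Set.Iio_union_Icc_eq_Iic hxy
      · rw [Set.disjoint_left]
        intro z hz hz2
        exact absurd hz (not_lt.2 hz2.1)
    have h2 : (rho R U i).real (Set.Iic x) ≤ (rho R U i).real (Set.Iio y) :=
      measureReal_mono (Set.Iic_subset_Iio.2 hxy')
    simp only [hF]
    linarith
  have hGm : Monotone (fun x => esec R U i x + F x) := by
    intro x y hxy
    have := (abs_le.1 (hinc x y hxy)).1
    show esec R U i x + F x ≤ esec R U i y + F y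
    linarith
  filter_upwards [hFm.ae_differentiableAt, hGm.ae_differentiableAt] with x h1 h2
  have h3 : (fun x => esec R U i x + F x) - F = esec R U i := by
    ext y; simp
  rw [← h3]
  exact h2.sub h1

end Config

/-! ### The profile of the standard lens -/

section

/-- Half the width of the lens whose arcs have radius `r`. -/
def hw (r : ℝ) : ℝ := Real.sqrt 3 / 2 * r

/-- The upper boundary of the lens whose arcs have radius `r`, as a function of the abscissa. -/
def kf (r t : ℝ) : ℝ := Real.sqrt (r ^ 2 - t ^ 2) - r / 2

lemma sqrt3_sq : Real.sqrt 3 ^ 2 = 3 := Real.sq_sqrt (by norm_num)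
lemma sqrt3_lo : (1.73 : ℝ) < Real.sqrt 3 := Real.lt_sqrt_of_sq_lt (by norm_num)
lemma sqrt3_hi : Real.sqrt 3 < (1.74 : ℝ) := by
  rw [Real.sqrt_lt' (by norm_num)]; norm_num

lemma hw_sq (r : ℝ) : hw r ^ 2 = 3 / 4 * r ^ 2 := by
  unfold hw; rw [mul_pow, div_pow, sqrt3_sq]; ring

lemma hw_pos {r : ℝ} (hr : 0 < r) : 0 < hw r := by unfold hw; positivity

lemma hw_lt {r : ℝ} (hr : 0 < r) : hw r < r := by
  unfold hw; nlinarith [sqrt3_hi]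

lemma kf_continuous (r : ℝ) : Continuous (kf r) := by unfold kf; fun_prop

lemma kf_neg (r t : ℝ) : kf r (-t) = kf r t := by simp [kf]

lemma root_ge {r t : ℝ} (hr : 0 < r) (ht : |t| ≤ hw r) : r / 2 ≤ Real.sqrt (r ^ 2 - t ^ 2) := by
  refine Real.le_sqrt_of_sq_le ?_
  have := sq_le_sq' (by linarith [abs_nonneg t, neg_nonpos.2 (abs_nonneg t)]) ht
  rw [sq_abs, hw_sq] at this
  nlinarith

lemma root_sq {r t : ℝ} (hr : 0 < r) (ht : |t| ≤ hw r) :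
    Real.sqrt (r ^ 2 - t ^ 2) ^ 2 = r ^ 2 - t ^ 2 := by
  refine Real.sq_sqrt ?_
  have := sq_le_sq' (by linarith [abs_nonneg t, neg_nonpos.2 (abs_nonneg t)]) ht
  rw [sq_abs, hw_sq] at this
  nlinarith

lemma kf_nonneg {r t : ℝ} (hr : 0 < r) (ht : |t| ≤ hw r) : 0 ≤ kf r t := by
  unfold kf; linarith [root_ge hr ht]

lemma kf_hw {r : ℝ} (hr : 0 < r) : kf r (hw r) = 0 := by
  unfold kf
  rw [hw_sq, show r ^ 2 - 3 / 4 * r ^ 2 = (r / 2) ^ 2 by ring, Real.sqrt_sq (by linarith)]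
  ring

lemma kf_pos {r t : ℝ} (hr : 0 < r) (ht : |t| < hw r) : 0 < kf r t := by
  unfold kf
  have : r / 2 < Real.sqrt (r ^ 2 - t ^ 2) := by
    refine Real.lt_sqrt_of_sq_lt ?_
    have := sq_lt_sq' (by linarith [abs_nonneg t, neg_nonpos.2 (abs_nonneg t)]) ht
    rw [sq_abs, hw_sq] at this
    nlinarith
  linarith

lemma kf_le {r t : ℝ} (hr : 0 < r) : kf r t ≤ r / 2 := by
  unfold kf
  have : Real.sqrt (r ^ 2 - t ^ 2) ≤ r := by
    rw [Real.sqrt_le_left hr.le]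
    nlinarith [sq_nonneg t]
  linarith

lemma kf_lower {r y : ℝ} (hr : 0 < r) (h0 : 0 ≤ y) (hy : y ≤ hw r) :
    (hw r - y) / Real.sqrt 3 ≤ kf r y := by
  have h3 := sqrt3_sq
  have h3p : 0 < Real.sqrt 3 := by positivity
  unfold kf
  rw [le_sub_iff_add_le]
  refine Real.le_sqrt_of_sq_le ?_
  obtain ⟨s, hs⟩ : ∃ s, hw r - y = Real.sqrt 3 * s := ⟨(hw r - y) / Real.sqrt 3, by field_simp⟩
  rw [hs, mul_div_cancel_left₀ _ h3p.ne']
  have hys : y = Real.sqrt 3 * (r / 2 - s) := by unfold hw at hs; linarith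
  have hs0 : 0 ≤ s := by
    have : 0 ≤ Real.sqrt 3 * s := by linarith
    exact nonneg_of_mul_nonneg_right this h3p
  have hs1 : s ≤ r / 2 := by
    have : 0 ≤ Real.sqrt 3 * (r / 2 - s) := by linarith
    linarith [nonneg_of_mul_nonneg_right this h3p]
  rw [hys, mul_pow, h3]
  nlinarith

lemma kf_upper {r y : ℝ} (hr : 0 < r) (hy : y ≤ hw r) :
    kf r y ≤ Real.sqrt 3 * (hw r - y) := by
  have h3 := sqrt3_sq
  have h3p : 0 < Real.sqrt 3 := by positivity
  unfold kf
  rw [sub_le_iff_le_add, Real.sqrt_le_left (by nlinarith)]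
  obtain ⟨s, hs⟩ : ∃ s, hw r - y = s := ⟨_, rfl⟩
  have hys : y = Real.sqrt 3 / 2 * r - s := by unfold hw at hs; linarith
  rw [hs, hys]
  nlinarith [sq_nonneg s]

lemma kf_anti {r s t : ℝ} (hs : 0 ≤ s) (hst : s ≤ t) : kf r t ≤ kf r s := by
  unfold kf
  have : Real.sqrt (r ^ 2 - t ^ 2) ≤ Real.sqrt (r ^ 2 - s ^ 2) :=
    Real.sqrt_le_sqrt (by nlinarith)
  linarith

lemma kf_lip {r s t : ℝ} (hr : 0 < r) (hs : |s| ≤ hw r) (ht : |t| ≤ hw r) :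
    |kf r s - kf r t| ≤ Real.sqrt 3 * |s - t| := by
  have h1 := root_ge hr hs
  have h2 := root_ge hr ht
  have h3 := root_sq hr hs
  have h4 := root_sq hr ht
  unfold kf
  have e1 : Real.sqrt (r ^ 2 - s ^ 2) - r / 2 - (Real.sqrt (r ^ 2 - t ^ 2) - r / 2)
      = (t - s) * (t + s) / (Real.sqrt (r ^ 2 - s ^ 2) + Real.sqrt (r ^ 2 - t ^ 2)) := by
    rw [eq_div_iff (by linarith)]
    linear_combination h3 - h4
  rw [e1, abs_div, abs_mul, abs_of_pos (show 0 < Real.sqrt (r ^ 2 - s ^ 2) +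
    Real.sqrt (r ^ 2 - t ^ 2) by linarith), div_le_iff₀ (by linarith), abs_sub_comm]
  have h5 : |t + s| ≤ Real.sqrt 3 * r := by
    refine (abs_add_le _ _).trans ?_
    unfold hw at hs ht
    linarith
  have h6 : |t + s| ≤ Real.sqrt 3 * (Real.sqrt (r ^ 2 - s ^ 2) + Real.sqrt (r ^ 2 - t ^ 2)) :=
    h5.trans (mul_le_mul_of_nonneg_left (by linarith) (Real.sqrt_nonneg _))
  calc |s - t| * |t + s| ≤ |s - t| * (Real.sqrt 3 *
        (Real.sqrt (r ^ 2 - s ^ 2) + Real.sqrt (r ^ 2 - t ^ 2))) :=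
        mul_le_mul_of_nonneg_left h6 (abs_nonneg _)
    _ = _ := by ring

/-- Half the area of the lens. -/
lemma integral_kf {r : ℝ} (hr : 0 < r) :
    ∫ t in (-hw r)..hw r, kf r t = r ^ 2 * (2 * Real.pi / 3 - Real.sqrt 3 / 2) / 2 := by
  have ha := hw_pos hr
  have hd : ∀ t ∈ Set.uIcc (-hw r) (hw r), HasDerivAt
      (fun t => (t * Real.sqrt (r ^ 2 - t ^ 2) + r ^ 2 * Real.arcsin (t / r)) / 2 - r / 2 * t)
      (kf r t) t := by
    intro t ht
    rw [Set.uIcc_of_le (by linarith)] at ht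
    have ht' : |t| ≤ hw r := abs_le.2 ht
    have hroot := root_ge hr ht'
    have hsq := root_sq hr ht'
    have hpos : 0 < Real.sqrt (r ^ 2 - t ^ 2) := by linarith
    have hne : r ^ 2 - t ^ 2 ≠ 0 := fun h => by rw [h, Real.sqrt_zero] at hpos; exact lt_irrefl _ hpos
    have hlt := abs_lt.1 (ht'.trans_lt (hw_lt hr))
    have h1 : HasDerivAt (fun t => Real.sqrt (r ^ 2 - t ^ 2))
        (-(2 * t) / (2 * Real.sqrt (r ^ 2 - t ^ 2))) t := by
      refine HasDerivAt.sqrt ?_ hne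
      simpa using ((hasDerivAt_id t).pow 2).const_sub (r ^ 2)
    have h2 : HasDerivAt (fun t => Real.arcsin (t / r))
        (1 / Real.sqrt (1 - (t / r) ^ 2) * (1 / r)) t := by
      refine HasDerivAt.comp t (Real.hasDerivAt_arcsin ?_ ?_) ((hasDerivAt_id t).div_const r)
      · have : -1 < t / r := by rw [lt_div_iff₀ hr]; linarith [hlt.1]
        exact this.ne'
      · have : t / r < 1 := by rw [div_lt_iff₀ hr]; linarith [hlt.2]
        exact this.ne
    have h3 : Real.sqrt (1 - (t / r) ^ 2) = Real.sqrt (r ^ 2 - t ^ 2) / r := by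
      rw [show 1 - (t / r) ^ 2 = (r ^ 2 - t ^ 2) / r ^ 2 by field_simp,
        Real.sqrt_div' _ (sq_nonneg r), Real.sqrt_sq hr.le]
    have h4 := ((((hasDerivAt_id t).mul h1).add (h2.const_mul (r ^ 2))).div_const 2).sub
      ((hasDerivAt_id t).const_mul (r / 2))
    refine h4.congr_deriv ?_
    rw [h3]
    unfold kf
    simp only [id_eq]
    field_simp
    nlinarith
  rw [intervalIntegral.integral_eq_sub_of_hasDerivAt hd ((kf_continuous r).intervalIntegrable _ _)]
  have e1 : Real.arcsin (hw r / r) = Real.pi / 3 := by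
    rw [hw, mul_div_assoc, div_self hr.ne', mul_one, ← Real.sin_pi_div_three]
    exact Real.arcsin_sin (by linarith [Real.pi_pos]) (by linarith [Real.pi_pos])
  have e2 : Real.sqrt (r ^ 2 - hw r ^ 2) = r / 2 := by
    have := kf_hw hr; unfold kf at this; linarith
  rw [neg_div, Real.arcsin_neg, e1, neg_sq, e2]
  unfold hw
  ring

/-- Derivative of `kf`, up to sign: the slope of the arc. -/
def kslope (r t : ℝ) : ℝ := t / Real.sqrt (r ^ 2 - t ^ 2)

lemma kslope_neg (r t : ℝ) : kslope r (-t) = -kslope r t := by simp [kslope, neg_div]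

lemma kslope_abs_le {r t : ℝ} (hr : 0 < r) (ht : |t| ≤ hw r) : |kslope r t| ≤ Real.sqrt 3 := by
  have h := root_ge hr ht
  unfold kslope
  rw [abs_div, abs_of_nonneg (Real.sqrt_nonneg _), div_le_iff₀ (by linarith)]
  refine ht.trans ?_
  unfold hw
  nlinarith [Real.sqrt_nonneg 3]

lemma kslope_nonneg {r t : ℝ} (ht : 0 ≤ t) : 0 ≤ kslope r t := div_nonneg ht (Real.sqrt_nonneg _)

lemma kslope_ge {r t : ℝ} (hr : 0 < r) (h0 : 0 ≤ t) (ht : t ≤ hw r) : t / r ≤ kslope r t := by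
  have h := root_ge hr (abs_le.2 ⟨by linarith [hw_pos hr], ht⟩)
  unfold kslope
  refine div_le_div_of_nonneg_left h0 (by linarith) ?_
  have := kf_le (t := t) hr
  unfold kf at this; linarith

/-- The correction that keeps the perturbed unit field `(α₀ + s, γ)` in the unit disc. -/
lemma gamma_disc {α g s : ℝ} (h1 : α ^ 2 + g ^ 2 = 1) (hg : 1 / 2 ≤ g) (hs : |s| ≤ 1 / 20) :
    (g - α / g * s - 8 * s ^ 2) ^ 2 + (α + s) ^ 2 ≤ 1 := by
  obtain ⟨q, hq⟩ : ∃ q, α / g = q := ⟨_, rfl⟩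
  have hα : α = q * g := by rw [← hq]; field_simp
  rw [hq]
  have hs' := abs_le.1 hs
  have hq2 : 1 + q ^ 2 ≤ 4 := by
    have h2 : (1 + q ^ 2) * g ^ 2 = 1 := by rw [hα] at h1; linarith
    have h3 : (1 + q ^ 2) * (1 / 4) ≤ (1 + q ^ 2) * g ^ 2 :=
      mul_le_mul_of_nonneg_left (by nlinarith) (by positivity)
    linarith
  have hqs : 16 * q * s ≤ 2 := by nlinarith [sq_nonneg (q - 16 * s), sq_nonneg (q + s)]
  have hs2 : s ^ 2 ≤ 1 / 400 := by nlinarith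
  have e : (g - q * s - 8 * s ^ 2) ^ 2 + (α + s) ^ 2
      = (α ^ 2 + g ^ 2) + s ^ 2 * (1 + q ^ 2 - 16 * g + 64 * s ^ 2 + 16 * q * s)
        + 2 * s * (α - q * g) := by ring
  rw [e, h1, hα]
  have : s ^ 2 * (1 + q ^ 2 - 16 * g + 64 * s ^ 2 + 16 * q * s) ≤ 0 :=
    mul_nonpos_of_nonneg_of_nonpos (sq_nonneg _) (by linarith)
  linarith

/-! ### Transport of the profile onto the lens profile -/

section

/-- `τ` is the monotone map transporting the density `h` on the line to the density `kf r` on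
`[-hw r, hw r]`. -/
structure Transport (r R : ℝ) (h τ : ℝ → ℝ) : Prop where
  hr : 0 < r
  hR : 0 < R
  meas : Measurable h
  nonneg : ∀ x, 0 ≤ h x
  bdd : ∀ x, h x ≤ R + 1
  out : ∀ x, R < |x| → h x = 0
  mono : Monotone τ
  abs_le : ∀ x, |τ x| ≤ hw r
  left : ∀ x, x ≤ -R → τ x = -hw r
  right : ∀ x, R ≤ x → τ x = hw r
  eq : ∀ x y, ∫ t in τ x..τ y, kf r t = ∫ t in x..y, h t

lemma integrable_of_out {R B : ℝ} {h : ℝ → ℝ} (hm : Measurable h) (hb : ∀ x, |h x| ≤ B)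
    (ho : ∀ x, R < |x| → h x = 0) : Integrable h := by
  have h1 : h = Set.indicator (Set.Icc (-R) R) h := by
    ext x
    by_cases hx : x ∈ Set.Icc (-R) R
    · rw [Set.indicator_of_mem hx]
    · rw [Set.indicator_of_notMem hx]
      refine ho x ?_
      by_contra! h2
      exact hx (abs_le.1 h2)
  rw [h1, integrable_indicator_iff measurableSet_Icc]
  exact Measure.integrableOn_of_bounded (M := B) (by simp) hm.aestronglyMeasurable
    (Filter.Eventually.of_forall hb)

lemma kf_int_pos {r y z : ℝ} (hr : 0 < r) (hy : -hw r ≤ y) (hyz : y < z) (hz : z ≤ hw r) :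
    0 < ∫ t in y..z, kf r t :=
  intervalIntegral.intervalIntegral_pos_of_pos_on ((kf_continuous r).intervalIntegrable _ _)
    (fun x hx => kf_pos hr (abs_lt.2 ⟨by linarith [hx.1], by linarith [hx.2]⟩)) hyz

lemma integral_out {R : ℝ} {h : ℝ → ℝ} (ho : ∀ x, R < |x| → h x = 0) {x y : ℝ}
    (hxy : (R ≤ x ∧ R ≤ y) ∨ (x ≤ -R ∧ y ≤ -R)) :
    ∫ t in x..y, h t = 0 := by
  have h0 : ∀ᵐ t : ℝ, t ≠ R ∧ t ≠ -R := by
    have : ∀ᵐ t : ℝ, t ≠ R := by simp [ae_iff]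
    have : ∀ᵐ t : ℝ, t ≠ -R := by simp [ae_iff]
    filter_upwards [‹∀ᵐ t : ℝ, t ≠ R›, this] with t h1 h2 using ⟨h1, h2⟩
  refine intervalIntegral.integral_zero_ae ?_
  filter_upwards [h0] with t ht hmem
  apply ho
  rw [Set.mem_uIoc] at hmem
  rcases hxy with ⟨h1, h2⟩ | ⟨h1, h2⟩
  · exact lt_abs.2 (Or.inl (lt_of_le_of_ne (by rcases hmem with h | h <;> linarith) ht.1.symm))
  · refine lt_abs.2 (Or.inr ?_)
    have : t < -R := lt_of_le_of_ne (by rcases hmem with h | h <;> linarith) ht.2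
    linarith

/-- The primitives of `h` and of `kf r` have the same range, and the latter is strictly increasing
on `[-hw r, hw r]`; the transport map is the inverse of the latter composed with the former. -/
lemma exists_transport {r R : ℝ} (hr : 0 < r) (hR : 0 < R) {h : ℝ → ℝ} (hm : Measurable h)
    (h0 : ∀ x, 0 ≤ h x) (hB : ∀ x, h x ≤ R + 1) (ho : ∀ x, R < |x| → h x = 0)
    (hint : ∫ x, h x = ∫ t in (-hw r)..hw r, kf r t) : ∃ τ, Transport r R h τ := by
  have ha := hw_pos hr
  have hI : Integrable h := integrable_of_out (B := R + 1) hm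
    (fun x => by rw [abs_of_nonneg (h0 x)]; exact hB x) ho
  have hII : ∀ x y, IntervalIntegrable h volume x y := fun x y => hI.intervalIntegrable
  have hKI : ∀ x y, IntervalIntegrable (kf r) volume x y := fun x y =>
    (kf_continuous r).intervalIntegrable _ _
  set M : ℝ → ℝ := fun x => ∫ t in (-R)..x, h t with hM
  set G : ℝ → ℝ := fun y => ∫ t in (-hw r)..y, kf r t with hG
  have htot : M R = G (hw r) := by
    simp only [hM, hG]
    rw [← hint, intervalIntegral.integral_of_le (by linarith), setIntegral_eq_integral_of_ae_compl_eq_zero]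
    have h1 : ∀ᵐ t : ℝ, t ≠ -R := by simp [ae_iff]
    filter_upwards [h1] with t ht hmem
    apply ho
    by_contra! h2
    have h3 := abs_le.1 h2
    exact hmem ⟨lt_of_le_of_ne h3.1 ht.symm, h3.2⟩
  have hMm : Monotone M := by
    intro x y hxy
    have : M y - M x = ∫ t in x..y, h t := intervalIntegral.integral_interval_sub_left (hII _ _)
      (hII _ _)
    have h2 : 0 ≤ ∫ t in x..y, h t := intervalIntegral.integral_nonneg hxy fun t _ => h0 t
    linarith
  have hM0 : ∀ x, x ≤ -R → M x = 0 := fun x hx => integral_out ho (Or.inr ⟨le_rfl, hx⟩)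
  have hM1 : ∀ x, R ≤ x → M x = M R := by
    intro x hx
    have : M x - M R = ∫ t in R..x, h t := intervalIntegral.integral_interval_sub_left (hII _ _)
      (hII _ _)
    rw [integral_out ho (Or.inl ⟨le_rfl, hx⟩)] at this
    linarith
  have hMmem : ∀ x, M x ∈ Set.Icc (G (-hw r)) (G (hw r)) := by
    intro x
    have hG0 : G (-hw r) = 0 := by simp [hG]
    rw [hG0, ← htot, ← hM1 _ (le_max_right x R), ← hM0 _ (min_le_right x (-R))]
    exact ⟨hMm (min_le_left _ _), hMm (le_max_left _ _)⟩
  have hGc : Continuous G := intervalIntegral.continuous_primitive hKI _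
  have hex : ∀ x, ∃ y ∈ Set.Icc (-hw r) (hw r), G y = M x := fun x =>
    intermediate_value_Icc (by linarith) hGc.continuousOn (hMmem x)
  have hGs : ∀ y z, -hw r ≤ y → y < z → z ≤ hw r → G y < G z := by
    intro y z hy hyz hz
    have : G z - G y = ∫ t in y..z, kf r t := intervalIntegral.integral_interval_sub_left
      (hKI _ _) (hKI _ _)
    linarith [kf_int_pos hr hy hyz hz]
  choose τ hτ hτM using hex
  have hinj : ∀ y z, y ∈ Set.Icc (-hw r) (hw r) → z ∈ Set.Icc (-hw r) (hw r) → G y = G z →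
      y = z := by
    intro y z hy hz hyz
    rcases lt_trichotomy y z with h | h | h
    · exact absurd hyz (hGs y z hy.1 h hz.2).ne
    · exact h
    · exact absurd hyz (hGs z y hz.1 h hy.2).ne'
  refine ⟨τ, ⟨hr, hR, hm, h0, hB, ho, ?_, fun x => abs_le.2 (hτ x), ?_, ?_, ?_⟩⟩
  · intro x y hxy
    by_contra! hlt
    have := hGs _ _ (hτ y).1 hlt (hτ x).2
    rw [hτM, hτM] at this
    exact absurd (hMm hxy) (not_le.2 this)
  · intro x hx
    refine hinj _ _ (hτ x) ⟨le_rfl, by linarith⟩ ?_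
    rw [hτM, hM0 x hx]; simp [hG]
  · intro x hx
    refine hinj _ _ (hτ x) ⟨by linarith, le_rfl⟩ ?_
    rw [hτM, hM1 x hx, htot]
  · intro x y
    rw [← intervalIntegral.integral_interval_sub_left (hKI (-hw r) _) (hKI (-hw r) _),
      ← intervalIntegral.integral_interval_sub_left (hII (-R) y) (hII (-R) x)]
    have h1 := hτM x
    have h2 := hτM y
    simp only [hG, hM] at h1 h2
    rw [h1, h2]

namespace Transport

variable {r R : ℝ} {h τ : ℝ → ℝ}

lemma integrable (T : Transport r R h τ) : Integrable h :=
  integrable_of_out (B := R + 1) T.meas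
    (fun x => by rw [abs_of_nonneg (T.nonneg x)]; exact T.bdd x) T.out

/-- The transport problem is symmetric under reflection. -/
lemma reflect (T : Transport r R h τ) :
    Transport r R (fun x => h (-x)) (fun x => -τ (-x)) where
  hr := T.hr
  hR := T.hR
  meas := T.meas.comp measurable_neg
  nonneg x := T.nonneg _
  bdd x := T.bdd _
  out x hx := T.out _ (by rwa [abs_neg])
  mono x y hxy := neg_le_neg (T.mono (neg_le_neg hxy))
  abs_le x := by rw [abs_neg]; exact T.abs_le _
  left x hx := by rw [T.right _ (by linarith)]
  right x hx := by rw [T.left _ (by linarith), neg_neg]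
  eq x y := by
    have h1 := intervalIntegral.integral_comp_neg (a := x) (b := y) (f := h)
    rw [h1, ← T.eq]
    have h2 := intervalIntegral.integral_comp_neg (a := -τ (-x)) (b := -τ (-y)) (f := kf r)
    simp only [kf_neg, neg_neg] at h2
    exact h2

lemma integral_pos (T : Transport r R h τ) {A : Set ℝ} (hA : IsOpen A)
    (hpos : ∀ x, x ∈ A → 0 < h x) {x y z : ℝ} (hz : z ∈ A) (hxz : x ≤ z) (hzy : z ≤ y)
    (hxy : x < y) : 0 < ∫ t in x..y, h t := by
  rw [intervalIntegral.integral_of_le hxy.le,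
    setIntegral_pos_iff_support_of_nonneg_ae
      (Filter.Eventually.of_forall T.nonneg) T.integrable.integrableOn]
  obtain ⟨ε, hε, hb⟩ := Metric.isOpen_iff.1 hA z hz
  have hsub : Set.Ioo (max x (z - ε)) (min y (z + ε)) ⊆ Function.support h ∩ Set.Ioc x y := by
    intro t ht
    have h1 := (max_lt_iff.1 ht.1)
    have h2 := (lt_min_iff.1 ht.2)
    refine ⟨(hpos t (hb ?_)).ne', h1.1, h2.1.le⟩
    rw [Metric.mem_ball, Real.dist_eq, abs_lt]
    exact ⟨by linarith, by linarith⟩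
  refine lt_of_lt_of_le ?_ (measure_mono hsub)
  rw [Real.volume_Ioo, ENNReal.ofReal_pos, sub_pos]
  exact max_lt_iff.2 ⟨lt_min_iff.2 ⟨hxy, by linarith⟩, lt_min_iff.2 ⟨by linarith, by linarith⟩⟩

/-- Over the open set where the profile is positive, the transport stays away from the tips. -/
lemma abs_lt (T : Transport r R h τ) {A : Set ℝ} (hA : IsOpen A)
    (hpos : ∀ x, x ∈ A → 0 < h x) {x : ℝ} (hx : x ∈ A) : |τ x| < hw r := by
  have hR := T.hR
  have hxR : |x| ≤ R := by
    by_contra! h1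
    have := hpos x hx
    rw [T.out x h1] at this
    exact lt_irrefl _ this
  have hx' := _root_.abs_le.1 hxR
  refine lt_of_le_of_ne (T.abs_le x) fun hab => ?_
  have hab' := eq_or_eq_neg_of_abs_eq hab
  rcases hab' with h1 | h1
  · have := T.integral_pos hA hpos hx le_rfl (show x ≤ R + 1 by linarith) (by linarith)
    rw [← T.eq, h1, T.right (R + 1) (by linarith), intervalIntegral.integral_same] at this
    exact lt_irrefl _ this
  · have := T.integral_pos hA hpos hx (show -(R + 1) ≤ x by linarith) le_rfl (by linarith)
    rw [← T.eq, h1, T.left (-(R + 1)) (by linarith), intervalIntegral.integral_same] at this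
    exact lt_irrefl _ this

lemma ae_hasDerivAt_mass (T : Transport r R h τ) :
    ∀ᵐ x, ∀ c, HasDerivAt (fun x => ∫ t in c..x, h t) (h x) x :=
  LocallyIntegrable.ae_hasDerivAt_integral T.integrable.locallyIntegrable

/-- The transport equation `τ' = h / kf r τ`. -/
lemma ae_hasDerivAt (T : Transport r R h τ) :
    ∀ᵐ x, |τ x| < hw r → HasDerivAt τ (h x / kf r (τ x)) x := by
  filter_upwards [T.mono.ae_differentiableAt, T.ae_hasDerivAt_mass] with x h1 h2 hx
  have hk := kf_pos T.hr hx
  have h3 := h2 0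
  have h4 : HasDerivAt (fun y => ∫ t in τ 0..y, kf r t) (kf r (τ x)) (τ x) :=
    ((kf_continuous r).integral_hasStrictDerivAt _ _).hasDerivAt
  have h5 := h4.comp x h1.hasDerivAt
  have h6 : ((fun y => ∫ t in τ 0..y, kf r t) ∘ τ) = fun x => ∫ t in (0:ℝ)..x, h t := by
    ext y; exact T.eq 0 y
  rw [h6] at h5
  have h7 := h5.unique h3
  refine h1.hasDerivAt.congr_deriv ?_
  rw [← h7]; field_simp

end Transport

/-! ### The calibration inequality -/

section

/-- Half the length of the vertical sections of `U 0`. -/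
def hh (R : ℝ) (U : Fin 3 → Set Plane) (x : ℝ) : ℝ := esec R U 0 x / 2

/-- The mean height of the interface between `U 1` and `U 2` over `x`
(the height of the midpoint of the section of `U 0`, when there is one). -/
def bb (R : ℝ) (U : Fin 3 → Set Plane) (x : ℝ) : ℝ := (esec R U 2 x - esec R U 1 x) / 2

/-- The distribution along the `x`-axis of twice the total interface length. -/
def tot (R : ℝ) (U : Fin 3 → Set Plane) : Measure ℝ := rho R U 0 + rho R U 1 + rho R U 2

/-- The set of vertical sections along which the three sets are not stacked in order. -/
def bad (U : Fin 3 → Set Plane) : Set ℝ := badUp U ∪ badDn U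

lemma window_lintegral (μ : Measure ℝ) [IsFiniteMeasure μ] (δ : ℝ) :
    ∫⁻ x, μ (Set.Icc x (x + δ)) = ENNReal.ofReal δ * μ Set.univ := by
  have hS : MeasurableSet {z : ℝ × ℝ | z.1 ≤ z.2 ∧ z.2 ≤ z.1 + δ} :=
    (measurableSet_le measurable_fst measurable_snd).inter
      (measurableSet_le measurable_snd (measurable_fst.add_const δ))
  have h1 := Measure.prod_apply (μ := (volume : Measure ℝ)) (ν := μ) hS
  have h2 := Measure.prod_apply_symm (μ := (volume : Measure ℝ)) (ν := μ) hS
  have h3 : ∀ y : ℝ, volume ((fun x => (x, y)) ⁻¹' {z : ℝ × ℝ | z.1 ≤ z.2 ∧ z.2 ≤ z.1 + δ})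
      = ENNReal.ofReal δ := by
    intro y
    have : (fun x => (x, y)) ⁻¹' {z : ℝ × ℝ | z.1 ≤ z.2 ∧ z.2 ≤ z.1 + δ} = Set.Icc (y - δ) y := by
      ext x
      simp only [Set.mem_preimage, Set.mem_ofPred_eq, Set.mem_Icc]
      constructor <;> rintro ⟨h, h'⟩ <;> constructor <;> linarith
    rw [this, Real.volume_Icc]; congr 1; ring
  simp only [h3, lintegral_const] at h2
  rw [← h2, h1]
  rfl

lemma window_measurable (μ : Measure ℝ) [IsFiniteMeasure μ] (δ : ℝ) :
    Measurable fun x => μ (Set.Icc x (x + δ)) := by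
  have hS : MeasurableSet {z : ℝ × ℝ | z.1 ≤ z.2 ∧ z.2 ≤ z.1 + δ} :=
    (measurableSet_le measurable_fst measurable_snd).inter
      (measurableSet_le measurable_snd (measurable_fst.add_const δ))
  exact measurable_measure_prodMk_left hS

lemma window_integrable (μ : Measure ℝ) [IsFiniteMeasure μ] (δ : ℝ) :
    Integrable fun x => μ.real (Set.Icc x (x + δ)) := by
  refine integrable_toReal_of_lintegral_ne_top (window_measurable μ δ).aemeasurable ?_
  rw [window_lintegral]
  exact ENNReal.mul_ne_top ENNReal.ofReal_ne_top (measure_ne_top _ _)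

lemma window_integral (μ : Measure ℝ) [IsFiniteMeasure μ] {δ : ℝ} (hδ : 0 ≤ δ) :
    ∫ x, μ.real (Set.Icc x (x + δ)) = δ * μ.real Set.univ := by
  unfold Measure.real
  rw [integral_toReal (window_measurable μ δ).aemeasurable
    (Filter.Eventually.of_forall fun x => measure_lt_top _ _), window_lintegral,
    ENNReal.toReal_mul, ENNReal.toReal_ofReal hδ]

namespace Config

variable {R : ℝ} {U : Fin 3 → Set Plane}

lemma finite_tot (C : Config R U) : IsFiniteMeasure (tot R U) := by
  have := C.finite_rho
  unfold tot
  infer_instance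

lemma tot_real (C : Config R U) (S : Set ℝ) :
    (tot R U).real S = (rho R U 0).real S + (rho R U 1).real S + (rho R U 2).real S := by
  have := C.finite_rho
  unfold tot
  rw [measureReal_add_apply, measureReal_add_apply]

lemma isOpen_bad (C : Config R U) : IsOpen (bad U) := C.isOpen_badUp.union C.isOpen_badDn

lemma bad_abs_le (C : Config R U) {x : ℝ} (hx : x ∈ bad U) : |x| ≤ R :=
  hx.elim C.badUp_abs_le C.badDn_abs_le

lemma hh_measurable (C : Config R U) : Measurable (hh R U) := (C.measurable_esec 0).div_const 2

lemma bb_measurable (C : Config R U) : Measurable (bb R U) :=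
  ((C.measurable_esec 2).sub (C.measurable_esec 1)).div_const 2

lemma hh_nonneg (R : ℝ) (U : Fin 3 → Set Plane) (x : ℝ) : 0 ≤ hh R U x :=
  div_nonneg (esec_nonneg 0 x) (by norm_num)

lemma hh_le (C : Config R U) (x : ℝ) : hh R U x ≤ R + 1 := by
  unfold hh; linarith [C.esec_le 0 x]

lemma hh_out (C : Config R U) {x : ℝ} (hx : R < |x|) : hh R U x = 0 := by
  unfold hh; rw [C.esec_zero_out hx]; simp

lemma bb_out (C : Config R U) {x : ℝ} (hx : R < |x|) : bb R U x = 0 := by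
  unfold bb; rw [C.esec_one_out hx, C.esec_two_out hx]; simp

lemma bb_abs_le (C : Config R U) (x : ℝ) : |bb R U x| ≤ R + 1 := by
  unfold bb
  have h1 := C.esec_le 1 x
  have h2 := C.esec_le 2 x
  have h3 := esec_nonneg (R := R) (U := U) 1 x
  have h4 := esec_nonneg (R := R) (U := U) 2 x
  rw [abs_le]; constructor <;> linarith

lemma hh_pos (C : Config R U) {x : ℝ} : 0 < hh R U x ↔ x ∈ shadow U := by
  rw [← C.esec_zero_pos]; unfold hh; constructor <;> intro h <;> linarith

lemma hh_eq_zero (C : Config R U) {x : ℝ} (hx : x ∉ shadow U) : hh R U x = 0 :=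
  le_antisymm (not_lt.1 fun h => hx (C.hh_pos.1 h)) (hh_nonneg R U x)

lemma hh_integrable (C : Config R U) : Integrable (hh R U) :=
  integrable_of_out (B := R + 1) C.hh_measurable
    (fun x => by rw [abs_of_nonneg (hh_nonneg R U x)]; exact C.hh_le x) fun _ h => C.hh_out h

lemma bb_integrable (C : Config R U) : Integrable (bb R U) :=
  integrable_of_out (B := R + 1) C.bb_measurable C.bb_abs_le fun _ h => C.bb_out h

lemma hh_deriv_zero (C : Config R U) {x : ℝ} (hx : x ∉ shadow U)
    (hd : DifferentiableAt ℝ (esec R U 0) x) : HasDerivAt (hh R U) 0 x := by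
  have h1 : DifferentiableAt ℝ (hh R U) x := hd.div_const 2
  have hmin : IsLocalMin (hh R U) x := by
    refine Filter.Eventually.of_forall fun y => ?_
    show hh R U x ≤ hh R U y
    rw [C.hh_eq_zero hx]; exact hh_nonneg R U y
  have := h1.hasDerivAt
  rwa [hmin.deriv_eq_zero] at this

/-- Over short intervals the total frontier measure dominates the variation of the sections. -/
lemma window_ge (C : Config R U) {x δ α β : ℝ} (hδ : 0 ≤ δ) (hαβ : |α| + |β| ≤ 1)
    (hx : volume {y | pt x y ∉ ⋃ i, U i} = 0) (hxδ : volume {y | pt (x + δ) y ∉ ⋃ i, U i} = 0) :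
    2 * α * (hh R U (x + δ) - hh R U x) + β * (bb R U (x + δ) - bb R U x)
      ≤ (tot R U).real (Set.Icc x (x + δ)) / 2 := by
  have e1 := C.esec_sum hx
  have e2 := C.esec_sum hxδ
  rw [C.tot_real]
  have h0 := C.abs_esec_sub_le 0 (show x ≤ x + δ by linarith)
  have h1 := C.abs_esec_sub_le 1 (show x ≤ x + δ by linarith)
  have h2 := C.abs_esec_sub_le 2 (show x ≤ x + δ by linarith)
  have key : ∀ c t s : ℝ, |c| ≤ 1 → |t| ≤ s → c * t ≤ s := fun c t s hc ht =>
    (le_abs_self _).trans (by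
      rw [abs_mul]
      exact (mul_le_of_le_one_left (abs_nonneg _) hc).trans ht)
  have hα : |α| ≤ 1 := by linarith [abs_nonneg β]
  have hab1 : |(-(α + β))| ≤ 1 := by rw [abs_neg]; exact (abs_add_le _ _).trans hαβ
  have hab2 : |(-α + β)| ≤ 1 := (abs_add_le _ _).trans (by rwa [abs_neg])
  have k0 := key _ _ _ hα h0
  have k1 := key _ _ _ hab1 h1
  have k2 := key _ _ _ hab2 h2
  unfold hh bb
  have e3 : (esec R U 0 (x + δ) - esec R U 0 x)
    = -(esec R U 1 (x + δ) - esec R U 1 x) - (esec R U 2 (x + δ) - esec R U 2 x) := by linarith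
  have e4 : α * (esec R U 0 (x + δ) - esec R U 0 x)
    = -(α * (esec R U 1 (x + δ) - esec R U 1 x)) - α * (esec R U 2 (x + δ) - esec R U 2 x) := by
    rw [e3]; ring
  linarith

/-- The number of crossings of the frontiers of `U 1` and `U 2` over a section. -/
lemma crossings (C : Config R U) {x : ℝ} (hx : |x| < R + 1) :
    ∃ δ0 > 0, ∃ cu cd : ℝ, 1 ≤ cu ∧ 1 ≤ cd ∧ (x ∈ bad U → 4 ≤ cu + cd) ∧
      ∀ δ, 0 ≤ δ → δ < δ0 → ∀ g α : ℝ, g ^ 2 + α ^ 2 ≤ 1 →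
        cu * g * δ + α * (esec R U 1 (x + δ) - esec R U 1 x)
          ≤ (rho R U 1).real (Set.Icc x (x + δ)) ∧
        cd * g * δ + α * (esec R U 2 (x + δ) - esec R U 2 x)
          ≤ (rho R U 2).real (Set.Icc x (x + δ)) := by
  have hx' := abs_lt.1 hx
  have H1 : ∃ δ0 > 0, ∃ cu : ℝ, 1 ≤ cu ∧ (x ∈ badUp U → 3 ≤ cu) ∧
      ∀ δ, 0 ≤ δ → δ < δ0 → ∀ g α : ℝ, g ^ 2 + α ^ 2 ≤ 1 →
        cu * g * δ + α * (esec R U 1 (x + δ) - esec R U 1 x)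
          ≤ (rho R U 1).real (Set.Icc x (x + δ)) := by
    by_cases hb : x ∈ badUp U
    · obtain ⟨δ0, h0, h⟩ := C.rho_one_bad hb
      exact ⟨δ0, h0, 3, by norm_num, fun _ => le_rfl, h⟩
    · refine ⟨R + 1 - x, by linarith, 1, le_rfl, fun h => absurd h hb, ?_⟩
      intro δ h1 h2 g α hg
      rw [one_mul]
      exact C.rho_one_ge hg h1 (by linarith) (by linarith)
  have H2 : ∃ δ0 > 0, ∃ cd : ℝ, 1 ≤ cd ∧ (x ∈ badDn U → 3 ≤ cd) ∧
      ∀ δ, 0 ≤ δ → δ < δ0 → ∀ g α : ℝ, g ^ 2 + α ^ 2 ≤ 1 →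
        cd * g * δ + α * (esec R U 2 (x + δ) - esec R U 2 x)
          ≤ (rho R U 2).real (Set.Icc x (x + δ)) := by
    by_cases hb : x ∈ badDn U
    · obtain ⟨δ0, h0, h⟩ := C.rho_two_bad hb
      exact ⟨δ0, h0, 3, by norm_num, fun _ => le_rfl, h⟩
    · refine ⟨R + 1 - x, by linarith, 1, le_rfl, fun h => absurd h hb, ?_⟩
      intro δ h1 h2 g α hg
      rw [one_mul]
      exact C.rho_two_ge hg h1 (by linarith) (by linarith)
  obtain ⟨δ1, h1, cu, hcu, hcu3, hu⟩ := H1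
  obtain ⟨δ2, h2, cd, hcd, hcd3, hd⟩ := H2
  refine ⟨min δ1 δ2, lt_min h1 h2, cu, cd, hcu, hcd, ?_, ?_⟩
  · rintro (h | h)
    · linarith [hcu3 h]
    · linarith [hcd3 h]
  · intro δ hδ0 hδ g α hg
    obtain ⟨ha, hb⟩ := lt_min_iff.1 hδ
    exact ⟨hu δ hδ0 ha g α hg, hd δ hδ0 hb g α hg⟩

open Classical in
/-- Calibration over the shadow of `U 0`: the upper and lower arcs and the two outer fields are
tilted by `α₀ + η`, and by `β` in addition for the outer ones. -/
lemma window_shadow (C : Config R U) {x α₀ g η β : ℝ} (hx : x ∈ shadow U)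
    (hα : α₀ ^ 2 + g ^ 2 = 1) (hg : 1 / 2 ≤ g) (hη : |η| ≤ 1 / 40) (hβ : |β| ≤ 1 / 40)
    (hn : volume {y | pt x y ∉ ⋃ i, U i} = 0) :
    ∃ δ0 > 0, ∀ δ, 0 ≤ δ → δ < δ0 → volume {y | pt (x + δ) y ∉ ⋃ i, U i} = 0 →
      δ * (2 * g - 2 * (α₀ / g) * η - 16 * (η ^ 2 + β ^ 2) + if x ∈ bad U then 1 / 4 else 0)
        + (2 * (α₀ + η) * (hh R U (x + δ) - hh R U x) + β * (bb R U (x + δ) - bb R U x))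
      ≤ (tot R U).real (Set.Icc x (x + δ)) / 2 := by
  have hxR := C.shadow_abs_le hx
  have hxR' := abs_le.1 hxR
  obtain ⟨δ1, h1, cu, cd, hcu, hcd, hbad, hcr⟩ := C.crossings (x := x) (by linarith)
  obtain ⟨y, hy⟩ := hx
  obtain ⟨δ2, h2, hz⟩ := C.rho_zero_ge (x := x) (y := y) (by linarith) (by linarith) hy
  refine ⟨min δ1 δ2, lt_min h1 h2, fun δ hδ hδ0 hnδ => ?_⟩
  obtain ⟨hδ1, hδ2⟩ := lt_min_iff.1 hδ0
  have hs1 : |η| ≤ 1 / 20 := by linarith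
  have hs2 : |η + β| ≤ 1 / 20 := (abs_add_le _ _).trans (by linarith)
  have hs3 : |η - β| ≤ 1 / 20 := (abs_sub _ _).trans (by linarith)
  have d1 := gamma_disc hα hg hs1
  have d2 := gamma_disc hα hg hs2
  have d3 := gamma_disc hα hg hs3
  have hq : |α₀ / g| ≤ 2 := by
    have : |α₀| ≤ 1 := abs_le_one_iff_mul_self_le_one.2 (by nlinarith)
    rw [abs_div, abs_of_pos (by linarith : 0 < g), div_le_iff₀ (by linarith)]
    linarith
  have hlow : ∀ s, |s| ≤ 1 / 20 → 1 / 4 ≤ g - α₀ / g * s - 8 * s ^ 2 := by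
    intro s hs
    have h3 : |α₀ / g * s| ≤ 2 * (1 / 20) := by
      rw [abs_mul]; exact mul_le_mul hq hs (abs_nonneg _) (by norm_num)
    have h4 := (abs_le.1 h3).2
    have h5 : s ^ 2 ≤ (1 / 20) ^ 2 := sq_le_sq' (by linarith [abs_le.1 hs]) (abs_le.1 hs).2
    linarith
  have l2 := hlow _ hs2
  have l3 := hlow _ hs3
  have r0 := hz δ hδ hδ2 _ _ d1
  have r1 := (hcr δ hδ hδ1 (g - α₀ / g * (η + β) - 8 * (η + β) ^ 2) (-(α₀ + (η + β)))
    (by rw [neg_sq, add_comm]; linarith [d2])).1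
  have r2 := (hcr δ hδ hδ1 (g - α₀ / g * (η - β) - 8 * (η - β) ^ 2) (-(α₀ + (η - β)))
    (by rw [neg_sq, add_comm]; linarith [d3])).2
  have e1 := C.esec_sum hn
  have e2 := C.esec_sum hnδ
  have e3 : (esec R U 0 (x + δ) - esec R U 0 x)
    = -(esec R U 1 (x + δ) - esec R U 1 x) - (esec R U 2 (x + δ) - esec R U 2 x) := by linarith
  have e4 : (α₀ + η) * (esec R U 0 (x + δ) - esec R U 0 x)
    = -((α₀ + η) * (esec R U 1 (x + δ) - esec R U 1 x))
      - (α₀ + η) * (esec R U 2 (x + δ) - esec R U 2 x) := by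
    rw [e3]; ring
  have hcross : (if x ∈ bad U then 1 / 4 else 0) * 2
      ≤ (cu - 1) * (g - α₀ / g * (η + β) - 8 * (η + β) ^ 2)
        + (cd - 1) * (g - α₀ / g * (η - β) - 8 * (η - β) ^ 2) := by
    have a1 := mul_le_mul_of_nonneg_left l2 (sub_nonneg.2 hcu)
    have a2 := mul_le_mul_of_nonneg_left l3 (sub_nonneg.2 hcd)
    split_ifs with hb
    · linarith [hbad hb]
    · linarith
  have hcross' := mul_le_mul_of_nonneg_left hcross hδ
  rw [C.tot_real]
  unfold hh bb
  generalize (if x ∈ bad U then (1 / 4 : ℝ) else 0) = c at *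
  generalize α₀ / g = q at *
  have hη2 : 0 ≤ δ * η ^ 2 := mul_nonneg hδ (sq_nonneg _)
  have hβ2 : 0 ≤ δ * β ^ 2 := mul_nonneg hδ (sq_nonneg _)
  linarith

open Classical in
/-- Calibration off the shadow of `U 0`. -/
lemma window_off (C : Config R U) {x β : ℝ} (hx : |x| < R + 1) (hβ : |β| ≤ 1 / 40) :
    ∃ δ0 > 0, ∀ δ, 0 ≤ δ → δ < δ0 →
      δ * (1 - β ^ 2 + if x ∈ bad U then 1 / 4 else 0) + β * (bb R U (x + δ) - bb R U x)
      ≤ (tot R U).real (Set.Icc x (x + δ)) / 2 := by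
  obtain ⟨δ1, h1, cu, cd, hcu, hcd, hbad, hcr⟩ := C.crossings hx
  refine ⟨δ1, h1, fun δ hδ hδ1 => ?_⟩
  have hb2 : β ^ 2 ≤ (1 / 40) ^ 2 := sq_le_sq' (by linarith [abs_le.1 hβ]) (abs_le.1 hβ).2
  have hdisc : (1 - β ^ 2) ^ 2 + β ^ 2 ≤ 1 := by nlinarith [sq_nonneg β]
  have r1 := (hcr δ hδ hδ1 (1 - β ^ 2) (-β) (by simpa using hdisc)).1
  have r2 := (hcr δ hδ hδ1 (1 - β ^ 2) β hdisc).2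
  have hcross : (2 * (1 - β ^ 2) + 2 * (if x ∈ bad U then 1 / 4 else 0))
      ≤ (cu + cd) * (1 - β ^ 2) := by
    split_ifs with hb
    · nlinarith [hbad hb]
    · nlinarith
  have hcross' := mul_le_mul_of_nonneg_left hcross hδ
  have h0 : 0 ≤ (rho R U 0).real (Set.Icc x (x + δ)) := measureReal_nonneg
  rw [C.tot_real]
  unfold bb
  generalize (if x ∈ bad U then (1 / 4 : ℝ) else 0) = c at *
  linarith

end Config

/-! ### The master inequality -/

section

lemma deriv_quant {f : ℝ → ℝ} {f' x e : ℝ} (h : HasDerivAt f f' x) (he : 0 < e) :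
    ∃ δ0 > 0, ∀ δ, |δ| < δ0 → |f (x + δ) - f x - δ * f'| ≤ e * |δ| := by
  have h1 := (hasDerivAt_iff_isLittleO.1 h).def he
  obtain ⟨δ0, h0, h2⟩ := Metric.eventually_nhds_iff.1 h1
  refine ⟨δ0, h0, fun δ hδ => ?_⟩
  have := h2 (y := x + δ) (by simpa using hδ)
  simpa using this

/-- Fatou's lemma for real-valued functions with convergent integrals. -/
lemma fatou_real {f : ℕ → ℝ → ℝ} {g : ℝ → ℝ} {L : ℝ} (hf : ∀ n, Integrable (f n))
    (hnn : ∀ n, 0 ≤ᵐ[volume] f n) (hg : Integrable g)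
    (hlim : ∀ᵐ x, ∀ e : ℝ, 0 < e → ∀ᶠ n in Filter.atTop, g x - e ≤ f n x)
    (hL : Filter.Tendsto (fun n => ∫ x, f n x) Filter.atTop (nhds L)) : ∫ x, g x ≤ L := by
  have hL0 : 0 ≤ L := ge_of_tendsto' hL fun n => integral_nonneg_of_ae (hnn n)
  have h1 : ∫⁻ x, ENNReal.ofReal (g x) ≤ ENNReal.ofReal L := by
    calc ∫⁻ x, ENNReal.ofReal (g x)
        ≤ ∫⁻ x, Filter.liminf (fun n => ENNReal.ofReal (f n x)) Filter.atTop := by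
          refine lintegral_mono_ae ?_
          filter_upwards [hlim] with x hx
          refine ENNReal.le_of_forall_pos_le_add fun e he _ => ?_
          rw [← tsub_le_iff_right]
          refine Filter.le_liminf_of_le (by isBoundedDefault) ?_
          filter_upwards [hx e he] with n hn
          rw [tsub_le_iff_right, ← ENNReal.ofReal_coe_nnreal]
          exact (ENNReal.ofReal_le_ofReal (by linarith)).trans ENNReal.ofReal_add_le
      _ ≤ Filter.liminf (fun n => ∫⁻ x, ENNReal.ofReal (f n x)) Filter.atTop :=
          lintegral_liminf_le' fun n => (hf n).aemeasurable.ennreal_ofReal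
      _ = ENNReal.ofReal L := by
          refine Filter.Tendsto.liminf_eq ?_
          have : (fun n => ∫⁻ x, ENNReal.ofReal (f n x))
              = fun n => ENNReal.ofReal (∫ x, f n x) := by
            ext n
            rw [ofReal_integral_eq_lintegral_ofReal (hf n) (hnn n)]
          rw [this]
          exact ENNReal.tendsto_ofReal hL
  rw [integral_eq_lintegral_pos_part_sub_lintegral_neg_part hg]
  have h2 := ENNReal.toReal_mono ENNReal.ofReal_ne_top h1
  rw [ENNReal.toReal_ofReal hL0] at h2
  have h3 : 0 ≤ (∫⁻ x, ENNReal.ofReal (-g x)).toReal := ENNReal.toReal_nonneg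
  linarith

lemma ae_translate {P : ℝ → Prop} (h : ∀ᵐ x, P x) (c : ℝ) : ∀ᵐ x, P (x + c) :=
  (measurePreserving_add_right volume c).quasiMeasurePreserving.ae h

/-- The difference quotient whose integral is estimated from both sides: the frontier measure of
a window minus the variation of the sections paired with the tilts `η`, `β` and `-τ / r`. -/
def fwin (R : ℝ) (U : Fin 3 → Set Plane) (r : ℝ) (τ η β : ℝ → ℝ) (δ x : ℝ) : ℝ :=
  ((tot R U).real (Set.Icc x (x + δ)) / 2
    - (2 * η x * (hh R U (x + δ) - hh R U x) + β x * (bb R U (x + δ) - bb R U x))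
    + (2 / r) * (τ x * hh R U (x + δ) - hh R U x * τ (x - δ))) / δ

lemma tilt_le {r t : ℝ} (hr : 0 < r) (ht : |t| ≤ hw r) : |t / r| ≤ 0.87 := by
  rw [abs_div, abs_of_pos hr, div_le_iff₀ hr]
  refine ht.trans ?_
  unfold hw
  nlinarith [sqrt3_hi]

namespace Config

variable {R r : ℝ} {U : Fin 3 → Set Plane} {τ η β : ℝ → ℝ}

lemma fwin_nonneg (C : Config R U) (T : Transport r R (hh R U) τ) {x δ : ℝ} (hδ : 0 < δ)
    (hη : |η x| ≤ 1 / 40) (hβ : |β x| ≤ 1 / 40)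
    (hx : volume {y | pt x y ∉ ⋃ i, U i} = 0) (hxδ : volume {y | pt (x + δ) y ∉ ⋃ i, U i} = 0) :
    0 ≤ fwin R U r τ η β δ x := by
  refine div_nonneg ?_ hδ.le
  have h1 := tilt_le T.hr (T.abs_le x)
  have h2 := C.window_ge (α := -(τ x / r) + η x) (β := β x) hδ.le
    (by
      have := abs_add_le (-(τ x / r)) (η x)
      rw [abs_neg] at this
      linarith) hx hxδ
  have h3 : 0 ≤ (2 / r) * (hh R U x * (τ x - τ (x - δ))) :=
    mul_nonneg (by have := T.hr; positivity)
      (mul_nonneg (hh_nonneg R U x) (sub_nonneg.2 (T.mono (by linarith))))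
  have e : (2 / r) * (τ x * hh R U (x + δ) - hh R U x * τ (x - δ))
    = (2 / r) * (hh R U x * (τ x - τ (x - δ))) + 2 * (τ x / r) * (hh R U (x + δ) - hh R U x) := by
    ring
  rw [e]
  linarith

open Classical in
/-- Lower limit of the difference quotients at a point of the shadow. The terms with `d` come from
`a ^ 2 / k ≥ 2 * d * |a| - d ^ 2 * k`, with `a = kf r (τ x) - hh R U x` and `k = kf r (τ x)`. -/
lemma fwin_shadow (C : Config R U) (T : Transport r R (hh R U) τ) {x e : ℝ} (hx : x ∈ shadow U)
    (d : ℝ) (he : 0 < e) (hη : |η x| ≤ 1 / 40) (hβ : |β x| ≤ 1 / 40)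
    (hn : volume {y | pt x y ∉ ⋃ i, U i} = 0)
    (hτ : HasDerivAt τ (hh R U x / kf r (τ x)) x) :
    ∃ δ0 > 0, ∀ δ, 0 < δ → δ < δ0 → volume {y | pt (x + δ) y ∉ ⋃ i, U i} = 0 →
      1 + (2 / r) * (2 * hh R U x + 2 * d * |kf r (τ x) - hh R U x| - d ^ 2 * kf r (τ x))
        + 2 * kslope r (τ x) * η x - 16 * (η x ^ 2 + β x ^ 2) + (if x ∈ bad U then 1 / 4 else 0)
        - e ≤ fwin R U r τ η β δ x := by
  have hr := T.hr
  have hlt := T.abs_lt C.isOpen_shadow (fun x hx => C.hh_pos.2 hx) hx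
  have hk := kf_pos hr hlt
  have hroot := root_sq hr hlt.le
  have hrg := root_ge hr hlt.le
  have hh0 := hh_nonneg R U x
  set s := Real.sqrt (r ^ 2 - τ x ^ 2) with hs
  obtain ⟨δ1, h1, hw1⟩ := C.window_shadow (α₀ := -(τ x / r)) (g := s / r) hx
    (by field_simp; linarith) (by rw [le_div_iff₀ hr]; linarith) hη hβ hn
  have he' : 0 < e * r / (2 * (hh R U x + 1)) := by positivity
  obtain ⟨δ2, h2, hw2⟩ := deriv_quant hτ he'
  refine ⟨min δ1 δ2, lt_min h1 h2, fun δ hδ hδ0 hnδ => ?_⟩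
  obtain ⟨hδ1, hδ2⟩ := lt_min_iff.1 hδ0
  have k1 := hw1 δ hδ.le hδ1 hnδ
  have k2 := (_root_.abs_le.1 (hw2 (-δ) (by rwa [abs_neg, abs_of_pos hδ]))).2
  rw [abs_neg, abs_of_pos hδ, ← sub_eq_add_neg] at k2
  have q1 : -(τ x / r) / (s / r) = -kslope r (τ x) := by
    unfold kslope; rw [← hs]; field_simp
  have q2 : 2 * (s / r) = 1 + 2 / r * kf r (τ x) := by
    unfold kf; rw [← hs]; field_simp; ring
  rw [q1, q2] at k1
  unfold fwin
  rw [le_div_iff₀ hδ]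
  set h := hh R U x with hhdef
  set k := kf r (τ x) with hkdef
  -- the transport term
  have k3 : (2 / r) * (h * (h / k) * δ) - e * δ ≤ (2 / r) * (h * (τ x - τ (x - δ))) := by
    have a1 : δ * (h / k) - e * r / (2 * (h + 1)) * δ ≤ τ x - τ (x - δ) := by linarith
    have a2 := mul_le_mul_of_nonneg_left a1 (show 0 ≤ 2 / r * h by positivity)
    have a3 : 2 / r * h * (e * r / (2 * (h + 1))) = e * (h / (h + 1)) := by field_simp
    have a4 : h / (h + 1) ≤ 1 := by rw [div_le_one (by linarith)]; linarith
    have a5 : e * (h / (h + 1)) * δ ≤ e * 1 * δ := by gcongr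
    have a6 : 2 / r * h * (δ * (h / k) - e * r / (2 * (h + 1)) * δ)
      = (2 / r) * (h * (h / k) * δ) - 2 / r * h * (e * r / (2 * (h + 1))) * δ := by ring
    rw [a6, a3] at a2
    linarith
  -- completing the square in the transport term
  have k4 : 2 * h + 2 * d * |k - h| - d ^ 2 * k ≤ k + h * (h / k) := by
    have : k + h * (h / k) - (2 * h + 2 * d * |k - h| - d ^ 2 * k) = (|k - h| - d * k) ^ 2 / k := by
      have := sq_abs (k - h)
      field_simp
      linarith
    have h3 : 0 ≤ (|k - h| - d * k) ^ 2 / k := by positivity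
    linarith
  have k5 := mul_le_mul_of_nonneg_left k4 (show 0 ≤ 2 / r * δ by positivity)
  have e1 : (2 / r) * (τ x * hh R U (x + δ) - h * τ (x - δ))
    = (2 / r) * (h * (τ x - τ (x - δ))) + 2 * (τ x / r) * (hh R U (x + δ) - h) := by
    ring
  rw [e1]
  linarith

open Classical in
/-- Lower limit of the difference quotients outside the shadow, where the section of `U 0` has
vanishing derivative and only the interface between `U 1` and `U 2` is seen. -/
lemma fwin_off (C : Config R U) (T : Transport r R (hh R U) τ) {x e : ℝ} (hx : x ∉ shadow U)
    (hxR : |x| < R + 1) (he : 0 < e) (hη : |η x| ≤ 1 / 40) (hβ : |β x| ≤ 1 / 40)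
    (hd : DifferentiableAt ℝ (esec R U 0) x) :
    ∃ δ0 > 0, ∀ δ, 0 < δ → δ < δ0 →
      1 - 16 * (η x ^ 2 + β x ^ 2) + (if x ∈ bad U then 1 / 4 else 0)
        - e ≤ fwin R U r τ η β δ x := by
  have hr := T.hr
  obtain ⟨δ1, h1, hw1⟩ := C.window_off (β := β x) hxR hβ
  have he' : 0 < e / 3 := by positivity
  obtain ⟨δ2, h2, hw2⟩ := deriv_quant (C.hh_deriv_zero hx hd) he'
  refine ⟨min δ1 δ2, lt_min h1 h2, fun δ hδ hδ0 => ?_⟩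
  obtain ⟨hδ1, hδ2⟩ := lt_min_iff.1 hδ0
  have k1 := hw1 δ hδ.le hδ1
  have k2 := hw2 δ (by rwa [abs_of_pos hδ])
  have hx0 := C.hh_eq_zero hx
  rw [abs_of_pos hδ, hx0, mul_zero, sub_zero, sub_zero, abs_of_nonneg (hh_nonneg R U _)] at k2
  unfold fwin
  rw [le_div_iff₀ hδ, hx0]
  have h3 := tilt_le hr (T.abs_le x)
  have h4 : |τ x / r - η x| ≤ 1 := (abs_sub _ _).trans (by linarith)
  have h5 := mul_le_mul_of_nonneg_right (_root_.abs_le.1 h4).1 (hh_nonneg R U (x + δ))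
  have e1 : (2 / r) * (τ x * hh R U (x + δ) - 0 * τ (x - δ)) - 2 * η x * (hh R U (x + δ) - 0)
    = 2 * ((τ x / r - η x) * hh R U (x + δ)) := by ring
  have h6 : 0 ≤ δ * (16 * η x ^ 2 + 15 * β x ^ 2) := by positivity
  have h7 : 0 ≤ δ * e := by positivity
  linarith

end Config

section

/-- The mean increment of `f` over `[p, q)` telescopes to the difference of the means of `f` over
short intervals at the two ends. -/
lemma shift_integral {f : ℝ → ℝ} (hf : Integrable f) {p q : ℝ} (hpq : p ≤ q) (ε δ : ℝ) :
    ∫ x, (Set.Ico p q).indicator (fun _ => ε) x * (f (x + δ) - f x)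
      = ε * (((∫ t in 0..q + δ, f t) - ∫ t in 0..q, f t)
        - ((∫ t in 0..p + δ, f t) - ∫ t in 0..p, f t)) := by
  have hi : ∀ a b, IntervalIntegrable f volume a b := fun a b => hf.intervalIntegrable
  have e1 : ∀ x, (Set.Ico p q).indicator (fun _ => ε) x * (f (x + δ) - f x)
      = (Set.Ico p q).indicator (fun x => ε * (f (x + δ) - f x)) x := by
    intro x
    by_cases hx : x ∈ Set.Ico p q <;> simp [hx]
  simp only [e1]
  rw [integral_indicator measurableSet_Ico, integral_const_mul,
    integral_Ico_eq_integral_Ioc, ← intervalIntegral.integral_of_le hpq,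
    intervalIntegral.integral_sub ((hf.comp_add_right δ).intervalIntegrable) (hi _ _),
    intervalIntegral.integral_comp_add_right]
  rw [← intervalIntegral.integral_interval_sub_left (hi 0 (q + δ)) (hi 0 (p + δ)),
    ← intervalIntegral.integral_interval_sub_left (hi 0 q) (hi 0 p)]
  ring

lemma shift_integrable {f : ℝ → ℝ} (hf : Integrable f) (p q ε δ : ℝ) :
    Integrable fun x => (Set.Ico p q).indicator (fun _ => ε) x * (f (x + δ) - f x) := by
  refine Integrable.bdd_mul (c := |ε|) ((hf.comp_add_right δ).sub hf)
    ((measurable_const.indicator measurableSet_Ico).aestronglyMeasurable)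
    (Filter.Eventually.of_forall fun x => ?_)
  by_cases hx : x ∈ Set.Ico p q <;> simp [hx]

lemma Transport.cross_integrable {r R : ℝ} {h τ : ℝ → ℝ} (T : Transport r R h τ) (c c' : ℝ) :
    Integrable fun x => τ (x + c) * h (x + c') := by
  refine Integrable.bdd_mul (c := hw r) (T.integrable.comp_add_right c')
    ((T.mono.measurable.comp (measurable_id.add_const c)).aestronglyMeasurable)
    (Filter.Eventually.of_forall fun x => T.abs_le _)

lemma comb_integrable {f1 f2 f3 f4 f5 : ℝ → ℝ} (h1 : Integrable f1) (h2 : Integrable f2)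
    (h3 : Integrable f3) (h4 : Integrable f4) (h5 : Integrable f5) (c δ : ℝ) :
    Integrable fun x => (f1 x / 2 - (2 * f2 x + f3 x) + c * (f4 x - f5 x)) / δ :=
  (((h1.div_const 2).sub ((h2.const_mul 2).add h3)).add ((h4.sub h5).const_mul c)).div_const δ

lemma comb_integral {f1 f2 f3 f4 f5 : ℝ → ℝ} (h1 : Integrable f1) (h2 : Integrable f2)
    (h3 : Integrable f3) (h4 : Integrable f4) (h5 : Integrable f5) (c δ : ℝ) :
    ∫ x, (f1 x / 2 - (2 * f2 x + f3 x) + c * (f4 x - f5 x)) / δ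
      = ((∫ x, f1 x) / 2 - (2 * (∫ x, f2 x) + ∫ x, f3 x) + c * ((∫ x, f4 x) - ∫ x, f5 x)) / δ := by
  have a1 : Integrable fun x => 2 * f2 x + f3 x := (h2.const_mul 2).add h3
  have a2 : Integrable fun x => f1 x / 2 - (2 * f2 x + f3 x) := (h1.div_const 2).sub a1
  have a3 : Integrable fun x => c * (f4 x - f5 x) := (h4.sub h5).const_mul c
  rw [integral_div, integral_add a2 a3, integral_sub (h1.div_const 2) a1,
    integral_add (h2.const_mul 2) h3, integral_const_mul, integral_const_mul, integral_div,
    integral_sub h4 h5]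

namespace Config

variable {R r : ℝ} {U : Fin 3 → Set Plane} {τ : ℝ → ℝ}

lemma fwin_integrable (C : Config R U) (T : Transport r R (hh R U) τ) (p q p' q' ε ε' δ : ℝ) :
    Integrable (fwin R U r τ ((Set.Ico p q).indicator fun _ => ε)
      ((Set.Ico p' q').indicator fun _ => ε') δ) := by
  have := C.finite_tot
  refine (comb_integrable (window_integrable (tot R U) δ)
    (shift_integrable C.hh_integrable p q ε δ) (shift_integrable C.bb_integrable p' q' ε' δ)
    (T.cross_integrable 0 δ) (T.cross_integrable (-δ) 0) (2 / r) δ).congr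
    (Filter.Eventually.of_forall fun x => ?_)
  simp only [fwin, add_zero, sub_eq_add_neg]
  ring

/-- The integral of the difference quotients; the contributions of `τ` cancel by translation. -/
lemma fwin_integral (C : Config R U) (T : Transport r R (hh R U) τ) {p q p' q' : ℝ} (hpq : p ≤ q)
    (hpq' : p' ≤ q') (ε ε' : ℝ) {δ : ℝ} (hδ : 0 < δ) :
    ∫ x, fwin R U r τ ((Set.Ico p q).indicator fun _ => ε)
      ((Set.Ico p' q').indicator fun _ => ε') δ x
    = (tot R U).real Set.univ / 2
      - (2 * ε * ((((∫ t in 0..q + δ, hh R U t) - ∫ t in 0..q, hh R U t)) / δ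
          - ((∫ t in 0..p + δ, hh R U t) - ∫ t in 0..p, hh R U t) / δ)
        + ε' * ((((∫ t in 0..q' + δ, bb R U t) - ∫ t in 0..q', bb R U t)) / δ
          - ((∫ t in 0..p' + δ, bb R U t) - ∫ t in 0..p', bb R U t) / δ)) := by
  have := C.finite_tot
  have hcross : ∫ x, τ (x + 0) * hh R U (x + δ) = ∫ x, τ (x + -δ) * hh R U (x + 0) := by
    rw [← integral_add_right_eq_self (fun x => τ (x + -δ) * hh R U (x + 0)) δ]
    simp
  have e1 : ∀ x, fwin R U r τ ((Set.Ico p q).indicator fun _ => ε)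
      ((Set.Ico p' q').indicator fun _ => ε') δ x
      = (((tot R U).real (Set.Icc x (x + δ)) / 2
        - (2 * ((Set.Ico p q).indicator (fun _ => ε) x * (hh R U (x + δ) - hh R U x))
          + (Set.Ico p' q').indicator (fun _ => ε') x * (bb R U (x + δ) - bb R U x)))
        + (2 / r) * (τ (x + 0) * hh R U (x + δ) - τ (x + -δ) * hh R U (x + 0))) / δ := by
    intro x
    simp only [fwin, add_zero, sub_eq_add_neg]
    ring
  simp only [e1]
  rw [comb_integral (window_integrable (tot R U) δ)
    (shift_integrable C.hh_integrable p q ε δ) (shift_integrable C.bb_integrable p' q' ε' δ)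
    (T.cross_integrable 0 δ) (T.cross_integrable (-δ) 0), hcross, window_integral _ hδ.le,
    shift_integral C.hh_integrable hpq, shift_integral C.bb_integrable hpq']
  field_simp
  ring

lemma ratio_tendsto {F : ℝ → ℝ} {F' x : ℝ} (h : HasDerivAt F F' x) :
    Filter.Tendsto (fun n : ℕ => (F (x + 1 / ((n : ℝ) + 1)) - F x) / (1 / ((n : ℝ) + 1)))
      Filter.atTop (nhds F') := by
  have h1 := h.tendsto_slope_zero
  have h2 : Filter.Tendsto (fun n : ℕ => 1 / ((n : ℝ) + 1)) Filter.atTop (nhdsWithin 0 {0}ᶜ) := by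
    refine tendsto_nhdsWithin_iff.2 ⟨tendsto_one_div_add_atTop_nhds_zero_nat,
      Filter.Eventually.of_forall fun n => ?_⟩
    have : (0 : ℝ) < 1 / ((n : ℝ) + 1) := by positivity
    exact this.ne'
  refine (h1.comp h2).congr fun n => ?_
  exact (div_eq_inv_mul _ _).symm

lemma measurable_kslope : Measurable (kslope r) := by
  unfold kslope; fun_prop

open Classical in
/-- The calibration inequality in integrated form. -/
theorem master (C : Config R U) (T : Transport r R (hh R U) τ) {p q p' q' ε ε' d : ℝ}
    (hpq : p ≤ q) (hpq' : p' ≤ q') (hε : |ε| ≤ 1 / 40) (hε' : |ε'| ≤ 1 / 40)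
    (hp : HasDerivAt (fun x => ∫ t in 0..x, hh R U t) (hh R U p) p)
    (hq : HasDerivAt (fun x => ∫ t in 0..x, hh R U t) (hh R U q) q)
    (hp' : HasDerivAt (fun x => ∫ t in 0..x, bb R U t) (bb R U p') p')
    (hq' : HasDerivAt (fun x => ∫ t in 0..x, bb R U t) (bb R U q') q') :
    2 * (R + 1) + (2 / r) * (2 * (∫ x, hh R U x)
        + 2 * d * (∫ x in shadow U, |kf r (τ x) - hh R U x|) - d ^ 2 * (r * (R + 1)))
      + 2 * ε * (hh R U q - hh R U p + ∫ x in shadow U ∩ Set.Ico p q, kslope r (τ x))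
      + ε' * (bb R U q' - bb R U p')
      + 1 / 4 * volume.real (bad U) - 32 * (R + 1) * (ε ^ 2 + ε' ^ 2)
      ≤ (tot R U).real Set.univ / 2 := by
  have hr := T.hr
  have hR := T.hR
  have hA := C.isOpen_shadow.measurableSet
  have hB := C.isOpen_bad.measurableSet
  have hAfin : volume (shadow U) ≠ ⊤ := ne_top_of_le_ne_top measure_Icc_lt_top.ne
    (measure_mono (show shadow U ⊆ Set.Icc (-R) R from fun x hx => _root_.abs_le.1 (C.shadow_abs_le hx)))
  have hBfin : volume (bad U) ≠ ⊤ := ne_top_of_le_ne_top measure_Icc_lt_top.ne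
    (measure_mono (show bad U ⊆ Set.Icc (-R) R from fun x hx => _root_.abs_le.1 (C.bad_abs_le hx)))
  have hτm := T.mono.measurable
  have hkm : Measurable fun x => kf r (τ x) := (kf_continuous r).measurable.comp hτm
  have hk0 : ∀ x, 0 ≤ kf r (τ x) := fun x => kf_nonneg hr (T.abs_le x)
  have hk1 : ∀ x, kf r (τ x) ≤ r / 2 := fun x => kf_le hr
  have hAreal : volume.real (shadow U) ≤ 2 * R := by
    have := measureReal_mono (μ := volume) (show shadow U ⊆ Set.Icc (-R) R from
      fun x hx => _root_.abs_le.1 (C.shadow_abs_le hx)) measure_Icc_lt_top.ne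
    rw [Real.volume_real_Icc_of_le (by linarith)] at this
    linarith
  have ik : IntegrableOn (fun x => kf r (τ x)) (shadow U) :=
    Measure.integrableOn_of_bounded (M := r / 2) hAfin hkm.aestronglyMeasurable
      (Filter.Eventually.of_forall fun x => by
        rw [Real.norm_of_nonneg (hk0 x)]; exact hk1 x)
  have ih : IntegrableOn (hh R U) (shadow U) := C.hh_integrable.integrableOn
  have ia : IntegrableOn (fun x => |kf r (τ x) - hh R U x|) (shadow U) := (ik.sub ih).abs
  have is : IntegrableOn (fun x => kslope r (τ x)) (shadow U ∩ Set.Ico p q) :=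
    Measure.integrableOn_of_bounded (M := Real.sqrt 3)
      (ne_top_of_le_ne_top hAfin (measure_mono Set.inter_subset_left))
      (measurable_kslope.comp hτm).aestronglyMeasurable
      (Filter.Eventually.of_forall fun x => kslope_abs_le hr (T.abs_le x))
  have hsh : ∫ x in shadow U, hh R U x = ∫ x, hh R U x :=
    setIntegral_eq_integral_of_forall_compl_eq_zero fun x hx => C.hh_eq_zero hx
  have hkint : ∫ x in shadow U, kf r (τ x) ≤ r * (R + 1) := by
    have h1 : ∫ x in shadow U, kf r (τ x) ≤ ∫ x in shadow U, r / 2 :=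
      setIntegral_mono_on ik (integrableOn_const hAfin) hA fun x _ => hk1 x
    rw [setIntegral_const, smul_eq_mul] at h1
    nlinarith
  -- `g1 + g2 + g3 + g4` is the pointwise lower limit of the difference quotients `fwin`
  set g1 : ℝ → ℝ := (Set.Ioo (-(R + 1)) (R + 1)).indicator
    fun _ => 1 - 16 * (ε ^ 2 + ε' ^ 2) with hg1
  set g2 : ℝ → ℝ := (bad U).indicator fun _ => 1 / 4 with hg2
  set g3 : ℝ → ℝ := (shadow U).indicator fun x =>
    (2 / r) * (2 * hh R U x + 2 * d * |kf r (τ x) - hh R U x| - d ^ 2 * kf r (τ x)) with hg3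
  set g4 : ℝ → ℝ := (shadow U ∩ Set.Ico p q).indicator fun x => 2 * ε * kslope r (τ x) with hg4
  have i1 : Integrable g1 := (integrable_indicator_iff measurableSet_Ioo).2
    (integrableOn_const measure_Ioo_lt_top.ne)
  have i2 : Integrable g2 := (integrable_indicator_iff hB).2 (integrableOn_const hBfin)
  have i3' : IntegrableOn (fun x => 2 * hh R U x + 2 * d * |kf r (τ x) - hh R U x|) (shadow U) :=
    (ih.const_mul 2).add (ia.const_mul (2 * d))
  have i3 : Integrable g3 := (integrable_indicator_iff hA).2
    ((i3'.sub (ik.const_mul (d ^ 2))).const_mul (2 / r))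
  have i4 : Integrable g4 := (integrable_indicator_iff (hA.inter measurableSet_Ico)).2
    (is.const_mul (2 * ε))
  have I1 : ∫ x, g1 x = 2 * (R + 1) * (1 - 16 * (ε ^ 2 + ε' ^ 2)) := by
    rw [hg1, integral_indicator measurableSet_Ioo, setIntegral_const,
      Real.volume_real_Ioo_of_le (by linarith), smul_eq_mul]
    ring
  have I2 : ∫ x, g2 x = 1 / 4 * volume.real (bad U) := by
    rw [hg2, integral_indicator hB, setIntegral_const, smul_eq_mul]; ring
  have I3 : ∫ x, g3 x = (2 / r) * (2 * (∫ x, hh R U x)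
      + 2 * d * (∫ x in shadow U, |kf r (τ x) - hh R U x|)
      - d ^ 2 * ∫ x in shadow U, kf r (τ x)) := by
    rw [hg3, integral_indicator hA, integral_const_mul,
      integral_sub i3' (ik.const_mul (d ^ 2)),
      integral_add (ih.const_mul 2) (ia.const_mul (2 * d)), integral_const_mul,
      integral_const_mul, integral_const_mul, hsh]
  have I4 : ∫ x, g4 x = 2 * ε * ∫ x in shadow U ∩ Set.Ico p q, kslope r (τ x) := by
    rw [hg4, integral_indicator (hA.inter measurableSet_Ico), integral_const_mul]
  have ind_le : ∀ (S : Set ℝ) (c x : ℝ), |c| ≤ 1 / 40 → |S.indicator (fun _ => c) x| ≤ 1 / 40 := by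
    intro S c x hc
    by_cases hx : x ∈ S
    · rw [Set.indicator_of_mem hx]; exact hc
    · rw [Set.indicator_of_notMem hx]; norm_num
  have ind_sq : ∀ (S : Set ℝ) (c x : ℝ), (S.indicator (fun _ => c) x) ^ 2 ≤ c ^ 2 := by
    intro S c x
    by_cases hx : x ∈ S
    · rw [Set.indicator_of_mem hx]
    · rw [Set.indicator_of_notMem hx, zero_pow two_ne_zero]; exact sq_nonneg c
  set η : ℝ → ℝ := (Set.Ico p q).indicator fun _ => ε with hη
  set β : ℝ → ℝ := (Set.Ico p' q').indicator fun _ => ε' with hβ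
  have hnull : ∀ᵐ x : ℝ, ∀ n : ℕ, volume {y | pt (x + 1 / ((n : ℝ) + 1)) y ∉ ⋃ i, U i} = 0 :=
    ae_all_iff.2 fun n => ae_translate C.ae_null _
  have hδpos : ∀ n : ℕ, (0 : ℝ) < 1 / ((n : ℝ) + 1) := fun n => by positivity
  -- Fatou's lemma along `δ = 1 / (n + 1)`; the integrals of the quotients converge because `p`, `q`,
  -- `p'`, `q'` are points of differentiability of the primitives
  have hmain := fatou_real (f := fun n => fwin R U r τ η β (1 / ((n : ℝ) + 1)))
    (g := fun x => g1 x + g2 x + g3 x + g4 x)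
    (L := (tot R U).real Set.univ / 2
      - (2 * ε * (hh R U q - hh R U p) + ε' * (bb R U q' - bb R U p')))
    (fun n => C.fwin_integrable T p q p' q' ε ε' _)
    (by
      intro n
      filter_upwards [C.ae_null, hnull] with x h1 h2
      exact C.fwin_nonneg T (hδpos n) (ind_le _ _ _ hε) (ind_le _ _ _ hε') h1 (h2 n))
    (((i1.add i2).add i3).add i4)
    (by
      filter_upwards [C.ae_null, hnull, T.ae_hasDerivAt, C.ae_differentiable_esec 0]
        with x h1 h2 h3 h4 e he
      have hsm : ∀ δ0 > (0 : ℝ), ∀ᶠ n : ℕ in Filter.atTop, 1 / ((n : ℝ) + 1) < δ0 := fun δ0 h0 =>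
        tendsto_one_div_add_atTop_nhds_zero_nat.eventually_lt_const h0
      have s1 := ind_sq (Set.Ico p q) ε x
      have s2 := ind_sq (Set.Ico p' q') ε' x
      by_cases hx : x ∈ shadow U
      · obtain ⟨δ0, h0, h5⟩ := C.fwin_shadow T hx d he (ind_le (Set.Ico p q) _ _ hε)
          (ind_le (Set.Ico p' q') _ _ hε') h1 (h3 (T.abs_lt C.isOpen_shadow
            (fun x hx => C.hh_pos.2 hx) hx))
        filter_upwards [hsm δ0 h0] with n hn
        refine le_trans ?_ (h5 _ (hδpos n) hn (h2 n))
        have hxR := _root_.abs_le.1 (C.shadow_abs_le hx)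
        have v1 : g1 x = 1 - 16 * (ε ^ 2 + ε' ^ 2) :=
          Set.indicator_of_mem
            (show x ∈ Set.Ioo (-(R + 1)) (R + 1) from ⟨by linarith, by linarith⟩) _
        have v3 : g3 x = (2 / r) * (2 * hh R U x + 2 * d * |kf r (τ x) - hh R U x|
          - d ^ 2 * kf r (τ x)) := Set.indicator_of_mem hx _
        have v4 : g4 x = 2 * kslope r (τ x) * (Set.Ico p q).indicator (fun _ => ε) x := by
          by_cases hxp : x ∈ Set.Ico p q
          · rw [hg4, Set.indicator_of_mem (show x ∈ shadow U ∩ Set.Ico p q from ⟨hx, hxp⟩), Set.indicator_of_mem hxp]; ring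
          · rw [hg4, Set.indicator_of_notMem (fun h => hxp h.2), Set.indicator_of_notMem hxp]; ring
        have v2 : g2 x = if x ∈ bad U then 1 / 4 else 0 := Set.indicator_apply _ _ _
        rw [v1, v2, v3, v4]
        linarith
      · have v2 : g2 x = if x ∈ bad U then 1 / 4 else 0 := Set.indicator_apply _ _ _
        have v3 : g3 x = 0 := Set.indicator_of_notMem hx _
        have v4 : g4 x = 0 := Set.indicator_of_notMem (fun h => hx h.1) _
        by_cases hxR : x ∈ Set.Ioo (-(R + 1)) (R + 1)
        · obtain ⟨δ0, h0, h5⟩ := C.fwin_off T hx (_root_.abs_lt.2 hxR) he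
            (ind_le (Set.Ico p q) _ _ hε) (ind_le (Set.Ico p' q') _ _ hε') h4
          filter_upwards [hsm δ0 h0] with n hn
          refine le_trans ?_ (h5 _ (hδpos n) hn)
          have v1 : g1 x = 1 - 16 * (ε ^ 2 + ε' ^ 2) := Set.indicator_of_mem hxR _
          rw [v1, v2, v3, v4]
          linarith
        · have v1 : g1 x = 0 := Set.indicator_of_notMem hxR _
          have hb : x ∉ bad U := fun h => by
            have := _root_.abs_le.1 (C.bad_abs_le h)
            exact hxR ⟨by linarith, by linarith⟩
          refine Filter.Eventually.of_forall fun n => ?_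
          rw [v1, v2, v3, v4, if_neg hb]
          have := C.fwin_nonneg T (hδpos n) (ind_le (Set.Ico p q) _ x hε)
            (ind_le (Set.Ico p' q') _ x hε') h1 (h2 n)
          linarith)
    (by
      have e1 : (fun n : ℕ => ∫ x, fwin R U r τ η β (1 / ((n : ℝ) + 1)) x) = _ :=
        funext fun n => C.fwin_integral T hpq hpq' ε ε' (hδpos n)
      rw [e1]
      exact tendsto_const_nhds.sub ((((ratio_tendsto hq).sub (ratio_tendsto hp)).const_mul _).add
        (((ratio_tendsto hq').sub (ratio_tendsto hp')).const_mul _)))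
  have i12 : Integrable fun x => g1 x + g2 x := i1.add i2
  have i123 : Integrable fun x => g1 x + g2 x + g3 x := i12.add i3
  rw [integral_add i123 i4, integral_add i12 i3, integral_add i1 i2,
    I1, I2, I3, I4] at hmain
  have hd := mul_le_mul_of_nonneg_left hkint (show 0 ≤ 2 / r * d ^ 2 by positivity)
  linarith

end Config

/-! ### From small deficit to closeness of profiles -/

section

/-- The data extracted from a small deficit, of order `d ^ 2`: the profile `h` is close to its
transported lens profile, and its increments are close to those of a lens profile. -/
structure Near (r R K d : ℝ) (A G : Set ℝ) (h τ : ℝ → ℝ) : Prop where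
  T : Transport r R h τ
  op : IsOpen A
  pos : ∀ x, 0 < h x ↔ x ∈ A
  full : ∀ᵐ x, x ∈ G
  dpos : 0 < d
  hK : 1 ≤ K
  prof : ∫ x in A, |kf r (τ x) - h x| ≤ K * d
  grad : ∀ p ∈ G, ∀ q ∈ G, p ≤ q →
    |h q - h p + ∫ x in A ∩ Set.Ico p q, kslope r (τ x)| ≤ K * d

lemma exists_mem_Ioo {G : Set ℝ} (hG : ∀ᵐ x, x ∈ G) {a b : ℝ} (hab : a < b) :
    ∃ x ∈ G, a < x ∧ x < b := by
  by_contra! h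
  have h1 : Set.Ioo a b ⊆ {x | ¬ x ∈ G} := fun x hx hxG => absurd hx.2 (not_lt.2 (h x hxG hx.1))
  have h2 := measure_mono_null h1 hG
  rw [Real.volume_Ioo, ENNReal.ofReal_eq_zero] at h2
  linarith

/-- Cauchy's formula for a repeated integral. -/
lemma double_integral {F : ℝ → ℝ} {c y : ℝ} (hF : IntervalIntegrable F volume c y) :
    ∫ x in c..y, (∫ s in c..x, F s) = ∫ s in c..y, (y - s) * F s := by
  have h1 : AbsolutelyContinuousOnInterval (fun x => y - x) c y := by
    have : LipschitzOnWith 1 (fun x : ℝ => y - x) (Set.uIcc c y) :=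
      LipschitzOnWith.of_dist_le_mul fun a _ b _ => by
        rw [Real.dist_eq, Real.dist_eq, abs_sub_comm a b]; simp
    exact this.absolutelyContinuousOnInterval
  have h2 := hF.absolutelyContinuousOnInterval_intervalIntegral (c := c) (by simp)
  have h3 := h1.integral_mul_deriv_eq_deriv_mul h2
  have h4 : ∀ x : ℝ, deriv (fun x => y - x) x = -1 := fun x =>
    ((hasDerivAt_id x).const_sub y).deriv
  simp only [h4, neg_one_mul, intervalIntegral.integral_neg, sub_self, zero_mul,
    intervalIntegral.integral_same, mul_zero, sub_neg_eq_add, zero_add] at h3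
  rw [← h3]
  refine intervalIntegral.integral_congr_ae ?_
  filter_upwards [hF.ae_hasDerivAt_integral] with x hx hmem
  rw [(hx (Set.uIoc_subset_uIcc hmem) c (by simp)).deriv]

namespace Near

variable {r R K d c : ℝ} {A G : Set ℝ} {h τ : ℝ → ℝ}

lemma meas_tau (N : Near r R K d A G h τ) : Measurable τ := N.T.mono.measurable

lemma tau_nonneg (N : Near r R K d A G h τ) (hc : τ c = 0) {x : ℝ} (hx : c ≤ x) : 0 ≤ τ x :=
  hc ▸ N.T.mono hx

lemma abs_lt (N : Near r R K d A G h τ) {x : ℝ} (hx : x ∈ A) : |τ x| < hw r :=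
  N.T.abs_lt N.op (fun x hx => (N.pos x).2 hx) hx

lemma sub_Icc (N : Near r R K d A G h τ) : A ⊆ Set.Icc (-R) R := by
  intro x hx
  by_contra hn
  have h1 := (N.pos x).2 hx
  rw [N.T.out x (by by_contra! h2; exact hn (_root_.abs_le.1 h2))] at h1
  exact lt_irrefl _ h1

lemma vol_ne_top (N : Near r R K d A G h τ) : volume A ≠ ⊤ :=
  ne_top_of_le_ne_top measure_Icc_lt_top.ne (measure_mono N.sub_Icc)

lemma slope_integrable (N : Near r R K d A G h τ) {S : Set ℝ} (hS : S ⊆ A) :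
    IntegrableOn (fun x => kslope r (τ x)) S :=
  Measure.integrableOn_of_bounded (M := Real.sqrt 3)
    (ne_top_of_le_ne_top N.vol_ne_top (measure_mono hS))
    (Config.measurable_kslope.comp N.meas_tau).aestronglyMeasurable
    (Filter.Eventually.of_forall fun x => kslope_abs_le N.T.hr (N.T.abs_le x))

lemma reflect (N : Near r R K d A G h τ) :
    Near r R K d {x | -x ∈ A} {x | -x ∈ G} (fun x => h (-x)) (fun x => -τ (-x)) where
  T := N.T.reflect
  op := N.op.preimage continuous_neg
  pos x := N.pos (-x)
  full := (Measure.measurePreserving_neg (volume : Measure ℝ)).quasiMeasurePreserving.ae N.full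
  dpos := N.dpos
  hK := N.hK
  prof := by
    refine le_trans (le_of_eq ?_) N.prof
    have h1 := (Measure.measurePreserving_neg (volume : Measure ℝ)).setIntegral_preimage_emb
      (MeasurableEquiv.neg ℝ).measurableEmbedding (fun x => |kf r (τ x) - h x|) A
    simp only [kf_neg]
    exact h1
  grad := by
    intro p hp q hq hpq
    have h0 := N.grad _ hq _ hp (neg_le_neg hpq)
    have h1 := (Measure.measurePreserving_neg (volume : Measure ℝ)).setIntegral_preimage_emb
      (MeasurableEquiv.neg ℝ).measurableEmbedding (fun x => kslope r (τ x))
        (A ∩ Set.Ioc (-q) (-p))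
    have h2 : (fun x : ℝ => -x) ⁻¹' (A ∩ Set.Ioc (-q) (-p)) = {x | -x ∈ A} ∩ Set.Ico p q := by
      ext x
      simp only [Set.mem_preimage, Set.mem_inter_iff, Set.mem_Ioc, Set.mem_Ico, neg_lt_neg_iff,
        neg_le_neg_iff, Set.mem_ofPred_eq]
      tauto
    have h3 : ∫ x in A ∩ Set.Ioc (-q) (-p), kslope r (τ x)
        = ∫ x in A ∩ Set.Ico (-q) (-p), kslope r (τ x) :=
      setIntegral_congr_set ((Filter.EventuallyEq.refl _ A).inter Ico_ae_eq_Ioc.symm)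
    rw [← h3, ← h1, h2] at h0
    simp only [kslope_neg, integral_neg]
    rw [← abs_neg]
    refine le_trans (le_of_eq ?_) h0
    congr 1
    ring

/-- To the right of the centre, the profile decreases up to an error `K * d`. -/
lemma decr (N : Near r R K d A G h τ) (hc : τ c = 0) {p q : ℝ} (hp : p ∈ G) (hq : q ∈ G)
    (hcp : c ≤ p) (hpq : p ≤ q) : h q ≤ h p + K * d := by
  have h1 := (_root_.abs_le.1 (N.grad p hp q hq hpq)).2
  have h2 : 0 ≤ ∫ x in A ∩ Set.Ico p q, kslope r (τ x) :=
    setIntegral_nonneg (N.op.measurableSet.inter measurableSet_Ico) fun x hx =>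
      kslope_nonneg (N.tau_nonneg hc (hcp.trans hx.2.1))
  linarith

lemma centre_abs_le (N : Near r R K d A G h τ) (hc : τ c = 0) : |c| < R := by
  have ha := hw_pos N.T.hr
  by_contra! h1
  rcases le_abs'.1 h1 with h2 | h2
  · have := N.T.left c (by linarith); linarith
  · have := N.T.right c h2; linarith

/-- The abscissa `x₁` at which the profile first drops below `d`. -/
lemma exists_drop (N : Near r R K d A G h τ) (hc : τ c = 0) :
    ∃ x₁, c ≤ x₁ ∧ x₁ ≤ R ∧ (∀ᵐ x, x₁ < x → h x ≤ (K + 1) * d) ∧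
      ∀ s ∈ G, c ≤ s → s < x₁ → s ∈ A := by
  have hcR := _root_.abs_lt.1 (N.centre_abs_le hc)
  -- `x₁` is the infimum of the points of `G` right of `c` at which the profile is at most `d`
  set S := {x | c ≤ x ∧ x ∈ G ∧ h x ≤ d} with hS
  have hbdd : BddBelow S := ⟨c, fun x hx => hx.1⟩
  have hbig : ∀ x ∈ G, R < x → x ∈ S := fun x hx hRx =>
    ⟨by linarith, hx, by rw [N.T.out x (hRx.trans_le (le_abs_self x))]; exact N.dpos.le⟩
  have hne : S.Nonempty := by
    obtain ⟨x, hx, h1, -⟩ := exists_mem_Ioo N.full (show R < R + 1 by linarith)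
    exact ⟨x, hbig x hx h1⟩
  refine ⟨sInf S, le_csInf hne fun x hx => hx.1, ?_, ?_, ?_⟩
  · by_contra! h1
    obtain ⟨x, hx, h2, h3⟩ := exists_mem_Ioo N.full h1
    exact absurd (csInf_le hbdd (hbig x hx h2)) (not_le.2 h3)
  · filter_upwards [N.full] with x hx h1
    obtain ⟨y, hy, hyx⟩ := exists_lt_of_csInf_lt hne h1
    have := N.decr hc hy.2.1 hx hy.1 hyx.le
    linarith [hy.2.2]
  · intro s hs hcs h1
    rw [← N.pos]
    by_contra! h2
    exact absurd (csInf_le hbdd ⟨hcs, hs, h2.trans N.dpos.le⟩) (not_le.2 h1)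

end Near

section

lemma lin_integral (α β s x : ℝ) :
    ∫ t in s..x, (α * (x - t) - β) = α * (x - s) ^ 2 / 2 - β * (x - s) := by
  have h1 : ∀ t ∈ Set.uIcc s x, HasDerivAt (fun t => -α * (x - t) ^ 2 / 2 - β * t)
      (α * (x - t) - β) t := by
    intro t _
    have h := (((((hasDerivAt_id t).const_sub x).pow 2).const_mul (-α)).div_const 2).sub
      ((hasDerivAt_id t).const_mul β)
    refine h.congr_deriv ?_
    simp; ring
  rw [intervalIntegral.integral_eq_sub_of_hasDerivAt h1
    (Continuous.intervalIntegrable (by fun_prop) _ _)]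
  ring

namespace Near

variable {r R K d c x₁ : ℝ} {A G : Set ℝ} {h τ : ℝ → ℝ}

/-- Near the right end of the transported profile, `h` grows at least linearly to the left
of `x₁`. -/
lemma h_lower (N : Near r R K d A G h τ) (hc : τ c = 0) (hx1R : x₁ ≤ R)
    (hx1A : ∀ s ∈ G, c ≤ s → s < x₁ → s ∈ A) {s : ℝ} (hcs : c ≤ s) (hs : s ∈ G) (hsx : s < x₁)
    (hτ : hw r / 2 ≤ τ s) : Real.sqrt 3 / 4 * (x₁ - s) - K * d ≤ h s := by
  have hr := N.T.hr
  obtain ⟨q, hq, hRq, -⟩ := exists_mem_Ioo N.full (show R < R + 1 by linarith)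
  have h1 := (_root_.abs_le.1 (N.grad s hs q hq (by linarith))).2
  rw [N.T.out q (hRq.trans_le (le_abs_self q))] at h1
  have hm1 : MeasurableSet (A ∩ Set.Ico s x₁) := N.op.measurableSet.inter measurableSet_Ico
  have hm2 : MeasurableSet (A ∩ Set.Ico s q) := N.op.measurableSet.inter measurableSet_Ico
  have h2 : ∫ x in A ∩ Set.Ico s x₁, kslope r (τ x) ≤ ∫ x in A ∩ Set.Ico s q, kslope r (τ x) := by
    refine setIntegral_mono_set (N.slope_integrable Set.inter_subset_left) ?_ ?_
    · filter_upwards [ae_restrict_mem hm2] with x hx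
      exact kslope_nonneg (N.tau_nonneg hc (hcs.trans hx.2.1))
    · exact HasSubset.Subset.eventuallyLE
        (Set.inter_subset_inter_right _ (Set.Ico_subset_Ico_right (by linarith)))
  have hvol : volume.real (A ∩ Set.Ico s x₁) = x₁ - s := by
    rw [← Real.volume_real_Ico_of_le hsx.le]
    refine measureReal_congr ?_
    filter_upwards [N.full] with x hx
    refine propext ⟨fun h => h.2, fun h => ⟨hx1A x hx (hcs.trans h.1) h.2, h⟩⟩
  have hfin : volume (A ∩ Set.Ico s x₁) ≠ ⊤ :=
    ne_top_of_le_ne_top N.vol_ne_top (measure_mono Set.inter_subset_left)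
  have h3 : ∫ x in A ∩ Set.Ico s x₁, Real.sqrt 3 / 4
      ≤ ∫ x in A ∩ Set.Ico s x₁, kslope r (τ x) := by
    refine setIntegral_mono_on (integrableOn_const hfin)
      (N.slope_integrable Set.inter_subset_left) hm1 fun x hx => ?_
    have h4 := hτ.trans (N.T.mono hx.2.1)
    refine le_trans ?_ (kslope_ge hr ((half_pos (hw_pos hr)).le.trans h4)
      (_root_.abs_le.1 (N.T.abs_le x)).2)
    rw [le_div_iff₀ hr]
    refine le_trans (le_of_eq ?_) h4
    unfold hw; ring
  rw [setIntegral_const, smul_eq_mul, hvol] at h3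
  linarith

/-- The distance to `x₁` is controlled by the distance of the transport map to its maximum. -/
lemma dist_drop (N : Near r R K d A G h τ) (hc : τ c = 0) (hx1R : x₁ ≤ R)
    (hx1A : ∀ s ∈ G, c ≤ s → s < x₁ → s ∈ A) {s : ℝ} (hcs : c ≤ s) (hsx : s < x₁) :
    x₁ - s ≤ (2 + 4 * R / hw r) * (hw r - τ s) + 5 * K * d := by
  have hr := N.T.hr
  have hR := N.T.hR
  have ha := hw_pos hr
  have hcR := _root_.abs_lt.1 (N.centre_abs_le hc)
  have hσ : 0 ≤ hw r - τ s := sub_nonneg.2 (_root_.abs_le.1 (N.T.abs_le s)).2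
  have hKd : 0 < K * d := mul_pos (by linarith [N.hK]) N.dpos
  rcases lt_or_ge (τ s) (hw r / 2) with h1 | h1
  · have h2 : 2 * R ≤ 4 * R / hw r * (hw r - τ s) := by
      have : 4 * R / hw r * (hw r / 2) = 2 * R := by field_simp; norm_num
      rw [← this]
      have : 0 ≤ 4 * R / hw r := by positivity
      gcongr
      linarith
    linarith
  · have h2 : ∫ t in s..x₁, (Real.sqrt 3 / 4 * (x₁ - t) - K * d) ≤ ∫ t in s..x₁, h t := by
      refine intervalIntegral.integral_mono_ae_restrict hsx.le
        (Continuous.intervalIntegrable (by fun_prop) _ _) N.T.integrable.intervalIntegrable ?_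
      have hne : ∀ᵐ t : ℝ, t ≠ x₁ := by simp [ae_iff]
      rw [Filter.EventuallyLE, ae_restrict_iff' measurableSet_Icc]
      filter_upwards [N.full, hne] with t ht hne hmem
      exact N.h_lower hc hx1R hx1A (hcs.trans hmem.1) ht (lt_of_le_of_ne hmem.2 hne)
        (h1.trans (N.T.mono hmem.1))
    have h3 : ∫ t in s..x₁, h t ≤ ∫ t in s..R, h t := by
      rw [← intervalIntegral.integral_add_adjacent_intervals
        (N.T.integrable.intervalIntegrable (a := s) (b := x₁))
        (N.T.integrable.intervalIntegrable (a := x₁) (b := R))]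
      have := intervalIntegral.integral_nonneg (μ := volume) hx1R fun t _ => N.T.nonneg t
      linarith
    have h4 : ∫ t in τ s..hw r, kf r t ≤ ∫ t in τ s..hw r, (Real.sqrt 3 * (hw r - t) - 0) := by
      refine intervalIntegral.integral_mono_on (by linarith)
        ((kf_continuous r).intervalIntegrable _ _)
        (Continuous.intervalIntegrable (by fun_prop) _ _) fun t ht => ?_
      rw [sub_zero]
      exact kf_upper hr ht.2
    have h5 := N.T.eq s R
    rw [N.T.right R le_rfl] at h5
    rw [lin_integral] at h2 h4
    set L := x₁ - s
    set σ := hw r - τ s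
    set u := Real.sqrt 3
    have hL : 0 < L := sub_pos.2 hsx
    have hu : 1.73 < u := sqrt3_lo
    have h6 : u * (L ^ 2 / 8) ≤ u * (σ ^ 2 / 2) + K * d * L := by linarith
    have h7 : L ^ 2 ≤ 4 * σ ^ 2 + 5 * (K * d) * L := by
      have : 0 < K * d * L := by positivity
      nlinarith
    have h8 : L ≤ 2 * σ + 5 * (K * d) := by
      by_contra! h9
      nlinarith [mul_pos hL hKd, mul_lt_mul_of_pos_right h9 hL]
    have : 0 ≤ 4 * R / hw r * σ := by positivity
    linarith

/-- The profile of the lens, extended by zero. -/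
def _root_.kt (r t : ℝ) : ℝ := max (kf r t) 0

lemma _root_.kt_continuous (r : ℝ) : Continuous (kt r) := (kf_continuous r).max continuous_const

lemma _root_.kt_nonneg (r t : ℝ) : 0 ≤ kt r t := le_max_right _ _

lemma _root_.kt_neg (r t : ℝ) : kt r (-t) = kt r t := by unfold kt; rw [kf_neg]

lemma _root_.kt_of_le {r t : ℝ} (hr : 0 < r) (ht : |t| ≤ hw r) : kt r t = kf r t :=
  max_eq_left (kf_nonneg hr ht)

lemma _root_.kt_of_ge {r t : ℝ} (hr : 0 < r) (ht : hw r ≤ |t|) : kt r t = 0 := by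
  refine max_eq_right ?_
  have h1 := kf_anti (r := r) (hw_pos hr).le ht
  rw [kf_hw hr] at h1
  unfold kf at *
  rwa [sq_abs] at h1

lemma _root_.kt_diff {r s t : ℝ} (hr : 0 < r) (hs : |s| ≤ hw r) (ht : 0 ≤ t) :
    |kf r s - kt r t| ≤ Real.sqrt 3 * |s - t| := by
  rcases le_total t (hw r) with h1 | h1
  · have h2 : |t| ≤ hw r := by rwa [abs_of_nonneg ht]
    rw [kt_of_le hr h2]
    exact kf_lip hr hs h2
  · rw [kt_of_ge hr (by rwa [abs_of_nonneg ht]), ← kf_hw hr]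
    have ha := hw_pos hr
    have h2 := _root_.abs_le.1 hs
    refine (kf_lip hr hs (by rw [abs_of_pos ha])).trans ?_
    gcongr 1
    rw [abs_of_nonpos (by linarith), abs_of_nonpos (by linarith)]
    linarith

lemma prof_integrable (N : Near r R K d A G h τ) :
    IntegrableOn (fun x => |kf r (τ x) - h x|) A :=
  ((Measure.integrableOn_of_bounded (M := r / 2) N.vol_ne_top
    ((kf_continuous r).measurable.comp N.meas_tau).aestronglyMeasurable
    (Filter.Eventually.of_forall fun x => by
      rw [Function.comp, Real.norm_of_nonneg (kf_nonneg N.T.hr (N.T.abs_le x))]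
      exact kf_le N.T.hr)).sub N.T.integrable.integrableOn).abs

lemma prof_interval (N : Near r R K d A G h τ) {y : ℝ} (hcy : c ≤ y)
    (hsub : ∀ᵐ s, s ∈ Set.Ioc c y → s ∈ A) :
    IntervalIntegrable (fun x => |kf r (τ x) - h x|) volume c y ∧
      ∫ x in c..y, |kf r (τ x) - h x| ≤ K * d := by
  have h1 : Set.Ioc c y ≤ᵐ[volume] A := by
    filter_upwards [hsub] with s hs using hs
  have h2 : IntegrableOn (fun x => |kf r (τ x) - h x|) (Set.Ioc c y) :=
    N.prof_integrable.mono_set_ae h1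
  refine ⟨(intervalIntegrable_iff_integrableOn_Ioc_of_le hcy).2 h2, ?_⟩
  rw [intervalIntegral.integral_of_le hcy]
  exact (setIntegral_mono_set N.prof_integrable
    (Filter.Eventually.of_forall fun x => abs_nonneg _) h1).trans N.prof

/-- The transport map is close to a translation. -/
lemma tau_close (N : Near r R K d A G h τ) (hc : τ c = 0) (hx1R : x₁ ≤ R)
    (hx1A : ∀ s ∈ G, c ≤ s → s < x₁ → s ∈ A) {y : ℝ} (hcy : c ≤ y) (hyx : y < x₁) :
    ∫ x in c..y, |τ x - (x - c)|
      ≤ (Real.sqrt 3 * (2 + 4 * R / hw r) + 5 * (hw r + 2 * R)) * (K * d) := by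
  have hr := N.T.hr
  have hR := N.T.hR
  have ha := hw_pos hr
  have hcR := _root_.abs_lt.1 (N.centre_abs_le hc)
  have hKd : 0 < K * d := mul_pos (by linarith [N.hK]) N.dpos
  -- the transport map is Lipschitz on `[c, y]`, since the lens profile is bounded below there
  obtain ⟨s, hs, hys, hsx⟩ := exists_mem_Ioo N.full hyx
  have hτy : τ y < hw r := (N.T.mono hys.le).trans_lt
    (_root_.abs_lt.1 (N.abs_lt (hx1A s hs (by linarith) hsx))).2
  have hτy0 := N.tau_nonneg hc hcy
  have hk0 : 0 < kf r (τ y) := kf_pos hr (by rwa [abs_of_nonneg hτy0])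
  have hlip : LipschitzOnWith (Real.toNNReal ((R + 1) / kf r (τ y))) τ (Set.uIcc c y) := by
    refine LipschitzOnWith.of_le_add_mul _ fun u hu v hv => ?_
    rw [Real.coe_toNNReal _ (by positivity)]
    rw [Set.uIcc_of_le hcy] at hu hv
    rcases le_total u v with huv | hvu
    · have := N.T.mono huv
      have : 0 ≤ (R + 1) / kf r (τ y) * dist u v := by positivity
      linarith
    · have h1 := N.T.eq v u
      have h2 : kf r (τ y) * (τ u - τ v) ≤ ∫ t in τ v..τ u, kf r t := by
        have := intervalIntegral.integral_mono_on (μ := volume) (N.T.mono hvu)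
          (f := fun _ => kf r (τ y)) (g := kf r) (by simp)
          ((kf_continuous r).intervalIntegrable _ _) fun t ht =>
            kf_anti ((N.tau_nonneg hc hv.1).trans ht.1) (ht.2.trans (N.T.mono hu.2))
        rw [intervalIntegral.integral_const, smul_eq_mul] at this
        linarith
      have h3 : ∫ t in v..u, h t ≤ (R + 1) * (u - v) := by
        have := intervalIntegral.integral_mono_on (μ := volume) hvu
          (f := h) (g := fun _ => R + 1) N.T.integrable.intervalIntegrable (by simp)
          fun t _ => N.T.bdd t
        rw [intervalIntegral.integral_const, smul_eq_mul] at this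
        linarith
      rw [Real.dist_eq, abs_of_nonneg (sub_nonneg.2 hvu), div_mul_eq_mul_div, ← sub_le_iff_le_add',
        le_div_iff₀ hk0]
      linarith
  have hac := hlip.absolutelyContinuousOnInterval
  have hτ'int := hac.intervalIntegrable_deriv
  have hmem : ∀ᵐ x, x ∈ Set.uIoc c y → deriv τ x = h x / kf r (τ x) ∧ x ∈ A ∧
      0 < kf r (τ x) ∧ c < x ∧ x ≤ y := by
    filter_upwards [N.full, N.T.ae_hasDerivAt] with x hx h1 h2
    rw [Set.uIoc_of_le hcy] at h2
    have hxA := hx1A x hx h2.1.le (by linarith [h2.2])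
    exact ⟨(h1 (N.abs_lt hxA)).deriv, hxA, kf_pos hr (N.abs_lt hxA), h2⟩
  set F : ℝ → ℝ := fun x => |deriv τ x - 1| with hF
  have hFint : ∀ x ∈ Set.Icc c y, IntervalIntegrable F volume c x := fun x hx =>
    ((hτ'int.sub intervalIntegrable_const).abs).mono_set
      (by rw [Set.uIcc_of_le hx.1, Set.uIcc_of_le hcy]; exact Set.Icc_subset_Icc_right hx.2)
  have hdint : ∀ x ∈ Set.Icc c y, IntervalIntegrable (deriv τ) volume c x := fun x hx =>
    hτ'int.mono_set
      (by rw [Set.uIcc_of_le hx.1, Set.uIcc_of_le hcy]; exact Set.Icc_subset_Icc_right hx.2)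
  have hFy := hFint y ⟨hcy, le_rfl⟩
  -- pointwise bound by the integral of `|τ' - 1|`
  have step1 : ∀ x ∈ Set.Icc c y, |τ x - (x - c)| ≤ ∫ s in c..x, F s := by
    intro x hx
    have h1 := (hac.mono (c := c) (d := x) (by
      rw [Set.uIcc_of_le hx.1, Set.uIcc_of_le hcy]
      exact Set.Icc_subset_Icc_right hx.2)).integral_deriv_eq_sub
    have h2 : τ x - (x - c) = ∫ s in c..x, (deriv τ s - 1) := by
      rw [intervalIntegral.integral_sub (hdint x hx) intervalIntegrable_const, h1, hc]
      simp
    rw [h2]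
    exact intervalIntegral.abs_integral_le_integral_abs hx.1
  have hcontτ : ContinuousOn (fun x => |τ x - (x - c)|) (Set.uIcc c y) :=
    (hac.continuousOn.sub (by fun_prop)).abs
  have hcontP : ContinuousOn (fun x => ∫ s in c..x, F s) (Set.uIcc c y) :=
    (hFy.absolutelyContinuousOnInterval_intervalIntegral (c := c) (by simp)).continuousOn
  have step2 : ∫ x in c..y, |τ x - (x - c)| ≤ ∫ s in c..y, (y - s) * F s := by
    rw [← double_integral hFy]
    exact intervalIntegral.integral_mono_on hcy hcontτ.intervalIntegrable
      hcontP.intervalIntegrable step1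
  -- the total variation of `τ - id`
  have step3 : ∫ s in c..y, F s ≤ hw r + 2 * R := by
    have h1 : ∫ s in c..y, F s ≤ ∫ s in c..y, (deriv τ s + 1) := by
      refine intervalIntegral.integral_mono_on hcy hFy (hτ'int.add intervalIntegrable_const)
        fun x _ => ?_
      have : 0 ≤ deriv τ x := N.T.mono.deriv_nonneg
      refine (abs_sub _ _).trans (le_of_eq ?_)
      rw [abs_of_nonneg this, abs_one]
    rw [intervalIntegral.integral_add hτ'int intervalIntegrable_const,
      hac.integral_deriv_eq_sub, hc] at h1
    simp only [intervalIntegral.integral_const, smul_eq_mul, mul_one] at h1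
    linarith
  have hsub : ∀ᵐ s, s ∈ Set.Ioc c y → s ∈ A := by
    filter_upwards [hmem] with s h1 h2
    rw [Set.uIoc_of_le hcy] at h1
    exact (h1 h2).2.1
  obtain ⟨hpI, hpB⟩ := N.prof_interval hcy hsub
  have h4R : 0 ≤ 2 + 4 * R / hw r := by positivity
  have step4 : ∫ s in c..y, (y - s) * F s
      ≤ ∫ s in c..y, (Real.sqrt 3 * (2 + 4 * R / hw r) * |kf r (τ s) - h s|
          + 5 * (K * d) * F s) := by
    refine intervalIntegral.integral_mono_ae_restrict hcy
      (hFy.continuousOn_mul (by fun_prop)) ((hpI.const_mul _).add (hFy.const_mul _)) ?_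
    have hne : ∀ᵐ t : ℝ, t ≠ c := by simp [ae_iff]
    rw [Filter.EventuallyLE, ae_restrict_iff' measurableSet_Icc]
    filter_upwards [hmem, hne] with s h1 hne hs
    obtain ⟨h2, hsA, hk, hcs, hsy⟩ := h1 (by
      rw [Set.uIoc_of_le hcy]; exact ⟨lt_of_le_of_ne hs.1 (Ne.symm hne), hs.2⟩)
    -- the weight `y - s` is at most a multiple of `kf r (τ s)` up to `O(d)`, which cancels the
    -- denominator of `|τ' - 1| = |kf r (τ s) - h s| / kf r (τ s)`
    have h3 := N.dist_drop hc hx1R hx1A hcs.le (hsy.trans_lt hyx)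
    have h4 := kf_lower hr (N.tau_nonneg hc hcs.le) (_root_.abs_le.1 (N.T.abs_le s)).2
    have h5 : 0 < Real.sqrt 3 := by positivity
    have hFs : F s = |kf r (τ s) - h s| / kf r (τ s) := by
      simp only [hF]
      rw [h2, abs_sub_comm, ← abs_of_pos hk, ← abs_div, abs_of_pos hk, sub_div, div_self hk.ne']
    have hF0 : 0 ≤ F s := abs_nonneg _
    rw [div_le_iff₀ h5] at h4
    have h6 : y - s ≤ (2 + 4 * R / hw r) * (kf r (τ s) * Real.sqrt 3) + 5 * K * d := by
      have := mul_le_mul_of_nonneg_left h4 h4R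
      linarith
    have h7 : kf r (τ s) * F s = |kf r (τ s) - h s| := by
      rw [hFs]; field_simp
    calc (y - s) * F s ≤ ((2 + 4 * R / hw r) * (kf r (τ s) * Real.sqrt 3) + 5 * K * d) * F s :=
          mul_le_mul_of_nonneg_right h6 hF0
      _ = Real.sqrt 3 * (2 + 4 * R / hw r) * (kf r (τ s) * F s) + 5 * (K * d) * F s := by ring
      _ = _ := by rw [h7]
  rw [intervalIntegral.integral_add (hpI.const_mul _) (hFy.const_mul _),
    intervalIntegral.integral_const_mul, intervalIntegral.integral_const_mul] at step4
  have h8 := mul_le_mul_of_nonneg_left hpB (mul_nonneg (Real.sqrt_nonneg 3) h4R)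
  have h9 := mul_le_mul_of_nonneg_left step3 (show 0 ≤ 5 * (K * d) by positivity)
  linarith

end Near

section

namespace Near

variable {r R K d c : ℝ} {A G : Set ℝ} {h τ : ℝ → ℝ}

/-- The constant in the estimate of the distance from the transport map to a translation. -/
def _root_.cT (r R : ℝ) : ℝ := Real.sqrt 3 * (2 + 4 * R / hw r) + 5 * (hw r + 2 * R)

/-- The constant in the estimate of the distance between the profiles on a half-line. -/
def _root_.cH (r R K : ℝ) : ℝ :=
  2 * ((1 + Real.sqrt 3 * cT r R) * K + ((R + 1) + (2 * R + hw r) * (K + 1)))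

lemma diff_interval (N : Near r R K d A G h τ) (hc : τ c = 0) {x₁ : ℝ} (hx1R : x₁ ≤ R)
    (hx1A : ∀ s ∈ G, c ≤ s → s < x₁ → s ∈ A) {y : ℝ} (hcy : c ≤ y) (hyx : y < x₁) :
    ∫ x in c..y, |h x - kt r (x - c)| ≤ (1 + Real.sqrt 3 * cT r R) * K * d := by
  have hr := N.T.hr
  have hsub : ∀ᵐ s, s ∈ Set.Ioc c y → s ∈ A := by
    filter_upwards [N.full] with s h1 h2
    exact hx1A s h1 h2.1.le (h2.2.trans_lt hyx)
  obtain ⟨hpI, hpB⟩ := N.prof_interval hcy hsub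
  have h1 := N.tau_close hc hx1R hx1A hcy hyx
  have hI : IntervalIntegrable (fun x => |τ x - (x - c)|) volume c y :=
    (N.T.mono.intervalIntegrable.sub (Continuous.intervalIntegrable (by fun_prop) _ _)).abs
  have h2 : ∫ x in c..y, |h x - kt r (x - c)|
      ≤ ∫ x in c..y, (|kf r (τ x) - h x| + Real.sqrt 3 * |τ x - (x - c)|) := by
    refine intervalIntegral.integral_mono_on hcy ?_ (hpI.add (hI.const_mul _)) fun x hx => ?_
    · exact (N.T.integrable.intervalIntegrable.sub (Continuous.intervalIntegrable
        ((kt_continuous r).comp (by fun_prop)) _ _)).abs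
    · have h3 := kt_diff hr (N.T.abs_le x) (sub_nonneg.2 hx.1)
      have h4 := abs_sub_le (h x) (kf r (τ x)) (kt r (x - c))
      rw [abs_sub_comm (h x) (kf r (τ x))] at h4
      linarith
  rw [intervalIntegral.integral_add hpI (hI.const_mul _),
    intervalIntegral.integral_const_mul] at h2
  have h5 := mul_le_mul_of_nonneg_left h1 (Real.sqrt_nonneg 3)
  unfold cT
  linarith

lemma mass_half (N : Near r R K d A G h τ) (hc : τ c = 0) :
    ∫ x in c..(R + hw r), h x = ∫ x in c..(R + hw r), kt r (x - c) := by
  have hr := N.T.hr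
  have ha := hw_pos hr
  have hcR := _root_.abs_lt.1 (N.centre_abs_le hc)
  have h1 := N.T.eq c (R + hw r)
  rw [hc, N.T.right (R + hw r) (by linarith)] at h1
  rw [intervalIntegral.integral_comp_sub_right (fun x => kt r x), sub_self, ← h1,
    ← intervalIntegral.integral_add_adjacent_intervals (b := hw r)
      ((kt_continuous r).intervalIntegrable _ _) ((kt_continuous r).intervalIntegrable _ _)]
  have h2 : ∫ x in hw r..(R + hw r - c), kt r x = 0 := by
    rw [intervalIntegral.integral_congr (g := fun _ => 0), intervalIntegral.integral_zero]
    intro x hx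
    rw [Set.uIcc_of_le (by linarith)] at hx
    exact kt_of_ge hr (hx.1.trans (le_abs_self x))
  rw [h2, add_zero]
  refine intervalIntegral.integral_congr fun x hx => ?_
  rw [Set.uIcc_of_le ha.le] at hx
  exact (kt_of_le hr (by rw [abs_of_nonneg hx.1]; exact hx.2)).symm

/-- To the right of its centre, the profile is close to the lens profile. -/
lemma half_close (N : Near r R K d A G h τ) (hc : τ c = 0) :
    ∫ x in c..(R + hw r), |h x - kt r (x - c)| ≤ cH r R K * d := by
  have hr := N.T.hr
  have hR := N.T.hR
  have ha := hw_pos hr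
  have hd := N.dpos
  have hK := N.hK
  have hcR := _root_.abs_lt.1 (N.centre_abs_le hc)
  obtain ⟨x₁, hcx, hx1R, hafter, hx1A⟩ := N.exists_drop hc
  set B := R + hw r with hB
  set y := max c (x₁ - d) with hy
  have hcy : c ≤ y := le_max_left _ _
  have hyx : y ≤ x₁ := max_le hcx (by linarith)
  have hyd : x₁ - y ≤ d := by linarith [le_max_right c (x₁ - d)]
  have hkI : ∀ u v, IntervalIntegrable (fun x => kt r (x - c)) volume u v := fun u v =>
    Continuous.intervalIntegrable ((kt_continuous r).comp (by fun_prop)) _ _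
  have hhI : ∀ u v, IntervalIntegrable h volume u v := fun u v => N.T.integrable.intervalIntegrable
  have hcT : 0 ≤ cT r R := by unfold cT; positivity
  have h1 : ∫ x in c..y, |h x - kt r (x - c)| ≤ (1 + Real.sqrt 3 * cT r R) * K * d := by
    rcases hcx.eq_or_lt with h0 | h0
    · have : y = c := max_eq_left (by linarith)
      rw [this, intervalIntegral.integral_same]
      positivity
    · exact N.diff_interval hc hx1R hx1A hcy (max_lt h0 (by linarith))
  have h2 : ∫ x in y..B, h x ≤ ((R + 1) + (2 * R + hw r) * (K + 1)) * d := by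
    rw [← intervalIntegral.integral_add_adjacent_intervals (hhI y x₁) (hhI x₁ B)]
    have h3 : ∫ x in y..x₁, h x ≤ (x₁ - y) * (R + 1) := by
      have := intervalIntegral.integral_mono_on hyx (hhI y x₁)
        (intervalIntegrable_const (c := R + 1)) fun t _ => N.T.bdd t
      rwa [intervalIntegral.integral_const, smul_eq_mul] at this
    have h4 : ∫ x in x₁..B, h x ≤ (B - x₁) * ((K + 1) * d) := by
      have := intervalIntegral.integral_mono_ae_restrict (show x₁ ≤ B by linarith) (hhI x₁ B)
        (intervalIntegrable_const (c := (K + 1) * d)) (by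
          have hne : ∀ᵐ t : ℝ, t ≠ x₁ := by simp [ae_iff]
          rw [Filter.EventuallyLE, ae_restrict_iff' measurableSet_Icc]
          filter_upwards [hafter, hne] with t ht hne hmem
          exact ht (lt_of_le_of_ne hmem.1 (Ne.symm hne)))
      rwa [intervalIntegral.integral_const, smul_eq_mul] at this
    have h5 : (x₁ - y) * (R + 1) ≤ d * (R + 1) := by gcongr
    have h6 : (B - x₁) * ((K + 1) * d) ≤ (2 * R + hw r) * ((K + 1) * d) := by
      gcongr
      linarith
    linarith
  have h3 : ∫ x in y..B, kt r (x - c)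
      = (∫ x in y..B, h x) + ∫ x in c..y, (h x - kt r (x - c)) := by
    have h4 := N.mass_half hc
    rw [← intervalIntegral.integral_add_adjacent_intervals (hhI c y) (hhI y B),
      ← intervalIntegral.integral_add_adjacent_intervals (hkI c y) (hkI y B)] at h4
    rw [intervalIntegral.integral_sub (hhI c y) (hkI c y)]
    linarith
  have h4 : ∫ x in c..y, (h x - kt r (x - c)) ≤ ∫ x in c..y, |h x - kt r (x - c)| :=
    intervalIntegral.integral_mono_on hcy ((hhI c y).sub (hkI c y))
      ((hhI c y).sub (hkI c y)).abs fun x _ => le_abs_self _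
  have hyB : y ≤ B := by linarith
  have h5 : ∫ x in y..B, |h x - kt r (x - c)| ≤ ∫ x in y..B, (h x + kt r (x - c)) := by
    refine intervalIntegral.integral_mono_on hyB ((hhI y B).sub (hkI y B)).abs
      ((hhI y B).add (hkI y B)) fun x _ => ?_
    refine (abs_sub _ _).trans (le_of_eq ?_)
    rw [abs_of_nonneg (N.T.nonneg x), abs_of_nonneg (kt_nonneg _ _)]
  rw [intervalIntegral.integral_add (hhI y B) (hkI y B)] at h5
  have h6 := intervalIntegral.integral_add_adjacent_intervals
    ((hhI c y).sub (hkI c y)).abs ((hhI y B).sub (hkI y B)).abs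
  rw [← h6]
  unfold cH
  linarith

/-- The profile is close to a translate of the lens profile. -/
lemma close (N : Near r R K d A G h τ) (hc : τ c = 0) :
    ∫ x, |h x - kt r (x - c)| ≤ 2 * cH r R K * d := by
  have hr := N.T.hr
  have ha := hw_pos hr
  have hcR := _root_.abs_lt.1 (N.centre_abs_le hc)
  set B := R + hw r with hB
  have h1 := N.half_close hc
  have h2 := N.reflect.half_close (c := -c) (by simp [hc])
  have h3 : ∫ x in (-c)..B, |h (-x) - kt r (x - -c)| = ∫ x in (-B)..c, |h x - kt r (x - c)| := by
    have := intervalIntegral.integral_comp_neg (a := -c) (b := B)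
      (fun x => |h x - kt r (x - c)|)
    rw [neg_neg] at this
    rw [← this]
    congr 1
    ext x
    rw [← kt_neg r (x - -c)]
    ring_nf
  rw [h3] at h2
  have hI : ∀ u v, IntervalIntegrable (fun x => |h x - kt r (x - c)|) volume u v := fun u v =>
    (N.T.integrable.intervalIntegrable.sub
      (Continuous.intervalIntegrable ((kt_continuous r).comp (by fun_prop)) _ _)).abs
  have h4 := intervalIntegral.integral_add_adjacent_intervals (hI (-B) c) (hI c B)
  have h5 : ∫ x in (-B)..B, |h x - kt r (x - c)| = ∫ x, |h x - kt r (x - c)| := by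
    refine intervalIntegral.integral_eq_integral_of_support_subset fun x hx => ?_
    by_contra hn
    refine hx ?_
    have h6 : B ≤ |x| := by
      by_contra! h7
      have := _root_.abs_lt.1 h7
      exact hn ⟨this.1, this.2.le⟩
    have h7 : hw r ≤ |x - c| := by
      have := abs_sub_abs_le_abs_sub x c
      have : |c| < R := N.centre_abs_le hc
      linarith
    simp only
    rw [kt_of_ge hr h7, N.T.out x (by linarith)]
    simp
  linarith

end Near

section

/-- The abscissa that halves the mass of `h` is transported to `0`. -/
lemma Transport.exists_centre {r R : ℝ} {h τ : ℝ → ℝ} (T : Transport r R h τ) :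
    ∃ c, τ c = 0 := by
  have hr := T.hr
  have hR := T.hR
  have ha := hw_pos hr
  have hkI : ∀ u v, IntervalIntegrable (kf r) volume u v := fun u v =>
    (kf_continuous r).intervalIntegrable _ _
  have hcont : Continuous fun c => ∫ t in (-R)..c, h t :=
    intervalIntegral.continuous_primitive (fun _ _ => T.integrable.intervalIntegrable) _
  have h1 : ∀ x, ∫ t in (-R)..x, h t = ∫ t in (-hw r)..τ x, kf r t := fun x => by
    rw [← T.eq, T.left _ le_rfl]
  have h0 : 0 < ∫ t in (-hw r)..0, kf r t := kf_int_pos hr le_rfl (by linarith) ha.le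
  have h0' : 0 < ∫ t in 0..hw r, kf r t := kf_int_pos hr (by linarith) ha le_rfl
  have h2 := intervalIntegral.integral_add_adjacent_intervals (hkI (-hw r) 0) (hkI 0 (hw r))
  obtain ⟨c, -, hc⟩ := intermediate_value_Icc (show -R ≤ R by linarith) hcont.continuousOn
    (show (∫ t in (-hw r)..0, kf r t) ∈ _ from ⟨by
      rw [intervalIntegral.integral_same]; exact h0.le, by
      rw [h1, T.right _ le_rfl]; linarith⟩)
  refine ⟨c, ?_⟩
  simp only [h1] at hc
  have h3 := intervalIntegral.integral_add_adjacent_intervals (hkI (-hw r) 0) (hkI 0 (τ c))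
  have h4 := _root_.abs_le.1 (T.abs_le c)
  rcases lt_trichotomy (τ c) 0 with h5 | h5 | h5
  · have := kf_int_pos hr h4.1 h5 ha.le
    rw [intervalIntegral.integral_symm] at this
    linarith
  · exact h5
  · have := kf_int_pos hr (by linarith) h5 h4.2
    linarith

/-- The constant relating the square root of the deficit to the closeness of the profiles. -/
def cK (r R : ℝ) : ℝ := (1 + 32 * (R + 1)) * (1 + r)

namespace Config

variable {r R d : ℝ} {U : Fin 3 → Set Plane} {τ : ℝ → ℝ}

/-- A deficit of at most `d ^ 2` makes the profile close to that of the lens and the midline close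
to the axis, and makes the set of disordered sections small. -/
lemma near (C : Config R U) (T : Transport r R (hh R U) τ) (hd : 0 < d) (hd' : d ≤ 1 / 40)
    (hD : (tot R U).real Set.univ / 2 ≤ 2 * (R + 1) + 4 / r * (∫ x, hh R U x) + d ^ 2) :
    Near r R (cK r R) d (shadow U)
        {x | HasDerivAt (fun x => ∫ t in 0..x, hh R U t) (hh R U x) x} (hh R U) τ ∧
      volume.real (bad U) ≤ 4 * d ^ 2 ∧ ∀ᵐ x, |bb R U x| ≤ cK r R * d := by
  have hr := T.hr
  have hR := T.hR
  have hX : 0 < R + 1 := by linarith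
  have hG : ∀ᵐ x, x ∈ {x | HasDerivAt (fun x => ∫ t in 0..x, hh R U t) (hh R U x) x} := by
    filter_upwards [T.ae_hasDerivAt_mass] with x hx using hx 0
  have hG' : ∀ᵐ x, x ∈ {x | HasDerivAt (fun x => ∫ t in 0..x, bb R U t) (bb R U x) x} := by
    filter_upwards [LocallyIntegrable.ae_hasDerivAt_integral C.bb_integrable.locallyIntegrable]
      with x hx using hx 0
  have hbad0 : 0 ≤ volume.real (bad U) := measureReal_nonneg
  obtain ⟨p₀, hp₀, -⟩ := exists_mem_Ioo hG zero_lt_one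
  obtain ⟨p₁, hp₁, -⟩ := exists_mem_Ioo hG' zero_lt_one
  have hz : |(0 : ℝ)| ≤ 1 / 40 := by norm_num
  have hda : |d| ≤ 1 / 40 := by rwa [abs_of_pos hd]
  have hda' : |-d| ≤ 1 / 40 := by rwa [abs_neg]
  have hI : ∀ x : ℝ, 2 / r * (2 * x) = 4 / r * x := fun x => by ring
  have hK : (1 + 32 * (R + 1)) ≤ cK r R := by
    unfold cK
    nlinarith
  refine ⟨⟨T, C.isOpen_shadow, fun x => C.hh_pos, hG, hd, by linarith, ?_, ?_⟩, ?_, ?_⟩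
  -- no tilt: the remainder controls `∫ |kf ∘ τ - hh|`
  · have h1 := C.master T (d := d) le_rfl le_rfl hz hz hp₀ hp₀ hp₁ hp₁
    have h2 : 2 / r * (2 * (∫ x, hh R U x)
        + 2 * d * (∫ x in shadow U, |kf r (τ x) - hh R U x|) - d ^ 2 * (r * (R + 1)))
        = 4 / r * (∫ x, hh R U x) + d * (4 / r * (∫ x in shadow U, |kf r (τ x) - hh R U x|)
          - 2 * (R + 1) * d) := by
      field_simp; ring
    rw [h2] at h1
    simp only [mul_zero, zero_mul, add_zero, ne_eq, OfNat.ofNat_ne_zero, not_false_eq_true,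
      zero_pow, sub_zero] at h1
    have h3 : 4 / r * (∫ x in shadow U, |kf r (τ x) - hh R U x|) - 2 * (R + 1) * d ≤ d := by
      by_contra! h4
      have := mul_lt_mul_of_pos_left h4 hd
      nlinarith
    have h4 : (∫ x in shadow U, |kf r (τ x) - hh R U x|) ≤ r / 4 * (d + 2 * (R + 1) * d) := by
      rw [← sub_nonneg]
      have h5 : r / 4 * (d + 2 * (R + 1) * d) - (∫ x in shadow U, |kf r (τ x) - hh R U x|)
        = r / 4 * (d - (4 / r * (∫ x in shadow U, |kf r (τ x) - hh R U x|) - 2 * (R + 1) * d)) := by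
        field_simp; ring
      rw [h5]
      exact mul_nonneg (by positivity) (by linarith)
    refine h4.trans ?_
    rw [show r / 4 * (d + 2 * (R + 1) * d) = (r / 4 * (1 + 2 * (R + 1))) * d by ring]
    refine mul_le_mul_of_nonneg_right ?_ hd.le
    unfold cK
    nlinarith [mul_pos hr hX]
  · intro p hp q hq hpq
    -- tilting by `± d` on `[p, q)` bounds the linear term by a multiple of `d ^ 2 / d`
    have h1 := C.master T (d := 0) hpq le_rfl hda hz hp hq hp₁ hp₁
    have h2 := C.master T (d := 0) hpq le_rfl hda' hz hp hq hp₁ hp₁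
    simp only [mul_zero, zero_mul, add_zero, ne_eq, OfNat.ofNat_ne_zero, not_false_eq_true,
      zero_pow, sub_zero, hI] at h1 h2
    set g := hh R U q - hh R U p + ∫ x in shadow U ∩ Set.Ico p q, kslope r (τ x)
    have h3 : |g| ≤ (1 + 32 * (R + 1)) * d := by
      rw [_root_.abs_le]
      constructor
      · by_contra! h4
        have := mul_lt_mul_of_pos_left h4 hd
        nlinarith
      · by_contra! h4
        have := mul_lt_mul_of_pos_left h4 hd
        nlinarith
    exact h3.trans (mul_le_mul_of_nonneg_right hK hd.le)
  -- no tilt and no remainder: only the term of the disordered sections is left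
  · have h1 := C.master T (d := 0) le_rfl le_rfl hz hz hp₀ hp₀ hp₁ hp₁
    simp only [mul_zero, zero_mul, add_zero, ne_eq, OfNat.ofNat_ne_zero, not_false_eq_true,
      zero_pow, sub_zero, hI] at h1
    linarith
  · filter_upwards [hG'] with q hq
    -- tilting the interface by `± d` from a point `p` outside the configuration up to `q`
    obtain ⟨p, hp, -, h4⟩ := exists_mem_Ioo hG' (show min (-R) q - 1 < min (-R) q by linarith)
    have hpR : p < -R := h4.trans_le (min_le_left _ _)
    have hpq : p < q := h4.trans_le (min_le_right _ _)
    have hb : bb R U p = 0 := C.bb_out (lt_abs.2 (Or.inr (by linarith)))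
    have h1 := C.master T (d := 0) le_rfl hpq.le hz hda hp₀ hp₀ hp hq
    have h2 := C.master T (d := 0) le_rfl hpq.le hz hda' hp₀ hp₀ hp hq
    rw [hb] at h1 h2
    simp only [mul_zero, zero_mul, add_zero, ne_eq, OfNat.ofNat_ne_zero, not_false_eq_true,
      zero_pow, sub_zero, hI] at h1 h2
    have h3 : |bb R U q| ≤ (1 + 32 * (R + 1)) * d := by
      rw [_root_.abs_le]
      constructor
      · by_contra! h4
        have := mul_lt_mul_of_pos_left h4 hd
        nlinarith
      · by_contra! h4
        have := mul_lt_mul_of_pos_left h4 hd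
        nlinarith
    exact h3.trans (mul_le_mul_of_nonneg_right hK hd.le)

end Config

/-! ### From closeness of profiles to the asymmetry -/

section

lemma lensRadius_pos {m : ℝ} (hm : 0 < m) : 0 < lensRadius m := by
  have h1 : Real.sqrt 3 < 1.74 := sqrt3_hi
  have h2 := Real.pi_gt_three
  exact mul_pos (Real.sqrt_pos.2 hm) (Real.rpow_pos_of_pos (by linarith) _)

lemma lens_mem {m : ℝ} (hm : 0 < m) (t y : ℝ) :
    pt t y ∈ stdLens m ↔ |y| < kt (lensRadius m) t := by
  have hr := lensRadius_pos hm
  have h1 : pt t y ∈ stdLens m ↔ |t| < hw (lensRadius m) ∧ |y| < kf (lensRadius m) t := by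
    unfold stdLens hw kf
    simp only [Set.mem_ofPred_eq, pt_zero, pt_one]
  rw [h1]
  constructor
  · rintro ⟨h2, h3⟩
    rwa [kt_of_le hr h2.le]
  · intro h2
    have h3 : |t| < hw (lensRadius m) := by
      by_contra! h4
      rw [kt_of_ge hr h4] at h2
      exact absurd (abs_nonneg y) (not_le.2 h2)
    exact ⟨h3, by rwa [← kt_of_le hr h3.le]⟩

lemma lens_one_mem {m : ℝ} (hm : 0 < m) (t y : ℝ) :
    pt t y ∈ lensPartition m 1 ↔ 0 < y ∧ kt (lensRadius m) t ≤ y := by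
  have : pt t y ∈ lensPartition m 1 ↔ 0 < y ∧ pt t y ∉ stdLens m := by
    simp [lensPartition]
  rw [this, lens_mem hm]
  refine and_congr_right fun h => ?_
  rw [not_lt, abs_of_pos h]

lemma lens_two_mem {m : ℝ} (hm : 0 < m) (t y : ℝ) :
    pt t y ∈ lensPartition m 2 ↔ y < 0 ∧ y ≤ -kt (lensRadius m) t := by
  have : pt t y ∈ lensPartition m 2 ↔ y < 0 ∧ pt t y ∉ stdLens m := by
    simp [lensPartition]
  rw [this, lens_mem hm]
  refine and_congr_right fun h => ?_
  rw [not_lt, abs_of_neg h, le_neg]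

lemma lens_zero_mem {m : ℝ} (hm : 0 < m) (t y : ℝ) :
    pt t y ∈ lensPartition m 0 ↔ |y| < kt (lensRadius m) t := by
  rw [← lens_mem hm]; rfl

lemma kt_le {r t : ℝ} (hr : 0 < r) : kt r t ≤ r / 2 := max_le (kf_le hr) (by linarith)

lemma lensPartition_measurable (m : ℝ) (i : Fin 3) : MeasurableSet (lensPartition m i) := by
  have h0 : MeasurableSet (stdLens m) := by
    have h1 : IsOpen {p : Plane | |p 0| < Real.sqrt 3 / 2 * lensRadius m} :=
      isOpen_lt (by fun_prop) (by fun_prop)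
    have h2 : IsOpen {p : Plane | |p 1| < Real.sqrt (lensRadius m ^ 2 - (p 0) ^ 2)
        - lensRadius m / 2} := isOpen_lt (by fun_prop) (by fun_prop)
    exact (h1.inter h2).measurableSet
  have h1 : MeasurableSet {p : Plane | 0 < p 1} :=
    (isOpen_lt continuous_const (continuous_coord 1)).measurableSet
  have h2 : MeasurableSet {p : Plane | p 1 < 0} :=
    (isOpen_lt (continuous_coord 1) continuous_const).measurableSet
  fin_cases i
  · exact h0
  · exact MeasurableSet.diff h1 h0
  · exact MeasurableSet.diff h2 h0

namespace Config

variable {m R : ℝ} {U : Fin 3 → Set Plane}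

/-- Over a section along which the three sets are stacked in order, the sections of `U 2` and `U 1`
are half-lines, up to the endpoints and to points outside the partition. -/
lemma good_section (C : Config R U) {x : ℝ} (hx : x ∉ bad U)
    (hn : volume {y | pt x y ∉ ⋃ i, U i} = 0) {y : ℝ} (hy : pt x y ∈ ⋃ i, U i) :
    (pt x y ∈ U 1 → bb R U x + hh R U x ≤ y) ∧ (pt x y ∉ U 1 → y ≤ bb R U x + hh R U x) ∧
    (pt x y ∈ U 2 → y ≤ bb R U x - hh R U x) ∧ (pt x y ∉ U 2 → bb R U x - hh R U x ≤ y) := by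
  have hR := C.pos
  have hsum := C.esec_sum hn
  have hu : bb R U x + hh R U x = (R + 1) - esec R U 1 x := by unfold bb hh; linarith
  have hw : bb R U x - hh R U x = esec R U 2 x - (R + 1) := by unfold bb hh; linarith
  rw [hu, hw]
  have e1 := esec_nonneg (R := R) (U := U) 1 x
  have e2 := esec_nonneg (R := R) (U := U) 2 x
  have hord1 : ∀ y1 y2, y1 < y2 → pt x y1 ∈ U 1 → pt x y2 ∉ U 0 ∧ pt x y2 ∉ U 2 := by
    intro y1 y2 h h1
    constructor <;> intro h2
    · exact hx (Or.inl ⟨y1, y2, h, h1, Or.inl h2⟩)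
    · exact hx (Or.inl ⟨y1, y2, h, h1, Or.inr h2⟩)
  have hord2 : ∀ y1 y2, y1 < y2 → pt x y2 ∈ U 2 → pt x y1 ∉ U 0 ∧ pt x y1 ∉ U 1 := by
    intro y1 y2 h h1
    constructor <;> intro h2
    · exact hx (Or.inr ⟨y1, y2, h, Or.inl h2, h1⟩)
    · exact hx (Or.inr ⟨y1, y2, h, Or.inr h2, h1⟩)
  have hcases : ∀ y, pt x y ∈ ⋃ i, U i → pt x y ∈ U 0 ∨ pt x y ∈ U 1 ∨ pt x y ∈ U 2 := by
    intro y hy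
    obtain ⟨i, hi⟩ := Set.mem_iUnion.1 hy
    fin_cases i
    · exact Or.inl hi
    · exact Or.inr (Or.inl hi)
    · exact Or.inr (Or.inr hi)
  have key : ∀ i a b, a ≤ b →
      ({y | y ∈ Set.Ioo (-(R + 1)) (R + 1) ∧ pt x y ∈ U i} ⊆ Set.Icc a b → esec R U i x ≤ b - a) ∧
      (Set.Ioo a b \ {y | pt x y ∉ ⋃ i, U i} ⊆
        {y | y ∈ Set.Ioo (-(R + 1)) (R + 1) ∧ pt x y ∈ U i} → b - a ≤ esec R U i x) := by
    intro i a b hab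
    have hfin := ((sec_vol_le (U i) (-(R + 1)) (R + 1) x).trans_lt ENNReal.ofReal_lt_top)
    constructor
    · intro h
      have h1 := measure_mono (μ := volume) h
      rw [Real.volume_Icc] at h1
      exact ENNReal.toReal_le_of_le_ofReal (by linarith) h1
    · intro h
      have h1 := measure_mono (μ := volume) h
      rw [measure_sdiff_null hn, Real.volume_Ioo] at h1
      exact (ENNReal.ofReal_le_iff_le_toReal hfin.ne).1 h1
  have hyc := hcases y hy
  refine ⟨fun h => ?_, fun h => ?_, fun h => ?_, fun h => ?_⟩
  · rcases le_or_gt (R + 1) y with h1 | h1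
    · linarith
    · have := (key 1 y (R + 1) h1.le).2 (by
        rintro z ⟨hz, hz'⟩
        have hyR : -(R + 1) < y := by
          by_contra! h2
          exact C.not_mem (i := 1) (j := 2) (by decide) (C.bot_mem x (by linarith)) h
        refine ⟨⟨hyR.trans hz.1, hz.2⟩, ?_⟩
        have h2 := hord1 y z hz.1 h
        have := hcases z (not_not.1 hz')
        tauto)
      linarith
  · have h1 : y ≤ R := by
      by_contra! h1
      exact h (C.top_mem x h1)
    have := (key 1 y (R + 1) (by linarith)).1 (by
      rintro z ⟨hz, hz'⟩
      refine ⟨?_, hz.2.le⟩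
      by_contra! h2
      have := hord1 z y h2 hz'
      tauto)
    linarith
  · rcases le_or_gt y (-(R + 1)) with h1 | h1
    · linarith
    · have := (key 2 (-(R + 1)) y h1.le).2 (by
        rintro z ⟨hz, hz'⟩
        have hyR : y < R + 1 := by
          by_contra! h2
          exact C.not_mem (i := 2) (j := 1) (by decide) (C.top_mem x (by linarith)) h
        refine ⟨⟨hz.1, hz.2.trans hyR⟩, ?_⟩
        have h2 := hord2 z y hz.2 h
        have := hcases z (not_not.1 hz')
        tauto)
      linarith
  · have h1 : -R ≤ y := by
      by_contra! h1
      exact h (C.bot_mem x h1)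
    have := (key 2 (-(R + 1)) y (by linarith)).1 (by
      rintro z ⟨hz, hz'⟩
      refine ⟨hz.1.le, ?_⟩
      by_contra! h2
      have := hord2 y z h2 hz'
      tauto)
    linarith

/-- The part of a section on which the partition differs from the translated lens partition. -/
def _root_.mism (m c : ℝ) (U : Fin 3 → Set Plane) (i : Fin 3) (x : ℝ) : Set ℝ :=
  {y | (pt x y ∈ U i ∧ pt (x - c) y ∉ lensPartition m i) ∨
    (pt (x - c) y ∈ lensPartition m i ∧ pt x y ∉ U i)}

/-- On an ordered section, `U 1` lies above `b + h`, `U 2` lies below `b - h` and `U 0` lies in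
between, so the mismatch is contained in the intervals between these heights and `± k`. -/
lemma mism_good (C : Config R U) (hm : 0 < m) (c : ℝ) (i : Fin 3) {x : ℝ} (hx : x ∉ bad U)
    (hn : volume {y | pt x y ∉ ⋃ i, U i} = 0) :
    volume (mism m c U i x)
      ≤ ENNReal.ofReal (2 * |bb R U x| + 2 * |hh R U x - kt (lensRadius m) (x - c)|) := by
  set k := kt (lensRadius m) (x - c) with hk
  have hk0 : 0 ≤ k := kt_nonneg _ _
  set u := bb R U x + hh R U x with hu
  set w := bb R U x - hh R U x with hw
  have hsub : mism m c U i x ⊆ (Set.uIcc k u ∪ Set.uIcc w (-k)) ∪ {y | pt x y ∉ ⋃ i, U i} := by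
    intro y hy
    by_cases hyU : pt x y ∈ ⋃ i, U i
    swap
    · exact Or.inr hyU
    left
    obtain ⟨g1, g2, g3, g4⟩ := C.good_section hx hn hyU
    have d01 : pt x y ∈ U 0 → pt x y ∉ U 1 := fun h => C.not_mem (by decide) h
    have d02 : pt x y ∈ U 0 → pt x y ∉ U 2 := fun h => C.not_mem (by decide) h
    have hcase : pt x y ∉ U 0 → pt x y ∈ U 1 ∨ pt x y ∈ U 2 := by
      intro h
      obtain ⟨j, hj⟩ := Set.mem_iUnion.1 hyU
      fin_cases j
      · exact absurd hj h
      · exact Or.inl hj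
      · exact Or.inr hj
    simp only [Set.mem_union, Set.mem_uIcc]
    fin_cases i
    · rcases hy with ⟨h1, h2⟩ | ⟨h1, h2⟩
      · have h2' : ¬ |y| < k := fun h => h2 ((lens_zero_mem hm _ _).2 h)
        have g2' := g2 (d01 h1)
        have g4' := g4 (d02 h1)
        rcases le_abs.1 (not_lt.1 h2') with h | h
        · exact Or.inl (Or.inl ⟨h, g2'⟩)
        · exact Or.inr (Or.inl ⟨g4', by linarith⟩)
      · have h1' := _root_.abs_lt.1 ((lens_zero_mem hm _ _).1 h1)
        rcases hcase h2 with h | h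
        · exact Or.inl (Or.inr ⟨g1 h, h1'.2.le⟩)
        · exact Or.inr (Or.inr ⟨h1'.1.le, g3 h⟩)
    · left
      rcases hy with ⟨h1, h2⟩ | ⟨h1, h2⟩
      · right
        refine ⟨g1 h1, ?_⟩
        by_contra! h3
        exact h2 ((lens_one_mem hm _ _).2 ⟨hk0.trans_lt h3, h3.le⟩)
      · left
        exact ⟨((lens_one_mem hm _ _).1 h1).2, g2 h2⟩
    · right
      rcases hy with ⟨h1, h2⟩ | ⟨h1, h2⟩
      · right
        refine ⟨?_, g3 h1⟩
        by_contra! h3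
        exact h2 ((lens_two_mem hm _ _).2 ⟨by linarith, h3.le⟩)
      · left
        exact ⟨g4 h2, ((lens_two_mem hm _ _).1 h1).2⟩
  have h1 : volume (mism m c U i x) ≤ ENNReal.ofReal |u - k| + ENNReal.ofReal |-k - w| := by
    refine (measure_mono hsub).trans ((measure_union_le _ _).trans ?_)
    rw [hn, add_zero]
    refine (measure_union_le _ _).trans ?_
    rw [Real.volume_interval, Real.volume_interval]
  refine h1.trans ?_
  rw [← ENNReal.ofReal_add (abs_nonneg _) (abs_nonneg _)]
  refine ENNReal.ofReal_le_ofReal ?_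
  have h2 := abs_add_le (bb R U x) (hh R U x - k)
  have h3 := abs_sub (hh R U x - k) (bb R U x)
  have e1 : u - k = bb R U x + (hh R U x - k) := by rw [hu]; ring
  have e2 : -k - w = hh R U x - k - bb R U x := by rw [hw]; ring
  rw [e1, e2]
  linarith

lemma mism_bad (C : Config R U) (hm : 0 < m) (c : ℝ) (i : Fin 3) (x : ℝ) :
    volume (mism m c U i x) ≤ ENNReal.ofReal (2 * (R + lensRadius m)) := by
  have hr := lensRadius_pos hm
  have hR := C.pos
  have hk := kt_le (t := x - c) hr
  have hk0 := kt_nonneg (lensRadius m) (x - c)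
  have hsub : mism m c U i x ⊆ Set.Icc (-(R + lensRadius m)) (R + lensRadius m) := by
    intro y hy
    by_contra hn
    have h1 : R + lensRadius m < |y| := by
      by_contra! h
      exact hn (_root_.abs_le.1 h)
    have hz : pt x y ∉ U 0 := C.zero_out (Or.inr (by rw [pt_one]; linarith))
    rcases lt_abs.1 h1 with h2 | h2
    · have hU := C.top_mem x (y := y) (by linarith)
      have hU2 : pt x y ∉ U 2 := C.not_mem (by decide) hU
      have l0 : pt (x - c) y ∉ lensPartition m 0 := by
        rw [lens_zero_mem hm]; linarith
      have l1 : pt (x - c) y ∈ lensPartition m 1 := by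
        rw [lens_one_mem hm]; constructor <;> linarith
      have l2 : pt (x - c) y ∉ lensPartition m 2 := by
        rw [lens_two_mem hm]; intro h; linarith [h.1]
      unfold mism at hy
      fin_cases i <;> simp only [Set.mem_ofPred_eq, Fin.zero_eta, Fin.mk_one, Fin.reduceFinMk]
        at hy <;> tauto
    · have hU := C.bot_mem x (y := y) (by linarith)
      have hU2 : pt x y ∉ U 1 := C.not_mem (by decide) hU
      have l0 : pt (x - c) y ∉ lensPartition m 0 := by
        rw [lens_zero_mem hm]; linarith
      have l1 : pt (x - c) y ∈ lensPartition m 2 := by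
        rw [lens_two_mem hm]; constructor <;> linarith
      have l2 : pt (x - c) y ∉ lensPartition m 1 := by
        rw [lens_one_mem hm]; intro h; linarith [h.1]
      unfold mism at hy
      fin_cases i <;> simp only [Set.mem_ofPred_eq, Fin.zero_eta, Fin.mk_one, Fin.reduceFinMk]
        at hy <;> tauto
  refine (measure_mono hsub).trans ?_
  rw [Real.volume_Icc]
  exact ENNReal.ofReal_le_ofReal (by linarith)

/-- Fubini over the vertical sections. -/
lemma vol_mism (C : Config R U) (m c : ℝ) (i : Fin 3) :
    volume ({p | p + pt c 0 ∈ U i} ∆ lensPartition m i) = ∫⁻ x, volume (mism m c U i x) := by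
  have h1 : MeasurableSet {p | p + pt c 0 ∈ U i} :=
    ((C.op i).preimage (continuous_id.add continuous_const)).measurableSet
  rw [vol_eq_lintegral (h1.symmDiff (lensPartition_measurable m i)),
    ← lintegral_sub_right_eq_self _ c]
  refine lintegral_congr fun x => ?_
  congr 1
  ext y
  have h2 : pt (x - c) y + pt c 0 = pt x y := by
    ext j; fin_cases j <;> simp [pt]
  simp only [mism, Set.mem_symmDiff, Set.mem_ofPred_eq, h2]

/-- The constant in the bound of the asymmetry by the square root of the deficit. -/
def _root_.cA (r R : ℝ) : ℝ := 4 * R * cK r R + 4 * cH r R (cK r R) + 8 * (R + r)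

/-- A deficit of at most `d ^ 2` makes the partition `d`-close to a translated lens partition. -/
lemma asym_le (C : Config R U) (hm : 0 < m) {τ : ℝ → ℝ} (T : Transport (lensRadius m) R (hh R U) τ)
    {d : ℝ} (hd : 0 < d) (hd' : d ≤ 1 / 40)
    (hD : (tot R U).real Set.univ / 2
      ≤ 2 * (R + 1) + 4 / lensRadius m * (∫ x, hh R U x) + d ^ 2) :
    ∃ c, ∀ i, volume ({p | p + pt c 0 ∈ U i} ∆ lensPartition m i)
      ≤ ENNReal.ofReal (cA (lensRadius m) R * d) := by
  obtain ⟨N, hbad, hbb⟩ := C.near T hd hd' hD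
  obtain ⟨c, hc⟩ := T.exists_centre
  have hcl := N.close hc
  have hr := T.hr
  have hR := T.hR
  have hRc := N.centre_abs_le hc
  refine ⟨c, fun i => ?_⟩
  rw [C.vol_mism]
  set r := lensRadius m with hr'
  set g : ℝ → ℝ := fun x => |hh R U x - kt r (x - c)| with hg
  have hgI : Integrable g := by
    refine integrable_of_out (R := R + hw r + R) (B := (R + 1) + r / 2) ?_ ?_ ?_
    · exact (C.hh_measurable.sub ((kt_continuous r).measurable.comp
        (measurable_id.sub_const c))).abs
    · intro x
      have h1 := abs_sub (hh R U x) (kt r (x - c))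
      rw [abs_of_nonneg (hh_nonneg R U x), abs_of_nonneg (kt_nonneg _ _)] at h1
      have := C.hh_le x
      have := kt_le (t := x - c) hr
      rw [hg, abs_abs]
      linarith
    · intro x hx
      have ha := hw_pos hr
      have h7 : hw r ≤ |x - c| := by
        have := abs_sub_abs_le_abs_sub x c
        linarith
      simp only [hg]
      rw [kt_of_ge hr h7, C.hh_out (by linarith)]
      simp
  have hbI : Integrable fun x => |bb R U x| := C.bb_integrable.abs
  have hbadm := C.isOpen_bad.measurableSet
  have hbadfin : volume (bad U) ≠ ⊤ :=
    ne_top_of_le_ne_top measure_Icc_lt_top.ne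
      (measure_mono fun x hx => (_root_.abs_le.1 (C.bad_abs_le hx) : x ∈ Set.Icc (-R) R))
  have hiI : Integrable ((bad U).indicator fun _ => 2 * (R + r)) :=
    (integrable_indicator_iff hbadm).2 (integrableOn_const hbadfin)
  have hall : Integrable fun x => 2 * |bb R U x| + 2 * g x
      + (bad U).indicator (fun _ => 2 * (R + r)) x :=
    ((hbI.const_mul 2).add (hgI.const_mul 2)).add hiI
  have h1 : ∫⁻ x, volume (mism m c U i x) ≤ ∫⁻ x, ENNReal.ofReal (2 * |bb R U x| + 2 * g x
      + (bad U).indicator (fun _ => 2 * (R + r)) x) := by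
    refine lintegral_mono_ae ?_
    filter_upwards [C.ae_null] with x hn
    -- disordered sections admit only the trivial bound, but they form a set of measure `O(d ^ 2)`
    by_cases hx : x ∈ bad U
    · refine (C.mism_bad hm c i x).trans (ENNReal.ofReal_le_ofReal ?_)
      rw [Set.indicator_of_mem hx]
      have : 0 ≤ g x := abs_nonneg _
      have := abs_nonneg (bb R U x)
      linarith
    · rw [Set.indicator_of_notMem hx, add_zero]
      exact C.mism_good hm c i hx hn
  have hi0 : ∀ x, 0 ≤ (bad U).indicator (fun _ => 2 * (R + r)) x := fun x =>
    Set.indicator_nonneg (fun _ _ => by positivity) x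
  rw [← ofReal_integral_eq_lintegral_ofReal hall (Filter.Eventually.of_forall fun x => by
    have : 0 ≤ g x := abs_nonneg _
    have := abs_nonneg (bb R U x)
    have := hi0 x
    show (0 : ℝ) ≤ _
    linarith)] at h1
  refine h1.trans (ENNReal.ofReal_le_ofReal ?_)
  have hbg : Integrable fun x => 2 * |bb R U x| + 2 * g x :=
    (hbI.const_mul 2).add (hgI.const_mul 2)
  have hb2 : Integrable fun x => 2 * |bb R U x| := hbI.const_mul 2
  have hg2 : Integrable fun x => 2 * g x := hgI.const_mul 2
  rw [integral_add hbg hiI, integral_add hb2 hg2, integral_const_mul, integral_const_mul,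
    integral_indicator hbadm, setIntegral_const, smul_eq_mul]
  have h2 : ∫ x, |bb R U x| ≤ 2 * R * (cK r R * d) := by
    have h3 : ∫ x, |bb R U x| = ∫ x in Set.Icc (-R) R, |bb R U x| := by
      refine (setIntegral_eq_integral_of_forall_compl_eq_zero fun x hx => ?_).symm
      rw [C.bb_out (by by_contra! h; exact hx (_root_.abs_le.1 h)), abs_zero]
    have h4 : ∫ x in Set.Icc (-R) R, |bb R U x| ≤ ∫ x in Set.Icc (-R) R, cK r R * d :=
      integral_mono_ae hbI.integrableOn (integrableOn_const measure_Icc_lt_top.ne)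
        (ae_restrict_of_ae hbb)
    rw [setIntegral_const, Real.volume_real_Icc_of_le (by linarith), smul_eq_mul] at h4
    rw [h3]
    linarith
  have h3 : volume.real (bad U) * (2 * (R + r)) ≤ 4 * d * (2 * (R + r)) := by
    refine mul_le_mul_of_nonneg_right (hbad.trans ?_) (by positivity)
    nlinarith
  have h4 : ∫ x, g x ≤ 2 * cH r R (cK r R) * d := hcl
  unfold cA
  linarith

end Config

/-! ### Measure-theoretic interiors -/

section

/-- The measure-theoretic interior: the points with a ball around them that is contained in `E`
up to a null set. -/
def essInt (E : Set Plane) : Set Plane := {x | ∃ ρ > 0, volume (Metric.ball x ρ \ E) = 0}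

lemma isOpen_essInt (E : Set Plane) : IsOpen (essInt E) := by
  rw [Metric.isOpen_iff]
  rintro x ⟨ρ, hρ, h⟩
  refine ⟨ρ, hρ, fun y hy => ?_⟩
  rw [Metric.mem_ball] at hy
  refine ⟨ρ - dist y x, by linarith, measure_mono_null (Set.sdiff_subset_sdiff_left ?_) h⟩
  exact Metric.ball_subset_ball' (by linarith)

lemma essInt_diff_null (E : Set Plane) : volume (essInt E \ E) = 0 := by
  refine measure_null_of_locally_null _ fun x hx => ?_
  obtain ⟨ρ, hρ, h⟩ := hx.1
  refine ⟨Metric.ball x ρ ∩ (essInt E \ E), ?_, measure_mono_null ?_ h⟩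
  · exact Filter.inter_mem (mem_nhdsWithin_of_mem_nhds (Metric.ball_mem_nhds x hρ))
      self_mem_nhdsWithin
  · rintro y ⟨h1, h2⟩
    exact ⟨h1, h2.2⟩

lemma mem_essInt_of_open {E V : Set Plane} (hV : IsOpen V) (hVE : volume (V \ E) = 0) {x : Plane}
    (hx : x ∈ V) : x ∈ essInt E := by
  obtain ⟨ρ, hρ, h⟩ := Metric.isOpen_iff.1 hV x hx
  exact ⟨ρ, hρ, measure_mono_null (Set.sdiff_subset_sdiff_left h) hVE⟩

lemma interior_subset_essInt (E : Set Plane) : interior E ⊆ essInt E := fun x hx =>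
  mem_essInt_of_open isOpen_interior
    (by rw [Set.sdiff_eq_empty.2 interior_subset]; exact measure_empty) hx

lemma essInt_congr {E F V : Set Plane} (hV : IsOpen V) (h : volume ((E ∆ F) ∩ V) = 0) :
    essInt E ∩ V = essInt F ∩ V := by
  have key : ∀ E F : Set Plane, volume ((E ∆ F) ∩ V) = 0 → essInt E ∩ V ⊆ essInt F ∩ V := by
    rintro E F h x ⟨hx, hxV⟩
    refine ⟨mem_essInt_of_open (hV.inter (isOpen_essInt E)) ?_ ⟨hxV, hx⟩, hxV⟩
    refine measure_mono_null (t := ((E ∆ F) ∩ V) ∪ (essInt E \ E)) ?_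
      (measure_union_null h (essInt_diff_null E))
    rintro y ⟨⟨h1, h2⟩, h3⟩
    by_cases h4 : y ∈ E
    · exact Or.inl ⟨Or.inl ⟨h4, h3⟩, h1⟩
    · exact Or.inr ⟨h2, h4⟩
  refine subset_antisymm (key E F h) (key F E ?_)
  rwa [symmDiff_comm]

lemma exists_mem_of_null {E V : Set Plane} (hV : IsOpen V) (hne : V.Nonempty)
    (h : volume (V \ E) = 0) : (V ∩ E).Nonempty := by
  by_contra hn
  rw [Set.not_nonempty_iff_eq_empty] at hn
  have h1 : V ⊆ V \ E := fun x hx => ⟨hx, fun hE => by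
    have : x ∈ V ∩ E := ⟨hx, hE⟩
    rw [hn] at this
    exact this⟩
  exact (hV.measure_pos volume hne).ne' (measure_mono_null h1 h)

lemma frontier_essInt_subset (E : Set Plane) : frontier (essInt E) ⊆ frontier E := by
  intro x hx
  rw [(isOpen_essInt E).frontier_eq] at hx
  refine ⟨?_, fun h => hx.2 (interior_subset_essInt E h)⟩
  rw [mem_closure_iff]
  intro V hV hxV
  obtain ⟨y, hyV, hy⟩ := mem_closure_iff.1 hx.1 V hV hxV
  obtain ⟨z, hz, hzE⟩ := exists_mem_of_null (hV.inter (isOpen_essInt E)) ⟨y, hyV, hy⟩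
    (measure_mono_null (t := essInt E \ E) (fun z hz => ⟨hz.1.2, hz.2⟩) (essInt_diff_null E))
  exact ⟨z, hz.1, hzE⟩

/-- Where `E` and `F` agree up to a null set, the measure-theoretic interior of `E` has its frontier
in that of `F`. -/
lemma frontier_essInt_inter {E F V : Set Plane} (hV : IsOpen V)
    (h : volume ((E ∆ F) ∩ V) = 0) : frontier (essInt E) ∩ V ⊆ frontier F := by
  rw [← frontier_inter_open_inter hV, essInt_congr hV h, frontier_inter_open_inter hV]
  exact Set.inter_subset_left.trans (frontier_essInt_subset F)

lemma essInt_disjoint {E F : Set Plane} (h : volume (E ∩ F) = 0) :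
    Disjoint (essInt E) (essInt F) := by
  rw [Set.disjoint_left]
  intro x hx hy
  obtain ⟨z, hz, hzE⟩ := exists_mem_of_null (E := ∅)
    ((isOpen_essInt E).inter (isOpen_essInt F)) ⟨x, hx, hy⟩ (by
      refine measure_mono_null (t := (E ∩ F) ∪ ((essInt E \ E) ∪ (essInt F \ F))) ?_
        (measure_union_null h (measure_union_null (essInt_diff_null E) (essInt_diff_null F)))
      rintro y ⟨⟨h1, h2⟩, -⟩
      by_cases h3 : y ∈ E
      · by_cases h4 : y ∈ F
        · exact Or.inl ⟨h3, h4⟩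
        · exact Or.inr (Or.inr ⟨h2, h4⟩)
      · exact Or.inr (Or.inl ⟨h1, h3⟩))
  exact hzE

/-- A point outside all the frontiers is interior to some `E i`, as otherwise a neighbourhood of it
would be missed by all the sets. -/
lemma essInt_cover {E : Fin 3 → Set Plane} (h : volume (⋃ i, E i)ᶜ = 0) :
    (⋃ i, essInt (E i))ᶜ ⊆ ⋃ i, frontier (E i) := by
  intro x hx
  by_contra hn
  rw [Set.mem_iUnion, not_exists] at hn
  have h1 : ∀ i, x ∉ interior (E i) := fun i hi =>
    hx (Set.mem_iUnion.2 ⟨i, interior_subset_essInt _ hi⟩)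
  have h2 : ∀ i, x ∉ closure (E i) := fun i hi => hn i ⟨hi, h1 i⟩
  have h3 : x ∈ ⋂ i, (closure (E i))ᶜ := Set.mem_iInter.2 h2
  have hO : IsOpen (⋂ i, (closure (E i))ᶜ) := isOpen_iInter_of_finite fun i =>
    isClosed_closure.isOpen_compl
  refine (hO.measure_pos volume ⟨x, h3⟩).ne' (measure_mono_null ?_ h)
  intro y hy hyE
  obtain ⟨i, hi⟩ := Set.mem_iUnion.1 hyE
  exact Set.mem_iInter.1 hy i (subset_closure hi)

/-- A planar set of finite length has zero area. -/
lemma volume_zero_of_length {S : Set Plane} (h : μH[1] S ≠ ⊤) : volume S = 0 := by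
  have h1 : μH[2] S = 0 := by
    rcases Measure.hausdorffMeasure_zero_or_top (show (1 : ℝ) < 2 by norm_num) S with h2 | h2
    · exact h2
    · exact absurd h2 h
  have h2 : (μH[2] : Measure Plane).IsAddHaarMeasure := by
    have := MeasureTheory.isAddHaarMeasure_hausdorffMeasure (E := Plane)
    simpa using this
  exact (Measure.absolutelyContinuous_isAddHaarMeasure volume (μH[2] : Measure Plane)) h1

/-! ### The length of the lens partition -/

section

lemma dist_pt (a b a' b' : ℝ) :
    dist (pt a b) (pt a' b') = Real.sqrt ((a - a') ^ 2 + (b - b') ^ 2) := by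
  rw [EuclideanSpace.dist_eq]
  simp [Fin.sum_univ_two, Real.dist_eq, sq_abs]

lemma arc_length_le {r : ℝ} (hr : 0 < r) (σ : ℝ) (hσ : σ ^ 2 = 1) :
    μH[1] ((fun θ => pt (r * Real.sin θ) (σ * (r * Real.cos θ - r / 2))) ''
      Set.Icc (-(Real.pi / 3)) (Real.pi / 3)) ≤ ENNReal.ofReal (r * (2 * Real.pi / 3)) := by
  have hL : LipschitzWith r.toNNReal
      (fun θ => pt (r * Real.sin θ) (σ * (r * Real.cos θ - r / 2))) := by
    refine LipschitzWith.of_dist_le_mul fun a b => ?_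
    rw [dist_pt, Real.coe_toNNReal _ hr.le]
    refine Real.sqrt_le_iff.2 ⟨by positivity, ?_⟩
    have h1 := Real.one_sub_sq_div_two_le_cos (x := a - b)
    rw [Real.cos_sub] at h1
    have h2 := Real.sin_sq_add_cos_sq a
    have h3 := Real.sin_sq_add_cos_sq b
    rw [Real.dist_eq, mul_pow, sq_abs]
    have h4 : (r * Real.sin a - r * Real.sin b) ^ 2
        + (σ * (r * Real.cos a - r / 2) - σ * (r * Real.cos b - r / 2)) ^ 2
        = r ^ 2 * ((Real.sin a - Real.sin b) ^ 2 + σ ^ 2 * (Real.cos a - Real.cos b) ^ 2) := by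
      ring
    rw [h4, hσ]
    refine mul_le_mul_of_nonneg_left ?_ (sq_nonneg r)
    nlinarith
  refine (hL.lipschitzOnWith.hausdorffMeasure_image_le zero_le_one).trans (le_of_eq ?_)
  rw [ENNReal.rpow_one, hausdorffMeasure_real, Real.volume_Icc]
  change ENNReal.ofReal r * _ = _
  rw [← ENNReal.ofReal_mul hr.le]
  congr 1; ring

lemma segment_length_le (σ a b : ℝ) (hσ : σ ^ 2 = 1) :
    μH[1] ((fun x => pt (σ * x) 0) '' Set.Icc a b) ≤ ENNReal.ofReal (b - a) := by
  have hL : LipschitzWith 1 (fun x => pt (σ * x) 0) := by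
    refine LipschitzWith.of_dist_le_mul fun x y => ?_
    rw [dist_pt, Real.dist_eq, NNReal.coe_one, one_mul]
    have : (σ * x - σ * y) ^ 2 + ((0 : ℝ) - 0) ^ 2 = (x - y) ^ 2 := by
      have : (σ * x - σ * y) ^ 2 + ((0 : ℝ) - 0) ^ 2 = σ ^ 2 * (x - y) ^ 2 := by ring
      rw [this, hσ, one_mul]
    rw [this, Real.sqrt_sq_eq_abs]
  refine (hL.lipschitzOnWith.hausdorffMeasure_image_le zero_le_one).trans (le_of_eq ?_)
  rw [ENNReal.rpow_one, hausdorffMeasure_real, Real.volume_Icc, ENNReal.coe_one, one_mul]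

/-- The upper (`σ = 1`) or lower (`σ = -1`) arc bounding the lens. -/
def arc (r σ : ℝ) : Set Plane := {p | |p 0| ≤ hw r ∧ p 1 = σ * kf r (p 0)}

/-- The part of the axis outside the lens, up to distance `B` from the origin. -/
def axis (r B : ℝ) : Set Plane := {p | hw r ≤ |p 0| ∧ |p 0| ≤ B ∧ p 1 = 0}

lemma arc_le {r : ℝ} (hr : 0 < r) (σ : ℝ) (hσ : σ ^ 2 = 1) :
    μH[1] (arc r σ) ≤ ENNReal.ofReal (r * (2 * Real.pi / 3)) := by
  refine (measure_mono ?_).trans (arc_length_le hr σ hσ)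
  rintro p ⟨h1, h2⟩
  have h3 := _root_.abs_le.1 h1
  have e1 : hw r = r * (Real.sqrt 3 / 2) := by unfold hw; ring
  have h4 : p 0 / r ≤ Real.sqrt 3 / 2 := by
    rw [div_le_iff₀ hr]; linarith
  have h5 : -(Real.sqrt 3 / 2) ≤ p 0 / r := by
    rw [le_div_iff₀ hr]; linarith
  have hs1 : Real.sqrt 3 < 1.74 := sqrt3_hi
  have hpi := Real.pi_pos
  have hasin : Real.arcsin (Real.sqrt 3 / 2) = Real.pi / 3 := by
    rw [← Real.sin_pi_div_three, Real.arcsin_sin (by linarith) (by linarith)]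
  refine ⟨Real.arcsin (p 0 / r), ⟨?_, ?_⟩, ?_⟩
  · rw [← hasin, ← Real.arcsin_neg]
    exact Real.monotone_arcsin h5
  · rw [← hasin]
    exact Real.monotone_arcsin h4
  · have h6 : r * Real.cos (Real.arcsin (p 0 / r)) = Real.sqrt (r ^ 2 - p 0 ^ 2) := by
      rw [Real.cos_arcsin, ← Real.sqrt_sq hr.le, ← Real.sqrt_mul (sq_nonneg _), Real.sqrt_sq hr.le]
      congr 1
      field_simp
    have h7 : r * Real.sin (Real.arcsin (p 0 / r)) = p 0 := by
      rw [Real.sin_arcsin (by linarith) (by linarith)]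
      field_simp
    simp only
    rw [h6, h7]
    have : Real.sqrt (r ^ 2 - p 0 ^ 2) - r / 2 = kf r (p 0) := rfl
    rw [this, ← h2]
    exact pt_eta p

lemma axis_le {r B : ℝ} (hB : hw r ≤ B) :
    μH[1] (axis r B) ≤ ENNReal.ofReal (2 * (B - hw r)) := by
  have hsub : axis r B ⊆ ((fun x => pt (1 * x) 0) '' Set.Icc (hw r) B)
      ∪ ((fun x => pt ((-1) * x) 0) '' Set.Icc (hw r) B) := by
    rintro p ⟨h1, h2, h3⟩
    have h4 : pt (p 0) 0 = p := by rw [← h3]; exact pt_eta p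
    rcases abs_cases (p 0) with ⟨h5, -⟩ | ⟨h5, -⟩
    · left
      refine ⟨p 0, ⟨by linarith, by linarith⟩, ?_⟩
      simpa using h4
    · right
      refine ⟨-p 0, ⟨by linarith, by linarith⟩, ?_⟩
      simpa using h4
  refine (measure_mono hsub).trans ((measure_union_le _ _).trans ?_)
  refine (add_le_add (segment_length_le 1 _ _ (by norm_num))
    (segment_length_le (-1) _ _ (by norm_num))).trans (le_of_eq ?_)
  rw [← ENNReal.ofReal_add (by linarith) (by linarith)]
  congr 1; ring

section

variable {m : ℝ}

lemma kt_coord_continuous (r : ℝ) : Continuous fun p : Plane => kt r (p 0) :=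
  (kt_continuous r).comp (continuous_coord 0)

lemma lens_eq (hm : 0 < m) :
    lensPartition m 0 = {p | |p 1| < kt (lensRadius m) (p 0)} := by
  ext p
  have := lens_zero_mem hm (p 0) (p 1)
  rwa [pt_eta] at this

lemma lens_one_eq (hm : 0 < m) :
    lensPartition m 1 = {p | 0 < p 1 ∧ kt (lensRadius m) (p 0) ≤ p 1} := by
  ext p
  have := lens_one_mem hm (p 0) (p 1)
  rwa [pt_eta] at this

lemma lens_two_eq (hm : 0 < m) :
    lensPartition m 2 = {p | p 1 < 0 ∧ p 1 ≤ -kt (lensRadius m) (p 0)} := by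
  ext p
  have := lens_two_mem hm (p 0) (p 1)
  rwa [pt_eta] at this

lemma frontier_lens_zero (hm : 0 < m) :
    frontier (lensPartition m 0) ⊆ arc (lensRadius m) 1 ∪ arc (lensRadius m) (-1) := by
  have hr := lensRadius_pos hm
  have hO : IsOpen (lensPartition m 0) := by
    rw [lens_eq hm]
    exact isOpen_lt (continuous_coord 1).abs (kt_coord_continuous _)
  have hC : IsClosed {p : Plane | |p 1| ≤ kt (lensRadius m) (p 0) ∧ |p 0| ≤ hw (lensRadius m)} :=
    (isClosed_le (continuous_coord 1).abs (kt_coord_continuous _)).inter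
      (isClosed_le (continuous_coord 0).abs continuous_const)
  intro p hp
  rw [hO.frontier_eq] at hp
  obtain ⟨h1, h2⟩ := closure_minimal (t := {p : Plane | |p 1| ≤ kt (lensRadius m) (p 0)
      ∧ |p 0| ≤ hw (lensRadius m)}) (by
    rw [lens_eq hm]
    intro q hq
    refine ⟨le_of_lt hq, ?_⟩
    by_contra! h
    have hq' : |q 1| < kt (lensRadius m) (q 0) := hq
    rw [kt_of_ge hr h.le] at hq'
    exact absurd (abs_nonneg (q 1)) (not_le.2 hq')) hC hp.1
  have h3 : ¬ |p 1| < kt (lensRadius m) (p 0) := fun h => hp.2 (by rw [lens_eq hm]; exact h)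
  rw [kt_of_le hr h2] at h1 h3
  have h4 := le_antisymm h1 (not_lt.1 h3)
  rcases abs_cases (p 1) with ⟨h5, -⟩ | ⟨h5, -⟩
  · exact Or.inl ⟨h2, by linarith⟩
  · exact Or.inr ⟨h2, by linarith⟩

lemma frontier_lens_one (hm : 0 < m) (B : ℝ) :
    frontier (lensPartition m 1) ∩ Metric.ball 0 B
      ⊆ arc (lensRadius m) 1 ∪ axis (lensRadius m) B := by
  have hr := lensRadius_pos hm
  rintro p ⟨hp, hpB⟩
  have hC : IsClosed {p : Plane | kt (lensRadius m) (p 0) ≤ p 1} :=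
    isClosed_le (kt_coord_continuous _) (continuous_coord 1)
  have hO : IsOpen {p : Plane | kt (lensRadius m) (p 0) < p 1} :=
    isOpen_lt (kt_coord_continuous _) (continuous_coord 1)
  have h1 : kt (lensRadius m) (p 0) ≤ p 1 :=
    closure_minimal (by rw [lens_one_eq hm]; exact fun q hq => hq.2) hC hp.1
  have h2 : ¬ kt (lensRadius m) (p 0) < p 1 := fun h => hp.2 (mem_interior.2 ⟨_, by
    rw [lens_one_eq hm]
    exact fun q (hq : kt (lensRadius m) (q 0) < q 1) => ⟨(kt_nonneg _ _).trans_lt hq, hq.le⟩,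
    hO, h⟩)
  have h3 := le_antisymm h1 (not_lt.1 h2)
  rcases le_total |p 0| (hw (lensRadius m)) with h4 | h4
  · rw [kt_of_le hr h4] at h3
    exact Or.inl ⟨h4, by linarith⟩
  · rw [kt_of_ge hr h4] at h3
    refine Or.inr ⟨h4, ?_, h3.symm⟩
    have := PiLp.norm_apply_le p 0
    rw [Real.norm_eq_abs] at this
    exact this.trans (mem_ball_zero_iff.1 hpB).le

lemma frontier_lens_two (hm : 0 < m) (B : ℝ) :
    frontier (lensPartition m 2) ∩ Metric.ball 0 B
      ⊆ arc (lensRadius m) (-1) ∪ axis (lensRadius m) B := by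
  have hr := lensRadius_pos hm
  rintro p ⟨hp, hpB⟩
  have hC : IsClosed {p : Plane | p 1 ≤ -kt (lensRadius m) (p 0)} :=
    isClosed_le (continuous_coord 1) (kt_coord_continuous _).neg
  have hO : IsOpen {p : Plane | p 1 < -kt (lensRadius m) (p 0)} :=
    isOpen_lt (continuous_coord 1) (kt_coord_continuous _).neg
  have h1 : p 1 ≤ -kt (lensRadius m) (p 0) :=
    closure_minimal (by rw [lens_two_eq hm]; exact fun q hq => hq.2) hC hp.1
  have h2 : ¬ p 1 < -kt (lensRadius m) (p 0) := fun h => hp.2 (mem_interior.2 ⟨_, by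
    rw [lens_two_eq hm]
    exact fun q (hq : q 1 < -kt (lensRadius m) (q 0)) =>
      ⟨by linarith [kt_nonneg (lensRadius m) (q 0)], hq.le⟩, hO, h⟩)
  have h3 := le_antisymm h1 (not_lt.1 h2)
  rcases le_total |p 0| (hw (lensRadius m)) with h4 | h4
  · rw [kt_of_le hr h4] at h3
    exact Or.inl ⟨h4, by linarith⟩
  · rw [kt_of_ge hr h4] at h3
    refine Or.inr ⟨h4, ?_, by linarith⟩
    have := PiLp.norm_apply_le p 0
    rw [Real.norm_eq_abs] at this
    exact this.trans (mem_ball_zero_iff.1 hpB).le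

/-- The frontiers of the lens partition consist of the two arcs and of the axis outside the lens,
each of which belongs to two of the frontiers. Only an upper bound for the lengths is needed. -/
lemma lens_length_le (hm : 0 < m) {B : ℝ} (hB : hw (lensRadius m) ≤ B) :
    ∑ i : Fin 3, μH[1] (frontier (lensPartition m i) ∩ Metric.ball (0 : Plane) B)
      ≤ ENNReal.ofReal (2 * (2 * B + 2 * lensRadius m * (2 * Real.pi / 3 - Real.sqrt 3 / 2))) := by
  have hr := lensRadius_pos hm
  set r := lensRadius m
  have hpi := Real.pi_pos
  have a1 := arc_le hr 1 (by norm_num)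
  have a2 := arc_le hr (-1) (by norm_num)
  have a3 := axis_le (r := r) hB
  have l0 : 0 ≤ r * (2 * Real.pi / 3) := by positivity
  have l1 : 0 ≤ 2 * (B - hw r) := by linarith
  rw [Fin.sum_univ_three]
  have f0 := (measure_mono (μ := (μH[1] : Measure Plane))
    (Set.inter_subset_left.trans (frontier_lens_zero hm) :
      frontier (lensPartition m 0) ∩ Metric.ball (0 : Plane) B ⊆ _)).trans
    ((measure_union_le _ _).trans (add_le_add a1 a2))
  have f1 := (measure_mono (μ := (μH[1] : Measure Plane)) (frontier_lens_one hm B)).trans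
    ((measure_union_le _ _).trans (add_le_add a1 a3))
  have f2 := (measure_mono (μ := (μH[1] : Measure Plane)) (frontier_lens_two hm B)).trans
    ((measure_union_le _ _).trans (add_le_add a2 a3))
  refine (add_le_add (add_le_add f0 f1) f2).trans (le_of_eq ?_)
  rw [← ENNReal.ofReal_add l0 l0, ← ENNReal.ofReal_add l0 l1,
    ← ENNReal.ofReal_add (by positivity) (by positivity),
    ← ENNReal.ofReal_add (by positivity) (by positivity)]
  congr 1
  unfold hw
  ring

lemma lens_norm_lt (hm : 0 < m) {p : Plane} (hp : p ∈ lensPartition m 0) :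
    ‖p‖ < lensRadius m := by
  have hr := lensRadius_pos hm
  rw [lens_eq hm] at hp
  have hp' : |p 1| < kt (lensRadius m) (p 0) := hp
  have h1 : |p 0| < hw (lensRadius m) := by
    by_contra! h
    rw [kt_of_ge hr h] at hp'
    exact absurd (abs_nonneg (p 1)) (not_le.2 hp')
  rw [kt_of_le hr h1.le] at hp'
  have h2 : |p 1| < Real.sqrt (lensRadius m ^ 2 - p 0 ^ 2) := by
    have : kf (lensRadius m) (p 0) = Real.sqrt (lensRadius m ^ 2 - p 0 ^ 2) - lensRadius m / 2 := rfl
    linarith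
  have h3 := (Real.lt_sqrt (abs_nonneg _)).1 h2
  rw [sq_abs] at h3
  rw [EuclideanSpace.norm_eq, Fin.sum_univ_two, Real.norm_eq_abs, Real.norm_eq_abs, sq_abs, sq_abs]
  exact (Real.sqrt_lt' hr).2 (by linarith)

lemma lens_cover_null (hm : 0 < m) : volume (⋃ i, lensPartition m i)ᶜ = 0 := by
  have hsub : (⋃ i, lensPartition m i)ᶜ ⊆ {p : Plane | p 1 = 0} := by
    intro p hp
    by_contra h0
    refine hp (Set.mem_iUnion.2 ?_)
    by_cases h1 : p ∈ lensPartition m 0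
    · exact ⟨0, h1⟩
    · rw [lens_eq hm] at h1
      have h1' : kt (lensRadius m) (p 0) ≤ |p 1| := not_lt.1 (fun h => h1 h)
      rcases lt_or_gt_of_ne (show p 1 ≠ 0 from h0) with h2 | h2
      · refine ⟨2, ?_⟩
        rw [lens_two_eq hm]
        rw [abs_of_neg h2] at h1'
        exact ⟨h2, by linarith⟩
      · refine ⟨1, ?_⟩
        rw [lens_one_eq hm]
        rw [abs_of_pos h2] at h1'
        exact ⟨h2, h1'⟩
  refine measure_mono_null hsub ?_
  rw [vol_eq_lintegral (isClosed_eq (continuous_coord 1) continuous_const).measurableSet]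
  simp only [Set.mem_ofPred_eq, pt_one]
  simp

lemma lens_frontier_null (hm : 0 < m) (i : Fin 3) : volume (frontier (lensPartition m i)) = 0 := by
  have h1 : frontier (lensPartition m i)
      ⊆ ⋃ n : ℕ, frontier (lensPartition m i) ∩ Metric.ball 0 (hw (lensRadius m) + n) := by
    intro p hp
    obtain ⟨n, hn⟩ := exists_nat_gt ‖p‖
    refine Set.mem_iUnion.2 ⟨n, hp, ?_⟩
    rw [mem_ball_zero_iff]
    linarith [hw_pos (lensRadius_pos hm)]
  refine measure_mono_null h1 (measure_iUnion_null fun n => volume_zero_of_length ?_)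
  refine ne_top_of_le_ne_top ENNReal.ofReal_ne_top
    (le_trans ?_ (lens_length_le hm (B := hw (lensRadius m) + n) (by simp)))
  exact Finset.single_le_sum (f := fun i => μH[1] (frontier (lensPartition m i)
    ∩ Metric.ball (0 : Plane) (hw (lensRadius m) + n))) (fun _ _ => zero_le) (Finset.mem_univ i)

end

/-! ### Reduction of the theorem to configurations -/

section

variable {m R : ℝ} {E : Fin 3 → Set Plane}

lemma lensRadius_sq (hm : 0 < m) :
    lensRadius m ^ 2 * (2 * Real.pi / 3 - Real.sqrt 3 / 2) = m := by
  have h1 := sqrt3_hi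
  have h2 := Real.pi_gt_three
  have hA : 0 < 2 * Real.pi / 3 - Real.sqrt 3 / 2 := by linarith
  unfold lensRadius
  rw [mul_pow, Real.sq_sqrt hm.le, ← Real.rpow_natCast, ← Real.rpow_mul hA.le]
  norm_num
  rw [Real.rpow_neg_one, mul_assoc, inv_mul_cancel₀ hA.ne', mul_one]

/-- The lens partition minimises length among configurations of the same area. -/
lemma Config.deficit_nonneg {U : Fin 3 → Set Plane} {r : ℝ} {τ : ℝ → ℝ} (C : Config R U)
    (T : Transport r R (hh R U) τ) :
    2 * (R + 1) + 4 / r * (∫ x, hh R U x) ≤ (tot R U).real Set.univ / 2 := by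
  have hG : ∀ᵐ x, x ∈ {x | HasDerivAt (fun x => ∫ t in 0..x, hh R U t) (hh R U x) x} := by
    filter_upwards [T.ae_hasDerivAt_mass] with x hx using hx 0
  have hG' : ∀ᵐ x, x ∈ {x | HasDerivAt (fun x => ∫ t in 0..x, bb R U t) (bb R U x) x} := by
    filter_upwards [LocallyIntegrable.ae_hasDerivAt_integral C.bb_integrable.locallyIntegrable]
      with x hx using hx 0
  obtain ⟨p₀, hp₀, -⟩ := exists_mem_Ioo hG zero_lt_one
  obtain ⟨p₁, hp₁, -⟩ := exists_mem_Ioo hG' zero_lt_one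
  have hz : |(0 : ℝ)| ≤ 1 / 40 := by norm_num
  have hI : ∀ x : ℝ, 2 / r * (2 * x) = 4 / r * x := fun x => by ring
  have hbad0 : 0 ≤ volume.real (bad U) := measureReal_nonneg
  have h1 := C.master T (d := 0) le_rfl le_rfl hz hz hp₀ hp₀ hp₁ hp₁
  simp only [mul_zero, zero_mul, add_zero, ne_eq, OfNat.ofNat_ne_zero, not_false_eq_true,
    zero_pow, sub_zero, hI] at h1
  linarith

/-- A 3-partition of the plane whose first set has area `m` and which agrees with the lens
partition outside the ball of radius `R`, all up to null sets. -/
structure Competitor (m R : ℝ) (E : Fin 3 → Set Plane) : Prop where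
  hm : 0 < m
  hR : 0 < R
  disj : ∀ i j, i ≠ j → volume (E i ∩ E j) = 0
  cover : volume ((⋃ i, E i)ᶜ) = 0
  mass : volume (E 0) = ENNReal.ofReal m
  out : ∀ i, volume ((E i ∆ lensPartition m i) \ Metric.ball (0 : Plane) R) = 0

/-- A radius beyond which both the competitor and the lens partition consist of half-planes. -/
def bigR (m R : ℝ) : ℝ := max R (lensRadius m)

lemma abs_coord_le (p : Plane) (i : Fin 2) : |p i| ≤ ‖p‖ := by
  rw [← Real.norm_eq_abs]; exact PiLp.norm_apply_le p i

lemma isOpen_outer (R : ℝ) : IsOpen {p : Plane | R < ‖p‖} := isOpen_lt continuous_const continuous_norm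

namespace Competitor

lemma out' (K : Competitor m R E) (i : Fin 3) :
    volume ((E i ∆ lensPartition m i) ∩ {p : Plane | R < ‖p‖}) = 0 := by
  refine measure_mono_null ?_ (K.out i)
  rintro p ⟨h1, h2⟩
  refine ⟨h1, fun h3 => ?_⟩
  rw [mem_ball_zero_iff] at h3
  exact lt_asymm h2 h3

lemma mem_one (K : Competitor m R E) {p : Plane} (hp : bigR m R < ‖p‖) (h1 : 0 < p 1) :
    p ∈ essInt (E 1) := by
  refine mem_essInt_of_open (V := {p : Plane | bigR m R < ‖p‖} ∩ {p | 0 < p 1})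
    ((isOpen_outer _).inter (isOpen_lt continuous_const (continuous_coord 1)))
    (measure_mono_null ?_ (K.out' 1)) ⟨hp, h1⟩
  rintro q ⟨⟨h2, h3⟩, h4⟩
  have h2' : bigR m R < ‖q‖ := h2
  refine ⟨Or.inr ⟨⟨h3, fun h => ?_⟩, h4⟩, (le_max_left _ _).trans_lt h2'⟩
  exact lt_asymm (lens_norm_lt K.hm h) ((le_max_right _ _).trans_lt h2')

lemma mem_two (K : Competitor m R E) {p : Plane} (hp : bigR m R < ‖p‖) (h1 : p 1 < 0) :
    p ∈ essInt (E 2) := by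
  refine mem_essInt_of_open (V := {p : Plane | bigR m R < ‖p‖} ∩ {p | p 1 < 0})
    ((isOpen_outer _).inter (isOpen_lt (continuous_coord 1) continuous_const))
    (measure_mono_null ?_ (K.out' 2)) ⟨hp, h1⟩
  rintro q ⟨⟨h2, h3⟩, h4⟩
  have h2' : bigR m R < ‖q‖ := h2
  refine ⟨Or.inr ⟨⟨h3, fun h => ?_⟩, h4⟩, (le_max_left _ _).trans_lt h2'⟩
  exact lt_asymm (lens_norm_lt K.hm h) ((le_max_right _ _).trans_lt h2')

lemma disjoint (K : Competitor m R E) (i j : Fin 3) (hij : i ≠ j) :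
    Disjoint (essInt (E i)) (essInt (E j)) := essInt_disjoint (K.disj i j hij)

lemma not_frontier (K : Competitor m R E) {i j : Fin 3} {p : Plane} (hp : p ∈ essInt (E j)) :
    p ∉ frontier (essInt (E i)) := by
  intro h
  rcases eq_or_ne i j with rfl | hij
  · rw [(isOpen_essInt _).frontier_eq] at h
    exact h.2 hp
  · exact Set.disjoint_left.1 ((K.disjoint i j hij).closure_left (isOpen_essInt _))
      (frontier_subset_closure h) hp

/-- Outside the ball of radius `bigR m R` the frontiers lie on the axis, so the strip and the ball
cut out the same part of them. -/
lemma strip_subset (K : Competitor m R E) (i : Fin 3) :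
    frontier (essInt (E i)) ∩ {p : Plane | |p 0| < bigR m R + 1}
      ⊆ frontier (essInt (E i)) ∩ Metric.ball 0 (bigR m R + 1) := by
  rintro p ⟨hp, h1⟩
  have h1' : |p 0| < bigR m R + 1 := h1
  refine ⟨hp, ?_⟩
  rw [mem_ball_zero_iff]
  rcases le_or_gt ‖p‖ (bigR m R) with h2 | h2
  · linarith
  have h3 : p 1 = 0 := by
    rcases lt_trichotomy (p 1) 0 with h | h | h
    · exact absurd hp (K.not_frontier (K.mem_two h2 h))
    · exact h
    · exact absurd hp (K.not_frontier (K.mem_one h2 h))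
  rw [EuclideanSpace.norm_eq, Fin.sum_univ_two, h3]
  simpa [Real.sqrt_sq_eq_abs] using h1'

/-- Cleaning up the competitor does not increase its length in `B_{R+1}`, and outside that ball the
result has the frontier of the lens partition. -/
lemma length_le (K : Competitor m R E) (i : Fin 3) :
    μH[1] (frontier (essInt (E i)) ∩ Metric.ball 0 (bigR m R + 1))
      ≤ μH[1] (frontier (E i) ∩ Metric.ball 0 (R + 1))
        + μH[1] ((frontier (lensPartition m i) ∩ Metric.ball 0 (bigR m R + 1))
            \ Metric.ball 0 (R + 1)) := by
  refine (measure_mono ?_).trans (measure_union_le _ _)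
  rintro p ⟨h1, h2⟩
  by_cases h3 : p ∈ Metric.ball (0 : Plane) (R + 1)
  · exact Or.inl ⟨frontier_essInt_subset _ h1, h3⟩
  · have h4 : R < ‖p‖ := by
      rw [mem_ball_zero_iff, not_lt] at h3
      linarith
    exact Or.inr ⟨⟨frontier_essInt_inter (isOpen_outer R) (K.out' i) ⟨h1, h4⟩, h2⟩, h3⟩

lemma hw_le_bigR (K : Competitor m R E) : hw (lensRadius m) ≤ bigR m R + 1 := by
  have h1 := lensRadius_pos K.hm
  have h2 := sqrt3_hi
  have h3 : lensRadius m ≤ bigR m R := le_max_right _ _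
  unfold hw
  nlinarith

lemma lens_ne_top (K : Competitor m R E) (i : Fin 3) :
    μH[1] (frontier (lensPartition m i) ∩ Metric.ball 0 (bigR m R + 1)) ≠ ⊤ := by
  refine ne_top_of_le_ne_top ENNReal.ofReal_ne_top
    (le_trans ?_ (lens_length_le K.hm K.hw_le_bigR))
  exact Finset.single_le_sum (f := fun i => μH[1] (frontier (lensPartition m i)
    ∩ Metric.ball (0 : Plane) (bigR m R + 1))) (fun _ _ => zero_le) (Finset.mem_univ i)

/-- The cleaned-up competitor is a configuration. -/
lemma config (K : Competitor m R E)
    (hfin : ∀ i, μH[1] (frontier (E i) ∩ Metric.ball 0 (R + 1)) ≠ ⊤) :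
    Config (bigR m R) (fun i => essInt (E i)) where
  pos := K.hR.trans_le (le_max_left _ _)
  op i := isOpen_essInt _
  disj := K.disjoint
  null := by
    refine measure_mono_null (t := (⋃ i, frontier (E i) ∩ Metric.ball 0 (R + 1))
      ∪ ⋃ i, frontier (lensPartition m i)) ?_ (measure_union_null
        (measure_iUnion_null fun i => volume_zero_of_length (hfin i))
        (measure_iUnion_null fun i => lens_frontier_null K.hm i))
    intro p hp
    by_cases h3 : p ∈ Metric.ball (0 : Plane) (R + 1)
    · left
      obtain ⟨i, hi⟩ := Set.mem_iUnion.1 (essInt_cover K.cover hp)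
      exact Set.mem_iUnion.2 ⟨i, hi, h3⟩
    · right
      have h4 : p ∈ {p : Plane | R < ‖p‖} := by
        rw [mem_ball_zero_iff, not_lt] at h3
        exact lt_of_lt_of_le (by linarith) h3
      refine essInt_cover (lens_cover_null K.hm) fun h5 => hp ?_
      obtain ⟨i, hi⟩ := Set.mem_iUnion.1 h5
      have h6 : p ∈ essInt (lensPartition m i) ∩ {p : Plane | R < ‖p‖} := ⟨hi, h4⟩
      rw [← essInt_congr (isOpen_outer R) (K.out' i)] at h6
      exact Set.mem_iUnion.2 ⟨i, h6.1⟩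
  up p hp h1 := K.mem_one (hp.elim (fun h => h.trans_le (abs_coord_le p 0))
    fun h => h.trans_le (abs_coord_le p 1)) h1
  dn p hp h1 := K.mem_two (hp.elim (fun h => h.trans_le (abs_coord_le p 0))
    fun h => h.trans_le (abs_coord_le p 1)) h1
  fin i := ne_top_of_le_ne_top
    (ENNReal.add_ne_top.2 ⟨hfin i, ne_top_of_le_ne_top (K.lens_ne_top i)
      (measure_mono Set.sdiff_subset)⟩)
    ((measure_mono (K.strip_subset i)).trans (K.length_le i))

lemma symmDiff_null (K : Competitor m R E)
    (hnull : volume (⋃ i, essInt (E i))ᶜ = 0) (i : Fin 3) :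
    volume (E i ∆ essInt (E i)) = 0 := by
  have h1 : ∀ j, j ≠ i → volume (E i ∩ essInt (E j)) = 0 := fun j hj => by
    refine measure_mono_null (t := (E i ∩ E j) ∪ (essInt (E j) \ E j)) ?_
      (measure_union_null (K.disj i j hj.symm) (essInt_diff_null _))
    rintro p ⟨h1, h2⟩
    by_cases h3 : p ∈ E j
    · exact Or.inl ⟨h1, h3⟩
    · exact Or.inr ⟨h2, h3⟩
  have h2 : volume (⋃ j, ⋃ (_ : j ≠ i), E i ∩ essInt (E j)) = 0 :=
    measure_iUnion_null fun j => measure_iUnion_null fun hj => h1 j hj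
  refine measure_mono_null ?_ (measure_union_null (measure_union_null hnull h2)
    (essInt_diff_null (E i)))
  rintro p (⟨h3, h4⟩ | h3)
  · left
    by_cases h5 : p ∈ ⋃ i, essInt (E i)
    · obtain ⟨j, hj⟩ := Set.mem_iUnion.1 h5
      refine Or.inr (Set.mem_iUnion.2 ⟨j, Set.mem_iUnion.2 ⟨?_, h3, hj⟩⟩)
      rintro rfl
      exact h4 hj
    · exact Or.inl h5
  · exact Or.inr h3

lemma hh_integral (K : Competitor m R E) (C : Config (bigR m R) (fun i => essInt (E i))) :
    ∫ x, hh (bigR m R) (fun i => essInt (E i)) x = m / 2 := by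
  have h1 : volume (essInt (E 0)) = ENNReal.ofReal m := by
    rw [← K.mass]
    exact (measure_congr (measure_symmDiff_eq_zero_iff.1 (K.symmDiff_null C.null 0))).symm
  have h2 := C.lintegral_esec_zero
  rw [h1] at h2
  have h3 : ∫ x, esec (bigR m R) (fun i => essInt (E i)) 0 x = m := by
    rw [integral_eq_lintegral_of_nonneg_ae (Filter.Eventually.of_forall fun x => Config.esec_nonneg 0 x)
      (C.measurable_esec 0).aestronglyMeasurable, h2, ENNReal.toReal_ofReal K.hm.le]
  unfold hh
  rw [integral_div, h3]

end Competitor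

lemma asymmetry_le_translate (m : ℝ) (E : Fin 3 → Set Plane) (c : Plane) :
    lensAsymmetry m E
      ≤ (1 / 2 : ENNReal) * ∑ i : Fin 3, volume ({p | p + c ∈ E i} ∆ lensPartition m i) := by
  have h1 : ∀ S : Set Plane, IsometryEquiv.addRight (-c) '' S = {p | p + c ∈ S} := by
    intro S
    ext p
    simp only [Set.mem_image, IsometryEquiv.addRight_apply, Set.mem_ofPred_eq]
    constructor
    · rintro ⟨q, hq, rfl⟩
      simpa using hq
    · intro h
      exact ⟨p + c, h, by simp⟩
  refine (iInf_le _ (IsometryEquiv.addRight (-c))).trans (le_of_eq ?_)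
  simp only [h1]

/-- Closeness to a translate of the lens partition bounds the asymmetry; null modifications of the
three sets are allowed. -/
lemma asymmetry_le_of_close {U : Fin 3 → Set Plane} (hEU : ∀ i, volume (E i ∆ U i) = 0) {c : Plane}
    {e : ℝ} (h : ∀ i, volume ({p | p + c ∈ U i} ∆ lensPartition m i) ≤ ENNReal.ofReal e) :
    lensAsymmetry m E ≤ ENNReal.ofReal (3 / 2 * |e|) := by
  refine (asymmetry_le_translate m E c).trans ?_
  have h1 : ∀ i, volume ({p | p + c ∈ E i} ∆ lensPartition m i) ≤ ENNReal.ofReal |e| := by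
    intro i
    refine (measure_symmDiff_le _ {p | p + c ∈ U i} _).trans ?_
    have h2 : volume ({p | p + c ∈ E i} ∆ {p | p + c ∈ U i}) = 0 := by
      have : {p | p + c ∈ E i} ∆ {p | p + c ∈ U i} = (fun p => p + c) ⁻¹' (E i ∆ U i) := rfl
      rw [this, measure_preimage_add_right, hEU i]
    rw [h2, zero_add]
    exact (h i).trans (ENNReal.ofReal_le_ofReal (le_abs_self e))
  calc (1 / 2 : ENNReal) * ∑ i : Fin 3, volume ({p | p + c ∈ E i} ∆ lensPartition m i)
      ≤ (1 / 2 : ENNReal) * ∑ _i : Fin 3, ENNReal.ofReal |e| := by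
        gcongr with i
        exact h1 i
    _ = ENNReal.ofReal (3 / 2 * |e|) := by
        rw [Finset.sum_const, Finset.card_univ, Fintype.card_fin, nsmul_eq_mul,
          show (1 / 2 : ENNReal) = ENNReal.ofReal (1 / 2) by
            rw [ENNReal.ofReal_div_of_pos two_pos]; simp,
          show ((3 : ℕ) : ENNReal) = ENNReal.ofReal 3 by simp,
          ← ENNReal.ofReal_mul (by norm_num), ← ENNReal.ofReal_mul (by norm_num)]
        congr 1; ring

/-- The trivial bound for the asymmetry. -/
lemma Competitor.asymmetry_le (K : Competitor m R E) :
    lensAsymmetry m E ≤ ENNReal.ofReal (3 / 2 * |volume.real (Metric.ball (0 : Plane) R)|) := by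
  refine asymmetry_le_of_close (U := E) (c := 0) (fun i => by simp) fun i => ?_
  rw [ofReal_measureReal (measure_ball_lt_top).ne]
  simp only [add_zero]
  change volume (E i ∆ lensPartition m i) ≤ _
  rw [← measure_inter_add_sdiff (E i ∆ lensPartition m i)
    (measurableSet_ball (x := (0 : Plane)) (ε := R)), K.out i, add_zero]
  exact measure_mono Set.inter_subset_right

/-- The quadratic estimate that follows from a linear one for small deficits and an a priori
bound. -/
lemma quadratic_of_linear {α A B D : ℝ} (hα : 0 ≤ α) (hA : 0 ≤ A) (hD : 0 ≤ D) (h0 : α ≤ B)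
    (h : ∀ d, 0 < d → d ≤ 1 / 40 → D ≤ d ^ 2 → α ≤ A * d) :
    1 / (A ^ 2 + 1600 * B ^ 2 + 1) * α ^ 2 ≤ D := by
  have hp : 0 < A ^ 2 + 1600 * B ^ 2 + 1 := by positivity
  rw [div_mul_eq_mul_div, one_mul, div_le_iff₀ hp]
  have hαB : α ^ 2 ≤ B ^ 2 := pow_le_pow_left₀ hα h0 2
  have hA2 := sq_nonneg A
  have hB2 := sq_nonneg B
  rcases le_or_gt (1 / 1600) D with h1 | h1
  · nlinarith [mul_nonneg hD hA2, mul_nonneg (sub_nonneg.2 h1) hB2]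
  rcases hD.eq_or_lt with h2 | h2
  · have h3 : α ≤ 0 := by
      by_contra! h3
      have h4 := h (min (1 / 40) (α / (2 * (A + 1)))) (by positivity) (min_le_left _ _)
        (by rw [← h2]; positivity)
      have h5 : A * min (1 / 40) (α / (2 * (A + 1))) ≤ A * (α / (2 * (A + 1))) :=
        mul_le_mul_of_nonneg_left (min_le_right _ _) hA
      have h6 : A * (α / (2 * (A + 1))) < α := by
        rw [← mul_div_assoc, div_lt_iff₀ (by positivity)]
        nlinarith
      linarith
    rw [← h2, le_antisymm h3 hα]
    simp
  · have h3 : Real.sqrt D ≤ 1 / 40 := Real.sqrt_le_iff.2 ⟨by norm_num, by linarith⟩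
    have h4 := h _ (Real.sqrt_pos.2 h2) h3 (by rw [Real.sq_sqrt hD])
    have h5 := pow_le_pow_left₀ hα h4 2
    rw [mul_pow, Real.sq_sqrt hD] at h5
    nlinarith [mul_nonneg hD hB2]

/-- The stability constant. -/
def kap (m R : ℝ) : ℝ :=
  1 / ((3 / 2 * |cA (lensRadius m) (bigR m R)|) ^ 2
    + 1600 * (3 / 2 * |volume.real (Metric.ball (0 : Plane) R)|) ^ 2 + 1)

lemma kap_pos (m R : ℝ) : 0 < kap m R := by unfold kap; positivity

namespace Competitor

/-- The stability inequality for the cleaned-up competitor. -/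
lemma stability_tot (K : Competitor m R E) (C : Config (bigR m R) (fun i => essInt (E i))) :
    ENNReal.ofReal (2 * (2 * (bigR m R + 1)
        + 2 * lensRadius m * (2 * Real.pi / 3 - Real.sqrt 3 / 2)))
      + 2 * (ENNReal.ofReal (kap m R) * lensAsymmetry m E ^ 2)
      ≤ tot (bigR m R) (fun i => essInt (E i)) Set.univ := by
  have hr := lensRadius_pos K.hm
  have hrm := lensRadius_sq K.hm
  set U := fun i => essInt (E i) with hU
  have hfin := C.finite_tot
  have hI : ∫ x, hh (bigR m R) U x = m / 2 := K.hh_integral C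
  obtain ⟨τ, T⟩ := exists_transport hr C.pos C.hh_measurable (Config.hh_nonneg _ U) C.hh_le
    (fun _ h => C.hh_out h) (by rw [hI, integral_kf hr, hrm])
  have hα : lensAsymmetry m E ≠ ⊤ := ne_top_of_le_ne_top ENNReal.ofReal_ne_top K.asymmetry_le
  have hD := C.deficit_nonneg T
  have hq := quadratic_of_linear (α := (lensAsymmetry m E).toReal)
    (A := 3 / 2 * |cA (lensRadius m) (bigR m R)|)
    (B := 3 / 2 * |volume.real (Metric.ball (0 : Plane) R)|) ENNReal.toReal_nonneg (by positivity)
    (sub_nonneg.2 hD) (ENNReal.toReal_le_of_le_ofReal (by positivity) K.asymmetry_le) (by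
      intro d hd hd' hdD
      obtain ⟨c, hc⟩ := C.asym_le K.hm T hd hd' (by linarith)
      have h1 := asymmetry_le_of_close (fun i => K.symmDiff_null C.null i) hc
      have h2 := ENNReal.toReal_le_of_le_ofReal (by positivity) h1
      rwa [abs_mul, abs_of_pos hd, ← mul_assoc] at h2)
  have hX : 4 / lensRadius m * (m / 2)
      = 2 * lensRadius m * (2 * Real.pi / 3 - Real.sqrt 3 / 2) := by
    rw [div_mul_eq_mul_div, div_eq_iff hr.ne']
    linarith
  rw [hI, hX] at hq
  change kap m R * _ ≤ _ at hq
  have hk := kap_pos m R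
  have hpi := Real.pi_gt_three
  have hs := sqrt3_hi
  have hP : 0 ≤ 2 * (2 * (bigR m R + 1)
      + 2 * lensRadius m * (2 * Real.pi / 3 - Real.sqrt 3 / 2)) := by
    have h1 := C.pos
    have h2 : 0 ≤ 2 * Real.pi / 3 - Real.sqrt 3 / 2 := by linarith
    positivity
  rw [← ENNReal.ofReal_toReal hα, ← ENNReal.ofReal_pow ENNReal.toReal_nonneg,
    ← ENNReal.ofReal_mul hk.le, show (2 : ENNReal) = ENNReal.ofReal 2 by simp,
    ← ENNReal.ofReal_mul (by norm_num), ← ENNReal.ofReal_add hP (by positivity),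
    ← ofReal_measureReal (measure_ne_top _ _)]
  exact ENNReal.ofReal_le_ofReal (by linarith)

/-- The stability inequality when the competitor has finite length in `B_{R+1}`; the lengths in the
annulus between `B_{R+1}` and the larger ball cancel. -/
lemma stability (K : Competitor m R E)
    (hfin : ∀ i, μH[1] (frontier (E i) ∩ Metric.ball (0 : Plane) (R + 1)) ≠ ⊤) :
    (∑ i : Fin 3, μH[1] (frontier (lensPartition m i) ∩ Metric.ball (0 : Plane) (R + 1)))
        + 2 * (ENNReal.ofReal (kap m R) * lensAsymmetry m E ^ 2)
      ≤ ∑ i : Fin 3, μH[1] (frontier (E i) ∩ Metric.ball (0 : Plane) (R + 1)) := by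
  have C := K.config hfin
  have h1 := K.stability_tot C
  set A := ∑ i : Fin 3, μH[1] ((frontier (lensPartition m i) ∩ Metric.ball 0 (bigR m R + 1))
    \ Metric.ball 0 (R + 1)) with hA
  have hAtop : A ≠ ⊤ := ENNReal.sum_ne_top.2 fun i _ =>
    ne_top_of_le_ne_top (K.lens_ne_top i) (measure_mono Set.sdiff_subset)
  have hT : tot (bigR m R) (fun i => essInt (E i)) Set.univ
      ≤ (∑ i : Fin 3, μH[1] (frontier (E i) ∩ Metric.ball (0 : Plane) (R + 1))) + A := by
    rw [hA, ← Finset.sum_add_distrib]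
    have h2 : tot (bigR m R) (fun i => essInt (E i)) Set.univ
        = ∑ i : Fin 3, rho (bigR m R) (fun i => essInt (E i)) i Set.univ := by
      rw [Fin.sum_univ_three]; rfl
    rw [h2]
    refine Finset.sum_le_sum fun i _ => ?_
    rw [rho_univ]
    exact (measure_mono (K.strip_subset i)).trans (K.length_le i)
  have hL : (∑ i : Fin 3, μH[1] (frontier (lensPartition m i) ∩ Metric.ball (0 : Plane) (R + 1))) + A
      ≤ ENNReal.ofReal (2 * (2 * (bigR m R + 1)
        + 2 * lensRadius m * (2 * Real.pi / 3 - Real.sqrt 3 / 2))) := by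
    refine le_trans ?_ (lens_length_le K.hm K.hw_le_bigR)
    rw [hA, ← Finset.sum_add_distrib]
    refine Finset.sum_le_sum fun i _ => ?_
    rw [← measure_inter_add_sdiff (frontier (lensPartition m i) ∩ Metric.ball 0 (bigR m R + 1))
      (measurableSet_ball (x := (0 : Plane)) (ε := R + 1))]
    refine add_le_add_left (measure_mono ?_) _
    rintro p ⟨h2, h3⟩
    refine ⟨⟨h2, Metric.ball_subset_ball ?_ h3⟩, h3⟩
    have : R ≤ bigR m R := le_max_left _ _
    linarith
  rw [← ENNReal.add_le_add_iff_right hAtop, add_right_comm]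
  exact (add_le_add_left hL _).trans (h1.trans hT)

end Competitor

end

/-- Stability of the standard lens (Theorem 2.7): for `m, R > 0` there is
`κ > 0` (depending only on `m` and `R`) such that every 3-partition `E` of `ℝ²`
with `vol(E(1)) = m` and `E(i) Δ 𝓛_m(i)` contained in `B_R` up to a null set
satisfies
`(1/2)·Σᵢ ℋ¹(∂E(i) ∩ B_{R+1}) ≥ (1/2)·Σᵢ ℋ¹(∂𝓛_m(i) ∩ B_{R+1}) + κ·α(E)²`. -/
theorem lens_stability (m R : ℝ) (hm : 0 < m) (hR : 0 < R) :
    ∃ κ : ℝ, 0 < κ ∧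
      ∀ E : Fin 3 → Set Plane,
        (∀ i, MeasurableSet (E i)) →
        (∀ i j, i ≠ j → volume (E i ∩ E j) = 0) →
        volume ((⋃ i, E i)ᶜ) = 0 →
        volume (E 0) = ENNReal.ofReal m →
        (∀ i, volume ((E i ∆ lensPartition m i) \ Metric.ball (0 : Plane) R) = 0) →
        (1 / 2 : ENNReal) *
            ∑ i : Fin 3, μH[1] (frontier (E i) ∩ Metric.ball (0 : Plane) (R + 1))
          ≥ (1 / 2 : ENNReal) *
              ∑ i : Fin 3,
                μH[1] (frontier (lensPartition m i) ∩ Metric.ball (0 : Plane) (R + 1))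
            + ENNReal.ofReal κ * lensAsymmetry m E ^ 2 := by
  refine ⟨kap m R, kap_pos m R, fun E _ hdisj hcover hmass hout => ?_⟩
  have K : Competitor m R E := ⟨hm, hR, hdisj, hcover, hmass, hout⟩
  by_cases hfin : ∀ i, μH[1] (frontier (E i) ∩ Metric.ball (0 : Plane) (R + 1)) ≠ ⊤
  · have h1 := mul_le_mul_right (K.stability hfin) (1 / 2 : ENNReal)
    rw [mul_add, ← mul_assoc (1 / 2 : ENNReal) 2, ENNReal.div_mul_cancel two_ne_zero
      ENNReal.ofNat_ne_top, one_mul] at h1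
    exact h1
  -- a competitor of infinite length satisfies the inequality trivially
  · push Not at hfin
    obtain ⟨i, hi⟩ := hfin
    have h1 : ∑ i : Fin 3, μH[1] (frontier (E i) ∩ Metric.ball (0 : Plane) (R + 1)) = ⊤ :=
      ENNReal.sum_eq_top.2 ⟨i, Finset.mem_univ i, hi⟩
    rw [h1, ENNReal.mul_top (by simp)]
    exact le_top

end
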